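/- arXiv:1503.01605 — 3 statements merged into one kernel-verified Lean document; each statement's English description precedes it below -/
import Mathlib

section
/- If φ : ℝ → ℝ is an L-Lipschitz nondecreasing continuous surjection satisfying φ(x + a) = φ(x) + b for fixed reals a > 0, b > 0 and all x, then there exists a sequence of L-Lipschitz smooth functions φₙ : ℝ → ℝ, each with strictly positive derivative (hence diffeomorphisms of ℝ), such that φₙ(x + a) = φₙ(x) + b for all x and φₙ converges to φ uniformly on ℝ. -/
open Filter

open MeasureTheory ContinuousLinearMap
open scoped Convolution

/-- Averaging continuous functions against a normed bump function preserves inequalities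
up to an additive constant. -/
theorem ContDiffBump.integral_normed_mul_le_add (ρ : ContDiffBump (0 : ℝ)) {f g : ℝ → ℝ}
    (hf : Continuous f) (hg : Continuous g) {c : ℝ} (h : ∀ t, f t ≤ g t + c) :
    ∫ t, ρ.normed volume t * f t ≤ (∫ t, ρ.normed volume t * g t) + c := by
  have integrable_mul : ∀ {u : ℝ → ℝ}, Continuous u →
      Integrable fun t => ρ.normed volume t * u t := fun hu =>
    (ρ.continuous_normed.mul hu).integrable_of_hasCompactSupport
      ρ.hasCompactSupport_normed.mul_right
  calc ∫ t, ρ.normed volume t * f t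
      ≤ ∫ t, (ρ.normed volume t * g t + ρ.normed volume t * c) := by
        refine integral_mono (integrable_mul hf)
          ((integrable_mul hg).add (integrable_mul continuous_const)) fun t => ?_
        have := mul_le_mul_of_nonneg_left (h t) (ρ.nonneg_normed (μ := volume) t)
        simpa only [mul_add] using this
    _ = (∫ t, ρ.normed volume t * g t) + c := by
        rw [integral_add (integrable_mul hg) (integrable_mul continuous_const),
          integral_mul_const, ρ.integral_normed, one_mul]

/-- A monotone Lipschitz quasi-periodic function is uniformly close to a smooth one with the
same Lipschitz constant and quasi-period. -/
theorem Monotone.exists_contDiff_lipschitzWith_dist_le {L : NNReal} {a b : ℝ} {φ : ℝ → ℝ}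
    (hmono : Monotone φ) (hlip : LipschitzWith L φ) (hqp : ∀ x, φ (x + a) = φ x + b)
    {ε : ℝ} (hε : 0 < ε) :
    ∃ ψ : ℝ → ℝ, ContDiff ℝ (⊤ : ℕ∞) ψ ∧ LipschitzWith L ψ ∧ Monotone ψ ∧
      (∀ x, ψ (x + a) = ψ x + b) ∧ ∀ x, dist (ψ x) (φ x) ≤ L * ε := by
  have hcont := hlip.continuous
  let ρ : ContDiffBump (0 : ℝ) := ⟨ε / 2, ε, half_pos hε, half_lt_self hε⟩
  let ψ : ℝ → ℝ := ρ.normed volume ⋆[lsmul ℝ ℝ, volume] φ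
  have hle : ∀ {x y c : ℝ}, (∀ t, φ (x - t) ≤ φ (y - t) + c) → ψ x ≤ ψ y + c := fun h =>
    ρ.integral_normed_mul_le_add (by fun_prop) (by fun_prop) h
  have hshift : ∀ x t : ℝ, φ (x + a - t) = φ (x - t) + b := fun x t => by
    rw [← hqp, sub_add_eq_add_sub]
  refine ⟨ψ, ρ.hasCompactSupport_normed.contDiff_convolution_left _ ρ.contDiff_normed
    hcont.locallyIntegrable, LipschitzWith.of_le_add_mul L fun x y => hle fun t => ?_,
    fun x y hxy => ?_, fun x => le_antisymm (hle fun t => (hshift x t).le) ?_, fun x => ?_⟩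
  · simpa using hlip.le_add_mul (x - t) (y - t)
  · have := hle (x := x) (y := y) (c := 0) fun t => by
      simpa using hmono (sub_le_sub_right hxy t)
    simpa using this
  · have := hle (x := x) (y := x + a) (c := -b) fun t => by rw [hshift]; simp
    linarith
  · refine ρ.dist_normed_convolution_le hcont.aestronglyMeasurable fun y hy => ?_
    exact (hlip.dist_le_mul y x).trans
      (mul_le_mul_of_nonneg_left (Metric.mem_ball.1 hy).le L.coe_nonneg)

/-- Approximation of a Lipschitz quasi-periodic weak homeomorphism of `ℝ` by Lipschitz
smooth diffeomorphisms with the same quasi-period. -/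
theorem approx_weak_homeo (L : NNReal) (a b : ℝ) (ha : 0 < a) (hb : 0 < b)
    (φ : ℝ → ℝ) (hmono : Monotone φ) (hsurj : Function.Surjective φ)
    (hcont : Continuous φ) (hlip : LipschitzWith L φ)
    (hqp : ∀ x, φ (x + a) = φ x + b) :
    ∃ φn : ℕ → ℝ → ℝ,
      (∀ n, ContDiff ℝ (⊤ : ℕ∞) (φn n)) ∧
      (∀ n, LipschitzWith L (φn n)) ∧
      (∀ n x, 0 < deriv (φn n) x) ∧
      (∀ n x, φn n (x + a) = φn n x + b) ∧
      TendstoUniformly φn φ atTop := by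
  let s : ℕ → ℝ := fun n => 1 / ((n : ℝ) + 1)
  have hs0 : ∀ n, 0 < s n := fun n => Nat.one_div_pos_of_nat
  have hs1 : ∀ n, s n ≤ 1 := fun n => by
    simpa [s] using Nat.one_div_le_one_div (α := ℝ) (Nat.zero_le n)
  have hba : 0 < b / a := div_pos hb ha
  have hslope : b / a ≤ L := by
    rw [div_le_iff₀ ha]
    have := hlip.le_add_mul (0 + a) 0
    rw [hqp] at this
    simpa [Real.dist_eq, abs_of_pos ha] using this
  obtain ⟨C, hC⟩ : ∃ C, ∀ x, |b / a * x - φ x| ≤ C := by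
    have hper : Function.Periodic (fun x => b / a * x - φ x) a := fun x => by
      simp only [hqp]
      field_simp
      ring
    obtain ⟨C, hC⟩ := (hper.isBounded_of_continuous ha.ne' (by fun_prop)).exists_norm_le
    exact ⟨C, fun x => hC _ ⟨x, rfl⟩⟩
  choose ψ hsmooth hψlip hψmono hψqp hclose using fun n =>
    hmono.exists_contDiff_lipschitzWith_dist_le hlip hqp (hs0 n)
  refine ⟨fun n x => (1 - s n) * ψ n x + s n * (b / a * x), fun n => ?_, fun n => ?_,
    fun n x => ?_, fun n x => ?_, ?_⟩
  · have := hsmooth n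
    fun_prop
  · refine LipschitzWith.of_le_add_mul L fun x y => ?_
    have hψ := mul_le_mul_of_nonneg_left ((hψlip n).le_add_mul x y) (sub_nonneg.2 (hs1 n))
    have hlin : b / a * x ≤ b / a * y + L * dist x y := by
      have h₁ := mul_le_mul_of_nonneg_left (le_abs_self (x - y)) hba.le
      have h₂ := mul_le_mul_of_nonneg_right hslope (abs_nonneg (x - y))
      rw [Real.dist_eq]
      linarith
    linarith [mul_le_mul_of_nonneg_left hlin (hs0 n).le]
  · have hψ : DifferentiableAt ℝ (ψ n) x := (hsmooth n).differentiable (by simp) x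
    have hderiv := (hψ.hasDerivAt.const_mul (1 - s n)).add
      (((hasDerivAt_id x).const_mul (b / a)).const_mul (s n))
    have heq : deriv (fun x => (1 - s n) * ψ n x + s n * (b / a * x)) x =
        (1 - s n) * deriv (ψ n) x + s n * (b / a * 1) := hderiv.deriv
    rw [heq, mul_one]
    exact add_pos_of_nonneg_of_pos
      (mul_nonneg (sub_nonneg.2 (hs1 n)) (hψmono n).deriv_nonneg) (mul_pos (hs0 n) hba)
  · simp only [hψqp]
    field_simp
    ring
  · have hbound : ∀ n x, dist (φ x) ((1 - s n) * ψ n x + s n * (b / a * x)) ≤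
        s n * (L + C) := fun n x => by
      have hψ : |ψ n x - φ x| ≤ L * s n := hclose n x
      have hmul : (1 - s n) * |ψ n x - φ x| ≤ L * s n :=
        (mul_le_of_le_one_left (abs_nonneg _) (by linarith [hs0 n])).trans hψ
      rw [dist_comm, Real.dist_eq]
      calc |(1 - s n) * ψ n x + s n * (b / a * x) - φ x|
          = |(1 - s n) * (ψ n x - φ x) + s n * (b / a * x - φ x)| := by ring_nf
        _ ≤ (1 - s n) * |ψ n x - φ x| + s n * |b / a * x - φ x| := by
          refine (abs_add_le _ _).trans_eq ?_
          rw [abs_mul, abs_mul, abs_of_nonneg (sub_nonneg.2 (hs1 n)), abs_of_pos (hs0 n)]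
        _ ≤ s n * (L + C) := by
          linarith [mul_le_mul_of_nonneg_left (hC x) (hs0 n).le]
    have hlim : Tendsto (fun n => s n * (L + C)) atTop (nhds 0) := by
      simpa [s] using (tendsto_one_div_add_atTop_nhds_zero_nat (𝕜 := ℝ)).mul_const (L + C)
    rw [Metric.tendstoUniformly_iff]
    intro ε hε
    filter_upwards [hlim.eventually_lt_const hε] with n hn x
    exact (hbound n x).trans_lt hn
end

section
/- The family {T[fₙ] : n ∈ ℕ}, where fₙ are L-Lipschitz nondecreasing functions with fₙ(t+2π) = fₙ(t)+l converging uniformly to f and g is an l-periodic arc-length parametrization of a Dini-smooth curve, is uniformly bounded and equicontinuous on [0, 2π]. -/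
open MeasureTheory Set Real Filter

/-- The kernel `K(s,t) = Re[ conj(g(t) − g(s)) · i g'(s) ]`. -/
noncomputable def Kker (g : ℝ → ℂ) (s t : ℝ) : ℝ :=
  ((starRingEnd ℂ) (g t - g s) * (Complex.I * deriv g s)).re

/-- The operator `T[f](τ) = ∫₀^{2π} K(f(τ), f(t)) / (2 sin²((t−τ)/2)) dt`. -/
noncomputable def Topf (g : ℝ → ℂ) (f : ℝ → ℝ) (τ : ℝ) : ℝ :=
  ∫ t in (0:ℝ)..(2 * π), Kker g (f τ) (f t) / (2 * Real.sin ((t - τ) / 2) ^ 2)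

open scoped Topology

/-- A function bounded by `1` has a monotone bounded modulus of continuity that is smallest among
all its moduli of continuity. -/
theorem exists_monotone_modulus {φ : ℝ → ℂ} (hφ : ∀ s, ‖φ s‖ ≤ 1) :
    ∃ W : ℝ → ℝ, Monotone W ∧ (∀ δ, 0 ≤ W δ) ∧ (∀ δ, W δ ≤ 2) ∧
      (∀ x y, ‖φ x - φ y‖ ≤ W |x - y|) ∧
      ∀ δ c, 0 ≤ δ → (∀ x y, |x - y| ≤ δ → ‖φ x - φ y‖ ≤ c) → W δ ≤ c := by
  have h2 : ∀ x y, ‖φ x - φ y‖ ≤ 2 := fun x y =>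
    (norm_sub_le _ _).trans (by linarith [hφ x, hφ y])
  let S : ℝ → Set ℝ := fun δ => {r | ∃ x y, |x - y| ≤ max δ 0 ∧ r = ‖φ x - φ y‖}
  have hbdd : ∀ δ, BddAbove (S δ) := fun δ =>
    ⟨2, by rintro _ ⟨x, y, -, rfl⟩; exact h2 x y⟩
  have hzero : ∀ δ, (0:ℝ) ∈ S δ := fun δ => ⟨0, 0, by simp, by simp⟩
  refine ⟨fun δ => sSup (S δ), fun a b hab => ?_, fun δ => le_csSup (hbdd δ) (hzero δ),
    fun δ => csSup_le ⟨0, hzero δ⟩ ?_, fun x y => le_csSup (hbdd _) ⟨x, y, by simp, rfl⟩,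
    fun δ c hδ hc => csSup_le ⟨0, hzero δ⟩ ?_⟩
  · refine csSup_le_csSup (hbdd b) ⟨0, hzero a⟩ ?_
    rintro _ ⟨x, y, h, rfl⟩
    exact ⟨x, y, h.trans (max_le_max_right 0 hab), rfl⟩
  · rintro _ ⟨x, y, -, rfl⟩
    exact h2 x y
  · rintro _ ⟨x, y, h, rfl⟩
    exact hc x y (by rwa [max_eq_left hδ] at h)

theorem integrableOn_modulus_div_of_le {W ω : ℝ → ℝ} (hW : Monotone W) (hWnn : ∀ δ, 0 ≤ W δ)
    (hle : ∀ δ, 0 < δ → W δ ≤ ω δ) {k : ℝ}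
    (hDini : IntegrableOn (fun t => ω t / t) (Ioc 0 k)) :
    IntegrableOn (fun t => W t / t) (Ioc 0 k) := by
  refine Integrable.mono' hDini (hW.measurable.div measurable_id).aestronglyMeasurable
    ((ae_restrict_iff' measurableSet_Ioc).2 (ae_of_all _ fun t ht => ?_))
  rw [Real.norm_of_nonneg (div_nonneg (hWnn t) ht.1.le)]
  exact div_le_div_of_nonneg_right (hle t ht.1) ht.1.le

/-- A monotone modulus satisfying the Dini condition tends to `0` at `0`. -/
theorem tendsto_modulus_zero {W : ℝ → ℝ} (hW : Monotone W) (hWnn : ∀ δ, 0 ≤ W δ) {k : ℝ}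
    (hk : 0 < k) (hDini : IntegrableOn (fun t => W t / t) (Ioc 0 k)) :
    Tendsto W (𝓝 0) (𝓝 0) := by
  have hsmall : ∀ ε > 0, ∃ δ > 0, W δ < ε := by
    intro ε hε
    by_contra! hcon
    have hinv : IntervalIntegrable (fun x : ℝ => x⁻¹) volume 0 k := by
      rw [intervalIntegrable_iff_integrableOn_Ioc_of_le hk.le]
      refine Integrable.mono' (hDini.const_mul ε⁻¹) measurable_inv.aestronglyMeasurable
        ((ae_restrict_iff' measurableSet_Ioc).2 (ae_of_all _ fun t ht => ?_))
      have ht0 : 0 < t := ht.1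
      rw [Real.norm_of_nonneg (inv_nonneg.2 ht0.le)]
      have := hcon t ht0
      field_simp
      exact this
    rcases intervalIntegrable_inv_iff.1 hinv with h | h
    · exact hk.ne h
    · exact h left_mem_uIcc
  rw [Metric.tendsto_nhds]
  intro ε hε
  obtain ⟨δ, hδ, hlt⟩ := hsmall ε hε
  filter_upwards [Iio_mem_nhds hδ] with x hx
  rw [Real.dist_eq, sub_zero, abs_of_nonneg (hWnn x)]
  exact (hW (mem_Iio.1 hx).le).trans_lt hlt

theorem intervalIntegrable_modulus_div {W : ℝ → ℝ} (hW : Monotone W) (hWnn : ∀ δ, 0 ≤ W δ)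
    {b : ℝ} (hWb : ∀ δ, W δ ≤ b) {k : ℝ} (hk : 0 < k)
    (hDini : IntegrableOn (fun t => W t / t) (Ioc 0 k)) {M : ℝ} (hM : 0 < M) {a c : ℝ} :
    IntervalIntegrable (fun u => W (M * |u|) / |u|) volume a c := by
  have hpos : ∀ R, 0 < R → IntervalIntegrable (fun t => W t / t) volume 0 R := by
    intro R hR
    have h0 : IntervalIntegrable (fun t => W t / t) volume 0 k := by
      rwa [intervalIntegrable_iff_integrableOn_Ioc_of_le hk.le]
    refine h0.trans ?_
    refine (intervalIntegrable_const (c := b / min k R)).mono_fun'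
      (hW.measurable.div measurable_id).aestronglyMeasurable
      ((ae_restrict_iff' measurableSet_uIoc).2 (ae_of_all _ fun t ht => ?_))
    have hmin : 0 < min k R := lt_min hk hR
    have ht' : min k R < t := ht.1
    have hb : 0 ≤ b := (hWnn 0).trans (hWb 0)
    change ‖W t / t‖ ≤ b / min k R
    rw [Real.norm_of_nonneg (div_nonneg (hWnn t) (hmin.trans ht').le)]
    exact div_le_div₀ hb (hWb t) hmin ht'.le
  refine intervalIntegrable_of_even (fun x => by simp) (fun x hx => ?_)
  have h := ((hpos (M * x) (by positivity)).comp_mul_left (c := M)).const_mul M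
  simp only [zero_div, mul_div_cancel_left₀ x hM.ne'] at h
  refine h.congr fun t ht => ?_
  rw [uIoc_of_le hx.le] at ht
  have ht0 : 0 < t := ht.1
  simp only [abs_of_pos ht0]
  field_simp

/-- The integrand of `Topf g f τ` centred at `τ`. -/
noncomputable def Tintegrand (g : ℝ → ℂ) (f : ℝ → ℝ) (τ u : ℝ) : ℝ :=
  Kker g (f τ) (f (τ + u)) / (2 * sin (u / 2) ^ 2)

theorem measurable_Tintegrand {g : ℝ → ℂ} (hg : Continuous g) {f : ℝ → ℝ} (hf : Continuous f)
    (τ : ℝ) : Measurable (Tintegrand g f τ) := by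
  refine Measurable.div (Continuous.measurable ?_) (by fun_prop)
  unfold Kker
  fun_prop

theorem Topf_eq_integral_Tintegrand {g : ℝ → ℂ} {l : ℝ} (hper : ∀ s, g (s + l) = g s)
    {f : ℝ → ℝ} (hf : ∀ t, f (t + 2 * π) = f t + l) (τ : ℝ) :
    Topf g f τ = ∫ u in (-π)..π, Tintegrand g f τ u := by
  have hperiodic : Function.Periodic
      (fun t => Kker g (f τ) (f t) / (2 * sin ((t - τ) / 2) ^ 2)) (2 * π) := fun t => by
    have hsin : sin ((t + 2 * π - τ) / 2) = -sin ((t - τ) / 2) := by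
      rw [← sin_add_pi]
      ring_nf
    simp only [Kker, hf, hper, hsin, neg_sq]
  have h := hperiodic.intervalIntegral_add_eq 0 (τ - π)
  rw [zero_add] at h
  rw [Topf, h]
  have h' := intervalIntegral.integral_comp_add_left (a := -π) (b := π)
    (fun t => Kker g (f τ) (f t) / (2 * sin ((t - τ) / 2) ^ 2)) τ
  simp only [add_sub_cancel_left] at h'
  rw [show τ - π + 2 * π = τ + π by ring, show τ - π = τ + -π by ring, ← h']
  rfl

section Kernel

variable {g : ℝ → ℂ} {W : ℝ → ℝ}

theorem norm_sub_le_of_norm_deriv_eq_one (hg : Differentiable ℝ g) (hunit : ∀ s, ‖deriv g s‖ = 1)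
    (s t : ℝ) : ‖g t - g s‖ ≤ |t - s| := by
  simpa using Convex.norm_image_sub_le_of_norm_deriv_le (s := univ) (C := 1)
    (fun x _ => hg x) (fun x _ => (hunit x).le) convex_univ (mem_univ s) (mem_univ t)

theorem norm_sub_sub_smul_deriv_le (hg : Differentiable ℝ g) (hW : Monotone W)
    (hWg : ∀ x y, ‖deriv g x - deriv g y‖ ≤ W |x - y|) (s t : ℝ) :
    ‖g t - g s - (t - s) • deriv g s‖ ≤ W |t - s| * |t - s| := by
  have h := Convex.norm_image_sub_le_of_norm_hasDerivWithin_le (s := uIcc s t)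
    (f := fun x => g x - x • deriv g s) (f' := fun x => deriv g x - (1:ℝ) • deriv g s)
    (C := W |t - s|)
    (fun x _ => ((hg x).hasDerivAt.sub
      ((hasDerivAt_id x).smul_const (deriv g s))).hasDerivWithinAt)
    (fun x hx => by
      rw [one_smul]
      exact (hWg x s).trans (hW (abs_sub_left_of_mem_uIcc hx)))
    (convex_uIcc s t) left_mem_uIcc right_mem_uIcc
  rw [Real.norm_eq_abs] at h
  rwa [show g t - g s - (t - s) • deriv g s = g t - t • deriv g s - (g s - s • deriv g s) by
    rw [sub_smul]; abel]

theorem abs_Kker_le (hg : Differentiable ℝ g) (hunit : ∀ s, ‖deriv g s‖ = 1) (hW : Monotone W)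
    (hWg : ∀ x y, ‖deriv g x - deriv g y‖ ≤ W |x - y|) (s t : ℝ) :
    |Kker g s t| ≤ W |t - s| * |t - s| := by
  have h : Kker g s t = ((starRingEnd ℂ) (g t - g s - (t - s) • deriv g s) *
      (Complex.I * deriv g s)).re := by
    simp [Kker]
    ring
  rw [h]
  refine (Complex.abs_re_le_norm _).trans ?_
  rw [norm_mul, norm_mul, RCLike.norm_conj, Complex.norm_I, hunit, mul_one, mul_one]
  exact norm_sub_sub_smul_deriv_le hg hW hWg s t

theorem abs_Kker_sub_le (hg : Differentiable ℝ g) (hunit : ∀ s, ‖deriv g s‖ = 1)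
    (hWg : ∀ x y, ‖deriv g x - deriv g y‖ ≤ W |x - y|) (s t s' t' : ℝ) :
    |Kker g s t - Kker g s' t'| ≤ |t - t'| + |s - s'| + |t' - s'| * W |s - s'| := by
  have h : Kker g s t - Kker g s' t' =
      ((starRingEnd ℂ) ((g t - g t') - (g s - g s')) * (Complex.I * deriv g s) +
        (starRingEnd ℂ) (g t' - g s') * (Complex.I * (deriv g s - deriv g s'))).re := by
    rw [Kker, Kker, ← Complex.sub_re]
    congr 1
    simp only [map_sub]
    ring
  have hlip := norm_sub_le_of_norm_deriv_eq_one hg hunit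
  rw [h]
  refine (Complex.abs_re_le_norm _).trans ((norm_add_le _ _).trans (add_le_add ?_ ?_))
  · rw [norm_mul, norm_mul, RCLike.norm_conj, Complex.norm_I, hunit, mul_one, mul_one]
    exact (norm_sub_le _ _).trans (add_le_add (hlip t' t) (hlip s' s))
  · rw [norm_mul, norm_mul, RCLike.norm_conj, Complex.norm_I, one_mul]
    exact mul_le_mul (hlip s' t') (hWg s s') (norm_nonneg _) (abs_nonneg _)

variable {f : ℝ → ℝ} {M : ℝ}

theorem abs_Tintegrand_le (hg : Differentiable ℝ g) (hunit : ∀ s, ‖deriv g s‖ = 1)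
    (hW : Monotone W) (hWg : ∀ x y, ‖deriv g x - deriv g y‖ ≤ W |x - y|)
    (hf : ∀ x y, |f x - f y| ≤ M * |x - y|) (τ : ℝ) {u : ℝ} (hu : |u| ≤ π) :
    |Tintegrand g f τ u| ≤ M * π ^ 2 / 2 * (W (M * |u|) / |u|) := by
  rcases eq_or_ne u 0 with rfl | hu0
  · simp [Tintegrand]
  have hu1 : 0 < |u| := abs_pos.2 hu0
  have hpi := pi_pos
  have hfu : |f (τ + u) - f τ| ≤ M * |u| := by simpa using hf (τ + u) τ
  have hWpos : 0 ≤ W (M * |u|) := by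
    have h := (norm_nonneg _).trans (hWg (f (τ + u)) (f τ))
    exact h.trans (hW hfu)
  have hK : |Kker g (f τ) (f (τ + u))| ≤ W (M * |u|) * (M * |u|) :=
    (abs_Kker_le hg hunit hW hWg _ _).trans
      (mul_le_mul (hW hfu) hfu (abs_nonneg _) hWpos)
  have hsin : (|u| / π) ^ 2 ≤ sin (u / 2) ^ 2 := by
    have h := mul_abs_le_abs_sin (x := u / 2) (by rw [abs_div, abs_two]; linarith)
    rw [abs_div, abs_two, show 2 / π * (|u| / 2) = |u| / π by ring] at h
    rw [← sq_abs (sin (u / 2))]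
    exact pow_le_pow_left₀ (by positivity) h 2
  rw [Tintegrand, abs_div, abs_of_nonneg (by positivity : 0 ≤ 2 * sin (u / 2) ^ 2)]
  calc |Kker g (f τ) (f (τ + u))| / (2 * sin (u / 2) ^ 2)
      ≤ W (M * |u|) * (M * |u|) / (2 * (|u| / π) ^ 2) :=
        div_le_div₀ ((abs_nonneg _).trans hK) hK (by positivity) (by linarith)
    _ = M * π ^ 2 / 2 * (W (M * |u|) / |u|) := by
        field_simp

theorem abs_Tintegrand_sub_le (hg : Differentiable ℝ g) (hunit : ∀ s, ‖deriv g s‖ = 1)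
    (hW : Monotone W) (hWg : ∀ x y, ‖deriv g x - deriv g y‖ ≤ W |x - y|)
    (hf : ∀ x y, |f x - f y| ≤ M * |x - y|) (τ σ : ℝ) {u : ℝ} (hu : |u| ≤ π) :
    |Tintegrand g f τ u - Tintegrand g f σ u| ≤
      (2 * (M * |τ - σ|) + M * π * W (M * |τ - σ|)) / (2 * sin (u / 2) ^ 2) := by
  have hM : 0 ≤ M := by simpa using (abs_nonneg _).trans (hf 1 0)
  rw [Tintegrand, Tintegrand, ← sub_div, abs_div,
    abs_of_nonneg (by positivity : 0 ≤ 2 * sin (u / 2) ^ 2)]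
  refine div_le_div_of_nonneg_right ?_ (by positivity)
  refine (abs_Kker_sub_le hg hunit hWg _ _ _ _).trans ?_
  have h1 : |f (τ + u) - f (σ + u)| ≤ M * |τ - σ| := by simpa using hf (τ + u) (σ + u)
  have h2 : |f (σ + u) - f σ| ≤ M * π := by
    have h : |f (σ + u) - f σ| ≤ M * |u| := by simpa using hf (σ + u) σ
    exact h.trans (mul_le_mul_of_nonneg_left hu hM)
  have h3 := mul_le_mul h2 (hW (hf τ σ)) ((norm_nonneg _).trans (hWg _ _))
    (mul_nonneg hM pi_pos.le)
  linarith [hf τ σ]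

end Kernel

/-- The family `{T[fₙ]}` is uniformly bounded and equicontinuous on `[0, 2π]`. -/
theorem T_bounded_equicontinuous (l : ℝ) (hl : 0 < l) (L : NNReal)
    (g : ℝ → ℂ) (hg : ContDiff ℝ 1 g)
    (hper : ∀ s, g (s + l) = g s)
    (hunit : ∀ s, ‖deriv g s‖ = 1)
    (ω : ℝ → ℝ)
    (hω : ∀ δ ≥ (0:ℝ), ∀ x y : ℝ, |x - y| ≤ δ → ‖deriv g x - deriv g y‖ ≤ ω δ)
    (hωD : ∃ k > (0:ℝ), IntegrableOn (fun t => ω t / t) (Ioc 0 k))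
    (f : ℝ → ℝ) (hf : Monotone f) (hfl : LipschitzWith L f)
    (hfqp : ∀ t, f (t + 2 * π) = f t + l)
    (fn : ℕ → ℝ → ℝ) (hfn : ∀ n, Monotone (fn n))
    (hfnl : ∀ n, LipschitzWith L (fn n))
    (hfnqp : ∀ n t, fn n (t + 2 * π) = fn n t + l)
    (hconv : TendstoUniformly fn f atTop) :
    (∃ C : ℝ, ∀ n : ℕ, ∀ τ ∈ Icc (0:ℝ) (2 * π), |Topf g (fn n) τ| ≤ C) ∧
    EquicontinuousOn (fun n => Topf g (fn n)) (Icc (0:ℝ) (2 * π)) := by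
  obtain ⟨W, hWmono, hWnn, hW2, hWφ, hWω⟩ := exists_monotone_modulus (fun s => (hunit s).le)
  obtain ⟨k, hk, hDini⟩ := hωD
  have hWint : IntegrableOn (fun t => W t / t) (Ioc 0 k) :=
    integrableOn_modulus_div_of_le hWmono hWnn (fun δ hδ => hWω δ (ω δ) hδ.le (hω δ hδ.le)) hDini
  have hM : (0:ℝ) < L + 1 := by positivity
  have hlip : ∀ n x y, |fn n x - fn n y| ≤ (L + 1 : ℝ) * |x - y| := fun n x y => by
    have h := (hfnl n).dist_le_mul x y
    rw [Real.dist_eq, Real.dist_eq] at h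
    nlinarith [abs_nonneg (x - y)]
  have hgd : Differentiable ℝ g := hg.differentiable one_ne_zero
  have hq := intervalIntegrable_modulus_div hWmono hWnn hW2 hk hWint hM (a := -π) (c := π)
  have hTop : ∀ n τ, Topf g (fn n) τ = ∫ u in (-π)..π, Tintegrand g (fn n) τ u :=
    fun n τ => Topf_eq_integral_Tintegrand hper (hfnqp n) τ
  have hbd : ∀ n τ u, |u| ≤ π → |Tintegrand g (fn n) τ u| ≤
      (L + 1) * π ^ 2 / 2 * (W ((L + 1) * |u|) / |u|) := fun n τ u hu =>
    abs_Tintegrand_le hgd hunit hWmono hWφ (hlip n) τ hu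
  have hpi : -π ≤ π := by linarith [pi_pos]
  refine ⟨⟨∫ u in (-π)..π, (L + 1) * π ^ 2 / 2 * (W ((L + 1) * |u|) / |u|), fun n τ _ => ?_⟩, ?_⟩
  · rw [hTop, ← Real.norm_eq_abs]
    refine intervalIntegral.norm_integral_le_of_norm_le hpi (ae_of_all _ fun u hu => ?_)
      (hq.const_mul _)
    exact hbd n τ u (abs_le.2 ⟨hu.1.le, hu.2⟩)
  refine Equicontinuous.equicontinuousOn (fun τ₀ => ?_) _
  set E : ℝ → ℝ := fun τ => 2 * ((L + 1) * |τ - τ₀|) + (L + 1) * π * W ((L + 1) * |τ - τ₀|)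
    with hE
  have hEnn : ∀ τ, 0 ≤ E τ := fun τ => by
    have := hWnn ((L + 1) * |τ - τ₀|)
    positivity
  have hE0 : Tendsto E (𝓝 τ₀) (𝓝 0) := by
    have h1 : Tendsto (fun τ : ℝ => (L + 1 : ℝ) * |τ - τ₀|) (𝓝 τ₀) (𝓝 0) := by
      have : Continuous fun τ : ℝ => (L + 1 : ℝ) * |τ - τ₀| := by fun_prop
      simpa using this.tendsto τ₀
    have h2 := (tendsto_modulus_zero hWmono hWnn hk hWint).comp h1
    simpa [hE] using (h1.const_mul 2).add (h2.const_mul ((L + 1) * π))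
  have hWm : Measurable W := hWmono.measurable
  set B : ℝ → ℝ → ℝ := fun τ u => min
    (2 * ((L + 1) * π ^ 2 / 2 * (W ((L + 1) * |u|) / |u|))) (E τ / (2 * sin (u / 2) ^ 2)) with hB
  have hBm : ∀ τ, Measurable (B τ) := fun τ => by
    simp only [hB]
    fun_prop
  have hBnn : ∀ τ u, 0 ≤ B τ u := fun τ u => by
    have := hWnn ((L + 1) * |u|)
    have := hEnn τ
    simp only [hB]
    positivity
  have hBle : ∀ τ u, ‖B τ u‖ ≤ 2 * ((L + 1) * π ^ 2 / 2 * (W ((L + 1) * |u|) / |u|)) :=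
    fun τ u => by
      rw [Real.norm_of_nonneg (hBnn τ u)]
      exact min_le_left _ _
  have hBint : ∀ τ, IntervalIntegrable (B τ) volume (-π) π := fun τ =>
    ((hq.const_mul _).const_mul _).mono_fun' (hBm τ).aestronglyMeasurable
      (ae_of_all _ (hBle τ))
  have hlim : Tendsto (fun τ => ∫ u in (-π)..π, B τ u) (𝓝 τ₀) (𝓝 0) := by
    have h := intervalIntegral.tendsto_integral_filter_of_dominated_convergence
      (μ := volume) (a := -π) (b := π) (l := 𝓝 τ₀) (F := B) (f := fun _ => 0) _
      (Eventually.of_forall fun τ => (hBm τ).aestronglyMeasurable)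
      (Eventually.of_forall fun τ => ae_of_all _ fun u _ => hBle τ u)
      ((hq.const_mul _).const_mul _) (ae_of_all _ fun u _ => ?_)
    · simpa using h
    · refine squeeze_zero (fun τ => hBnn τ u) (fun τ => min_le_right _ _) ?_
      simpa using hE0.div_const (2 * sin (u / 2) ^ 2)
  refine Metric.equicontinuousAt_of_continuity_modulus _ hlim _
    (Eventually.of_forall fun τ n => ?_)
  have hTint : ∀ σ, IntervalIntegrable (Tintegrand g (fn n) σ) volume (-π) π := fun σ =>
    (hq.const_mul _).mono_fun'
      (measurable_Tintegrand hgd.continuous (hfnl n).continuous σ).aestronglyMeasurable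
      ((ae_restrict_iff' measurableSet_uIoc).2 (ae_of_all _ fun u hu => by
        rw [uIoc_of_le hpi] at hu
        exact hbd n σ u (abs_le.2 ⟨hu.1.le, hu.2⟩)))
  rw [dist_comm, Real.dist_eq, hTop, hTop, ← intervalIntegral.integral_sub (hTint _) (hTint _),
    ← Real.norm_eq_abs]
  refine intervalIntegral.norm_integral_le_of_norm_le hpi (ae_of_all _ fun u hu => ?_) (hBint τ)
  have hu' : |u| ≤ π := abs_le.2 ⟨hu.1.le, hu.2⟩
  refine le_min ?_ (abs_Tintegrand_sub_le hgd hunit hWmono hWφ (hlip n) τ τ₀ hu')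
  refine (norm_sub_le _ _).trans ?_
  rw [two_mul]
  exact add_le_add (hbd n τ u hu') (hbd n τ₀ u hu')
end

section
/- Let F : 𝕋 → γ be an orientation-preserving Lipschitz weak homeomorphism of the unit circle onto a Dini-smooth Jordan curve γ bounding a domain D, and let w = P[F] be the Poisson extension of F to the unit disk. If the continuous function T(ζ) satisfying J_w(ζ) = |∂_t F(ζ)| T(ζ) a.e. on 𝕋 is strictly positive everywhere on 𝕋, then w is a diffeomorphism of the unit disk onto D. -/
open MeasureTheory Set Real

/-- The Poisson kernel `P(r,t) = (1−r²)/(2π(1−2r cos t + r²))`. -/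
noncomputable def poissonKer (r t : ℝ) : ℝ :=
  (1 - r ^ 2) / (2 * π * (1 - 2 * r * Real.cos t + r ^ 2))

/-- The Poisson extension `P[F](z)` of a `2π`-periodic boundary function `F : ℝ → ℂ`. -/
noncomputable def poissonExt (F : ℝ → ℂ) (z : ℂ) : ℂ :=
  ∫ t in (0:ℝ)..(2 * π), (poissonKer ‖z‖ (t - Complex.arg z) : ℂ) * F t

/-- The Jacobian determinant of `w : ℂ → ℂ` viewed as a map `ℝ² → ℝ²`. -/
noncomputable def Jac (w : ℂ → ℂ) (z : ℂ) : ℝ :=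
  LinearMap.det (fderiv ℝ w z : ℂ →ₗ[ℝ] ℂ)

open Filter Topology

theorem exp_lift_const {X : Type*} [TopologicalSpace X] {s : Set X} (hs : IsPreconnected s)
    {Λ : X → ℂ} (hΛ : ContinuousOn Λ s) {c : ℂ} (h : ∀ x ∈ s, Complex.exp (Λ x) = c)
    {x y : X} (hx : x ∈ s) (hy : y ∈ s) : Λ x = Λ y := by
  exact (Complex.isCoveringMap_exp.eqOn_of_comp_eqOn hs hΛ continuousOn_const
    (fun z hz => Subtype.ext ((h z hz).trans (h x hx).symm)) hx rfl hy).symm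

theorem exists_continuous_log {X : Type*} [TopologicalSpace X] [SimplyConnectedSpace X]
    [LocallyPathConnectedSpace X] {G : X → ℂ} (hG : Continuous G) (h0 : ∀ x, G x ≠ 0) :
    ∃ Λ : X → ℂ, Continuous Λ ∧ ∀ x, Complex.exp (Λ x) = G x := by
  obtain ⟨x₀⟩ := (inferInstance : Nonempty X)
  obtain ⟨F, ⟨-, hF⟩, -⟩ := Complex.isCoveringMapOn_exp.existsUnique_continuousMap_lifts
    ⟨G, hG⟩ (a₀ := x₀) (Complex.exp_log (h0 x₀)) (fun x => h0 x)
  exact ⟨F, F.continuous, fun x => congrFun hF x⟩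

/-- A `2π`-periodic curve with a continuous logarithm that gains `2πi n` over a period. -/
def HasWinding (c : ℝ → ℂ) (n : ℤ) : Prop :=
  ∃ Λ : ℝ → ℂ, Continuous Λ ∧ (∀ t, Complex.exp (Λ t) = c t) ∧
    ∀ t, Λ (t + 2 * π) = Λ t + n * (2 * π * Complex.I)

theorem HasWinding.mul {c d : ℝ → ℂ} {m n : ℤ} (hc : HasWinding c m) (hd : HasWinding d n) :
    HasWinding (fun t => c t * d t) (m + n) := by
  obtain ⟨Λ, h1, h2, h3⟩ := hc
  obtain ⟨M, k1, k2, k3⟩ := hd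
  refine ⟨fun t => Λ t + M t, h1.add k1, fun t => by rw [Complex.exp_add, h2, k2], fun t => ?_⟩
  simp only [h3, k3]; push_cast; ring

theorem HasWinding.inv {c : ℝ → ℂ} {m : ℤ} (hc : HasWinding c m) :
    HasWinding (fun t => (c t)⁻¹) (-m) := by
  obtain ⟨Λ, h1, h2, h3⟩ := hc
  refine ⟨fun t => -Λ t, h1.neg, fun t => by rw [Complex.exp_neg, h2], fun t => ?_⟩
  simp only [h3]; push_cast; ring

theorem HasWinding.unique {c : ℝ → ℂ} {m n : ℤ} (hc : HasWinding c m) (hd : HasWinding c n) :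
    m = n := by
  obtain ⟨Λ, h1, h2, h3⟩ := hc
  obtain ⟨M, k1, k2, k3⟩ := hd
  have h0 : ∀ t, Complex.exp (Λ t - M t) = 1 := fun t => by
    rw [Complex.exp_sub, h2, ← k2, div_self (Complex.exp_ne_zero _)]
  have := exp_lift_const (s := univ) isPreconnected_univ (h1.sub k1).continuousOn
    (fun t _ => h0 t) (mem_univ (0:ℝ)) (mem_univ (0 + 2 * π))
  simp only [h3, k3, Pi.sub_apply] at this
  have h4 : (m : ℂ) * (2 * π * Complex.I) = n * (2 * π * Complex.I) := by linear_combination -this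
  exact_mod_cast mul_right_cancel₀ Complex.two_pi_I_ne_zero h4

theorem hasWinding_zero_of_re_pos {c : ℝ → ℂ} (hc : Continuous c)
    (hp : ∀ t, c (t + 2 * π) = c t) (h : ∀ t, 0 < (c t).re) : HasWinding c 0 := by
  refine ⟨fun t => Complex.log (c t), ?_, fun t => ?_, fun t => by simp [hp]⟩
  · exact hc.clog fun t => Or.inl (h t)
  · exact Complex.exp_log fun h0 => by simpa [h0] using h t

theorem hasWinding_const {a : ℂ} (ha : a ≠ 0) : HasWinding (fun _ => a) 0 :=
  ⟨fun _ => Complex.log a, continuous_const, fun _ => Complex.exp_log ha, by simp⟩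

theorem hasWinding_exp : HasWinding (fun t => Complex.exp (t * Complex.I)) 1 :=
  ⟨fun t => t * Complex.I, by fun_prop, fun _ => rfl, fun t => by push_cast; ring⟩

theorem HasWinding.prod {ι : Type*} (s : Finset ι) {c : ι → ℝ → ℂ}
    (h : ∀ i ∈ s, HasWinding (c i) 1) : HasWinding (fun t => ∏ i ∈ s, c i t) s.card := by
  classical
  induction s using Finset.induction_on with
  | empty => simpa using hasWinding_const one_ne_zero
  | insert a s ha ih =>
    have := (h a (by simp)).mul (ih fun i hi => h i (by simp [hi]))
    simpa [Finset.prod_insert ha, Finset.card_insert_of_notMem ha, add_comm] using this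

/-- A function that is continuous and zero free on the closed disk has winding number zero
along the unit circle. -/
theorem hasWinding_zero_of_closedBall {R : ℂ → ℂ} (hR : ContinuousOn R (Metric.closedBall 0 1))
    (h0 : ∀ z ∈ Metric.closedBall (0:ℂ) 1, R z ≠ 0) :
    HasWinding (fun t => R (Complex.exp (t * Complex.I))) 0 := by
  have hm : ∀ z : ℂ, ((max 1 ‖z‖ : ℝ) : ℂ)⁻¹ * z ∈ Metric.closedBall (0:ℂ) 1 := by
    intro z
    have : 0 < max 1 ‖z‖ := lt_max_of_lt_left one_pos
    rw [mem_closedBall_zero_iff, norm_mul, norm_inv, Complex.norm_real, Real.norm_of_nonneg this.le,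
      inv_mul_le_iff₀ this]
    simp
  have hc : Continuous fun z : ℂ => ((max 1 ‖z‖ : ℝ) : ℂ)⁻¹ * z := by
    refine Continuous.mul (Continuous.inv₀ (by fun_prop) fun z => ?_) continuous_id
    have : 0 < max 1 ‖z‖ := lt_max_of_lt_left one_pos
    exact_mod_cast this.ne'
  obtain ⟨Λ, hΛ, hexp⟩ := exists_continuous_log (X := ℂ) (G := fun z => R (((max 1 ‖z‖ : ℝ) : ℂ)⁻¹ * z))
    (hR.comp_continuous hc hm) (fun z => h0 _ (hm z))
  refine ⟨fun t => Λ (Complex.exp (t * Complex.I)), hΛ.comp (by fun_prop), fun t => ?_, fun t => ?_⟩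
  · rw [hexp, Complex.norm_exp_ofReal_mul_I]; simp
  · have : Complex.exp (((t + 2 * π : ℝ) : ℂ) * Complex.I) = Complex.exp (t * Complex.I) := by
      rw [← Complex.exp_periodic (t * Complex.I)]; congr 1; push_cast; ring
    simp only [this]; simp

/-- Continuous periodic real functions are uniformly approximated on the unit circle by real parts
of entire functions. -/
theorem exists_entire_re_approx {ψ : ℝ → ℝ} (hψ : Continuous ψ) (hp : ∀ t, ψ (t + 2 * π) = ψ t)
    {ε : ℝ} (hε : 0 < ε) :
    ∃ p : ℂ → ℂ, Differentiable ℂ p ∧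
      ∀ t : ℝ, |ψ t - (p (Complex.exp (t * Complex.I))).re| < ε := by
  have : Fact (0 < 2 * π) := ⟨Real.two_pi_pos⟩
  have hper : Function.Periodic (fun t => (ψ t : ℂ)) (2 * π) := fun t => by simp [hp]
  let Ψ : C(AddCircle (2 * π), ℂ) := ⟨hper.lift, by
    refine continuous_coinduced_dom.mpr ?_
    exact Complex.continuous_ofReal.comp hψ⟩
  have hmem : Ψ ∈ (Submodule.span ℂ (range (@fourier (2 * π)))).topologicalClosure := by
    rw [span_fourier_closure_eq_top]; trivial
  obtain ⟨q, hq, hqε⟩ := Metric.mem_closure_iff.1 hmem ε hε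
  have key : ∀ q ∈ Submodule.span ℂ (range (@fourier (2 * π))), ∃ p₁ p₂ : ℂ → ℂ,
      Differentiable ℂ p₁ ∧ Differentiable ℂ p₂ ∧ ∀ t : ℝ, q (t : AddCircle (2 * π)) =
        p₁ (Complex.exp (t * Complex.I)) +
          (starRingEnd ℂ) (p₂ (Complex.exp (t * Complex.I))) := by
    intro q hq
    induction hq using Submodule.span_induction with
    | mem x hx =>
      obtain ⟨n, rfl⟩ := hx
      have hf : ∀ t : ℝ, fourier n (t : AddCircle (2 * π)) = Complex.exp (t * Complex.I) ^ n := by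
        intro t
        rw [fourier_coe_apply, ← Complex.exp_int_mul]
        congr 1
        have : (π : ℂ) ≠ 0 := by exact_mod_cast Real.pi_ne_zero
        push_cast
        field_simp
      obtain ⟨k, rfl | rfl⟩ := n.eq_nat_or_neg
      · exact ⟨fun z => z ^ k, fun _ => 0, by fun_prop, by fun_prop, fun t => by rw [hf]; simp⟩
      · refine ⟨fun _ => 0, fun z => z ^ k, by fun_prop, by fun_prop, fun t => ?_⟩
        rw [hf, map_pow, ← Complex.exp_conj, zpow_neg, zpow_natCast, ← inv_pow, ← Complex.exp_neg]
        simp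
    | zero => exact ⟨fun _ => 0, fun _ => 0, by fun_prop, by fun_prop, fun t => by simp⟩
    | add x y _ _ hx hy =>
      obtain ⟨a, b, ha, hb, h⟩ := hx
      obtain ⟨a', b', ha', hb', h'⟩ := hy
      refine ⟨a + a', b + b', ha.add ha', hb.add hb', fun t => ?_⟩
      simp only [ContinuousMap.add_apply, h, h', Pi.add_apply, map_add]; ring
    | smul c x _ hx =>
      obtain ⟨a, b, ha, hb, h⟩ := hx
      refine ⟨fun z => c * a z, fun z => (starRingEnd ℂ) c * b z, by fun_prop, by fun_prop,
        fun t => ?_⟩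
      simp only [ContinuousMap.smul_apply, h, smul_eq_mul, map_mul, Complex.conj_conj]; ring
  obtain ⟨a, b, ha, hb, h⟩ := key q hq
  refine ⟨fun z => a z + b z, ha.add hb, fun t => ?_⟩
  have h1 : ‖(Ψ - q) (t : AddCircle (2 * π))‖ < ε :=
    ((Ψ - q).norm_coe_le_norm _).trans_lt (by rwa [← dist_eq_norm])
  have h2 := (Complex.abs_re_le_norm ((Ψ - q) (t : AddCircle (2 * π)))).trans_lt h1
  have h3 : Ψ (t : AddCircle (2 * π)) = (ψ t : ℂ) := rfl
  rw [ContinuousMap.sub_apply, h, h3] at h2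
  simpa using h2

theorem re_pos_of_re_pos_on_sphere {H : ℂ → ℂ} {r : ℝ} (hr : 0 < r)
    (hH : DifferentiableOn ℂ H (Metric.closedBall 0 r))
    (hpos : ∀ z ∈ Metric.sphere (0:ℂ) r, 0 < (H z).re) {z : ℂ} (hz : z ∈ Metric.closedBall 0 r) :
    0 < (H z).re := by
  have hne : (Metric.sphere (0:ℂ) r).Nonempty := NormedSpace.sphere_nonempty.2 hr.le
  obtain ⟨z₀, hz₀, hmin⟩ := (isCompact_sphere (0:ℂ) r).exists_isMinOn hne
    (f := fun z => (H z).re)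
    (Complex.continuous_re.comp_continuousOn (hH.continuousOn.mono Metric.sphere_subset_closedBall))
  have hd : DiffContOnCl ℂ (fun z => Complex.exp (-H z)) (Metric.ball 0 r) := by
    refine DifferentiableOn.diffContOnCl ?_
    rw [closure_ball _ hr.ne']
    exact (hH.neg).cexp
  have := Complex.norm_le_of_forall_mem_frontier_norm_le (C := Real.exp (-(H z₀).re))
    Metric.isBounded_ball hd (fun y hy => ?_) (z := z) (by rwa [closure_ball _ hr.ne'])
  · rw [Complex.norm_exp, Real.exp_le_exp] at this
    have h1 := hpos z₀ hz₀
    simp only [Complex.neg_re] at this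
    linarith
  · rw [frontier_ball _ hr.ne'] at hy
    rw [Complex.norm_exp, Real.exp_le_exp, Complex.neg_re, neg_le_neg_iff]
    exact hmin hy

theorem ne_zero_of_hasWinding_zero {H : ℂ → ℂ} {r : ℝ} (hr : 0 < r)
    (hH : DifferentiableOn ℂ H (Metric.closedBall 0 r))
    (hw : HasWinding (fun t => H (r * Complex.exp (t * Complex.I))) 0)
    {z : ℂ} (hz : z ∈ Metric.closedBall 0 r) : H z ≠ 0 := by
  obtain ⟨Λ, hΛ, hexp, hper⟩ := hw
  obtain ⟨p, hp, happ⟩ := exists_entire_re_approx (ψ := fun t => (Λ t).im)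
    (Complex.continuous_im.comp hΛ) (fun t => by simp [hper]) (by positivity : 0 < π / 2)
  have hrc : (r : ℂ) ≠ 0 := by exact_mod_cast hr.ne'
  have := re_pos_of_re_pos_on_sphere (H := fun z => H z * Complex.exp (-(Complex.I * p (z / r)))) hr
    (hH.mul (by fun_prop)) (fun y hy => ?_) hz
  · intro h0; simp [h0] at this
  · have hy' : y = r * Complex.exp (y.arg * Complex.I) := by
      conv_lhs => rw [← Complex.norm_mul_exp_arg_mul_I y]
      rw [mem_sphere_zero_iff_norm.1 hy]
    have hy2 : y / r = Complex.exp (y.arg * Complex.I) := by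
      rw [div_eq_iff hrc, mul_comm]; exact hy'
    have : H y = Complex.exp (Λ y.arg) := (congrArg H hy').trans (hexp _).symm
    rw [hy2, this, ← Complex.exp_add, Complex.exp_re]
    refine mul_pos (Real.exp_pos _) (Real.cos_pos_of_mem_Ioo ?_)
    have h1 := abs_lt.1 (happ y.arg)
    simp only [Complex.add_im, Complex.neg_im, Complex.mul_im, Complex.I_re, Complex.I_im]
    constructor <;> linarith [h1.1, h1.2]

theorem mul_norm_le_norm_add_conj (A B v : ℂ) :
    (‖A‖ - ‖B‖) * ‖v‖ ≤ ‖A * v + B * (starRingEnd ℂ) v‖ := by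
  have := norm_sub_le_norm_add (A * v) (B * (starRingEnd ℂ) v)
  rw [norm_mul, norm_mul, RCLike.norm_conj] at this
  linarith

theorem hasWinding_add_conj {A B a : ℂ} (hAB : ‖B‖ < ‖A‖) (ha : ‖a‖ < 1) :
    HasWinding (fun t => A * (Complex.exp (t * Complex.I) - a) +
      B * (starRingEnd ℂ) (Complex.exp (t * Complex.I) - a)) 1 := by
  have hA : A ≠ 0 := norm_pos_iff.1 ((norm_nonneg _).trans_lt hAB)
  have hper : ∀ t : ℝ, Complex.exp ((t + 2 * π : ℝ) * Complex.I) = Complex.exp (t * Complex.I) := by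
    intro t
    rw [← Complex.exp_periodic (t * Complex.I)]; congr 1; push_cast; ring
  have hne : ∀ t : ℝ, Complex.exp (t * Complex.I) - a ≠ 0 := by
    intro t h
    rw [sub_eq_zero] at h
    rw [← h, Complex.norm_exp_ofReal_mul_I] at ha
    exact lt_irrefl _ ha
  have hre : ∀ z : ℂ, ‖z‖ < 1 → 0 < (1 + z).re := by
    intro z hz
    have := neg_le_of_abs_le (Complex.abs_re_le_norm z)
    simp only [Complex.add_re, Complex.one_re]; linarith
  have h1 : HasWinding (fun t : ℝ => 1 + -(a * (Complex.exp (t * Complex.I))⁻¹)) 0 := by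
    refine hasWinding_zero_of_re_pos ?_ (fun t => by rw [hper]) (fun t => hre _ ?_)
    · have : ∀ t : ℝ, Complex.exp (t * Complex.I) ≠ 0 := fun t => Complex.exp_ne_zero _
      fun_prop (disch := assumption)
    · rw [norm_neg, norm_mul, norm_inv, Complex.norm_exp_ofReal_mul_I]; simpa using ha
  have h2 : HasWinding (fun t : ℝ => 1 + B * (starRingEnd ℂ) (Complex.exp (t * Complex.I) - a) /
      (A * (Complex.exp (t * Complex.I) - a))) 0 := by
    refine hasWinding_zero_of_re_pos ?_ (fun t => by rw [hper]) (fun t => hre _ ?_)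
    · have : ∀ t : ℝ, A * (Complex.exp (t * Complex.I) - a) ≠ 0 := fun t => mul_ne_zero hA (hne t)
      have hc : Continuous (starRingEnd ℂ) := Complex.continuous_conj
      refine continuous_const.add (Continuous.div ?_ (by fun_prop) this)
      exact continuous_const.mul (hc.comp (by fun_prop))
    · rw [norm_div, norm_mul, norm_mul, RCLike.norm_conj, mul_div_mul_right _ _ (norm_ne_zero_iff.2 (hne t)),
        div_lt_one (norm_pos_iff.2 hA)]
      exact hAB
  have h3 := ((hasWinding_const hA).mul (hasWinding_exp.mul h1)).mul h2
  have : (0 : ℤ) + (1 + 0) + 0 = 1 := rfl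
  rw [this] at h3
  convert h3 using 2 with t
  have e0 := Complex.exp_ne_zero (t * Complex.I)
  have := hne t
  field_simp
  ring

/-- **Argument principle** for maps that are sense preserving and regular at their zeros. -/
theorem hasWinding_ncard_zeros {W : ℂ → ℂ} (hc : ContinuousOn W (Metric.closedBall 0 1))
    (hs : ∀ z ∈ Metric.sphere (0:ℂ) 1, W z ≠ 0)
    (hd : ∀ z ∈ Metric.ball (0:ℂ) 1, W z = 0 → ∃ A B : ℂ, ‖B‖ < ‖A‖ ∧ ∃ L : ℂ →L[ℝ] ℂ,
      HasFDerivAt W L z ∧ ∀ v, L v = A * v + B * (starRingEnd ℂ) v) :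
    {z | z ∈ Metric.ball (0:ℂ) 1 ∧ W z = 0}.Finite ∧
    HasWinding (fun t => W (Complex.exp (t * Complex.I)))
      {z | z ∈ Metric.ball (0:ℂ) 1 ∧ W z = 0}.ncard := by
  classical
  set Z := {z | z ∈ Metric.ball (0:ℂ) 1 ∧ W z = 0} with hZ
  have hZ' : ∀ z ∈ Metric.closedBall (0:ℂ) 1, W z = 0 → z ∈ Z := by
    intro z hz h0
    refine ⟨?_, h0⟩
    rw [← Metric.ball_union_sphere] at hz
    exact hz.resolve_right fun h => hs z h h0
  have hiso : ∀ z ∈ Z, ∀ᶠ y in 𝓝[≠] z, W y ≠ 0 := by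
    intro z hz
    obtain ⟨A, B, hAB, L, hL, hLv⟩ := hd z hz.1 hz.2
    refine hL.eventually_ne ⟨NNReal.mk (‖A‖ - ‖B‖)⁻¹ (inv_nonneg.2 (sub_pos.2 hAB).le),
      AddMonoidHomClass.antilipschitz_of_bound L fun v => ?_⟩
    rw [hLv, NNReal.coe_mk, ← div_eq_inv_mul, le_div_iff₀ (sub_pos.2 hAB), mul_comm]
    exact mul_norm_le_norm_add_conj A B v
  have hfin : Z.Finite := by
    by_contra hinf
    obtain ⟨z, hz, hacc⟩ := Set.Infinite.exists_accPt_of_subset_isCompact hinf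
      (isCompact_closedBall (0:ℂ) 1) (fun z hz => Metric.ball_subset_closedBall hz.1)
    have hfr : ∃ᶠ y in 𝓝[≠] z, y ∈ Z := accPt_iff_frequently_nhdsNE.1 hacc
    have hWz : W z = 0 := by
      by_contra hne
      have h1 : ∀ᶠ y in 𝓝[Metric.closedBall 0 1] z, W y ≠ 0 := (hc z hz).eventually_ne hne
      rw [eventually_nhdsWithin_iff] at h1
      obtain ⟨y, hy, hy'⟩ := (hfr.and_eventually (h1.filter_mono nhdsWithin_le_nhds)).exists
      exact hy' (Metric.ball_subset_closedBall hy.1) hy.2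
    obtain ⟨y, hy, hy'⟩ := (hfr.and_eventually (hiso z (hZ' z hz hWz))).exists
    exact hy' hy.2
  refine ⟨hfin, ?_⟩
  choose! A B hAB L hL hLv using hd
  let ℓ : ℂ → ℂ → ℂ := fun a z => A a * (z - a) + B a * (starRingEnd ℂ) (z - a)
  have hℓc : ∀ a, Continuous (ℓ a) := by
    intro a
    have : Continuous (starRingEnd ℂ) := Complex.continuous_conj
    simp only [ℓ]
    fun_prop
  have hℓ0 : ∀ a ∈ Z, ∀ z, z ≠ a → ℓ a z ≠ 0 := by
    intro a ha z hza
    have h1 := mul_norm_le_norm_add_conj (A a) (B a) (z - a)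
    have h2 : 0 < (‖A a‖ - ‖B a‖) * ‖z - a‖ :=
      mul_pos (sub_pos.2 (hAB a ha.1 ha.2)) (norm_pos_iff.2 (sub_ne_zero.2 hza))
    exact norm_pos_iff.1 (h2.trans_le h1)
  set s := hfin.toFinset with hsdef
  have hsZ : ∀ a, a ∈ s ↔ a ∈ Z := fun a => hfin.mem_toFinset
  let R : ℂ → ℂ := fun z => if z ∈ s then (∏ i ∈ s.erase z, ℓ i z)⁻¹ else W z / ∏ i ∈ s, ℓ i z
  have hRc : ContinuousOn R (Metric.closedBall 0 1) := by
    intro z hz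
    by_cases hzs : z ∈ s
    · have hzZ := (hsZ z).1 hzs
      have hball : Metric.ball (0:ℂ) 1 ∈ 𝓝 z := Metric.isOpen_ball.mem_nhds hzZ.1
      refine ContinuousAt.continuousWithinAt ?_
      rw [continuousAt_iff_punctured_nhds]
      have hlim : Tendsto (fun y => W y / ℓ z y) (𝓝[≠] z) (𝓝 1) := by
        have ho := (hL z hzZ.1 hzZ.2).isLittleO
        have hO : (fun y => y - z) =O[𝓝[≠] z] (ℓ z) := by
          refine Asymptotics.IsBigO.of_bound (‖A z‖ - ‖B z‖)⁻¹ (Eventually.of_forall fun y => ?_)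
          rw [← div_eq_inv_mul, le_div_iff₀ (sub_pos.2 (hAB z hzZ.1 hzZ.2)), mul_comm]
          exact mul_norm_le_norm_add_conj _ _ _
        have h1 := (ho.mono nhdsWithin_le_nhds).trans_isBigO hO
        have h2 := h1.tendsto_div_nhds_zero
        have h3 := h2.add_const 1
        rw [zero_add] at h3
        refine h3.congr' ?_
        filter_upwards [self_mem_nhdsWithin] with y hy
        have := hℓ0 z hzZ y hy
        rw [hLv z hzZ.1 hzZ.2, hzZ.2, sub_zero]
        change (W y - ℓ z y) / ℓ z y + 1 = _
        field_simp
        ring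
      have hlim2 : Tendsto (fun y => (∏ i ∈ s.erase z, ℓ i y)⁻¹) (𝓝[≠] z)
          (𝓝 (∏ i ∈ s.erase z, ℓ i z)⁻¹) := by
        refine Tendsto.inv₀ ?_ ?_
        · exact ((continuous_finsetProd _ fun i _ => hℓc i).tendsto z).mono_left nhdsWithin_le_nhds
        · exact Finset.prod_ne_zero_iff.2 fun i hi =>
            hℓ0 i ((hsZ i).1 (Finset.mem_of_mem_erase hi)) z (Finset.ne_of_mem_erase hi).symm
      have hRz : R z = 1 * (∏ i ∈ s.erase z, ℓ i z)⁻¹ := by simp [R, hzs]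
      rw [hRz]
      refine (hlim.mul hlim2).congr' ?_
      filter_upwards [hiso z hzZ] with y hy
      have hys : y ∉ s := fun h => hy ((hsZ y).1 h).2
      simp only [R, hys, if_false]
      rw [← Finset.mul_prod_erase s _ hzs]
      rw [div_mul_eq_div_div, div_eq_mul_inv (W y / ℓ z y)]
    · have hev : ∀ᶠ y in 𝓝 z, y ∉ s :=
        (s.finite_toSet.isClosed.isOpen_compl).mem_nhds hzs
      have : ContinuousWithinAt (fun y => W y / ∏ i ∈ s, ℓ i y) (Metric.closedBall 0 1) z := by
        refine (hc z hz).div (continuous_finsetProd _ fun i _ => hℓc i).continuousWithinAt ?_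
        exact Finset.prod_ne_zero_iff.2 fun i hi =>
            hℓ0 i ((hsZ i).1 hi) z (fun h => hzs (h ▸ hi))
      refine this.congr_of_eventuallyEq ?_ (by simp [R, hzs])
      filter_upwards [mem_nhdsWithin_of_mem_nhds hev] with y hy
      simp only [R]
      rw [if_neg hy]
  have hR0 : ∀ z ∈ Metric.closedBall (0:ℂ) 1, R z ≠ 0 := by
    intro z hz
    by_cases hzs : z ∈ s
    · simp only [R, hzs, if_true]
      exact inv_ne_zero (Finset.prod_ne_zero_iff.2 fun i hi =>
            hℓ0 i ((hsZ i).1 (Finset.mem_of_mem_erase hi)) z (Finset.ne_of_mem_erase hi).symm)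
    · simp only [R, hzs, if_false]
      refine div_ne_zero (fun h => hzs ((hsZ z).2 (hZ' z hz h))) ?_
      exact Finset.prod_ne_zero_iff.2 fun i hi => hℓ0 i ((hsZ i).1 hi) z (fun h => hzs (h ▸ hi))
  have hw := (hasWinding_zero_of_closedBall hRc hR0).mul (HasWinding.prod s
    (c := fun i t => ℓ i (Complex.exp (t * Complex.I))) fun i hi => by
      have hi' := (hsZ i).1 hi
      exact hasWinding_add_conj (hAB i hi'.1 hi'.2) (mem_ball_zero_iff.1 hi'.1))
  have hcard : Z.ncard = s.card := Set.ncard_eq_toFinset_card _ hfin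
  rw [hcard]
  rw [zero_add] at hw
  convert hw using 2 with t
  have hts : Complex.exp (t * Complex.I) ∉ s := by
    intro h
    have := mem_ball_zero_iff.1 ((hsZ _).1 h).1
    rw [Complex.norm_exp_ofReal_mul_I] at this
    exact lt_irrefl _ this
  simp only [R, hts, if_false]
  rw [div_mul_cancel₀]
  exact Finset.prod_ne_zero_iff.2 fun i hi => hℓ0 i ((hsZ i).1 hi) _ (fun h => hts (h ▸ hi))

/-- An `l`-periodic `C¹` arc-length parametrization of a Jordan curve. -/
structure IsUnitJordan (g : ℝ → ℂ) (l : ℝ) : Prop where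
  pos : 0 < l
  contDiff : ContDiff ℝ 1 g
  periodic : Function.Periodic g l
  unit : ∀ s, ‖deriv g s‖ = 1
  injOn : InjOn g (Ico 0 l)

/-- The mean of `g'` over the segment from `s` to `s + h`. -/
noncomputable def avgDeriv (g : ℝ → ℂ) (s h : ℝ) : ℂ := ∫ x in (0:ℝ)..1, deriv g (s + h * x)

/-- A continuous positive multiple of the chord from `g s` to `g (s + h)` for `0 < h < l`. -/
noncomputable def chord (g : ℝ → ℂ) (l s h : ℝ) : ℂ := avgDeriv g s h - avgDeriv g s (h - l)

namespace IsUnitJordan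

variable {g : ℝ → ℂ} {l : ℝ}

theorem continuous_deriv (hg : IsUnitJordan g l) : Continuous (deriv g) :=
  hg.contDiff.continuous_deriv le_rfl

theorem hasDerivAt (hg : IsUnitJordan g l) (s : ℝ) : HasDerivAt g (deriv g s) s :=
  ((hg.contDiff.differentiable one_ne_zero) s).hasDerivAt

theorem deriv_periodic (hg : IsUnitJordan g l) : Function.Periodic (deriv g) l := by
  intro s
  have h1 : (fun x => g (x + l)) = g := funext hg.periodic
  have h2 := deriv_comp_add_const g l s
  rw [h1] at h2
  exact h2.symm

theorem exists_add_zsmul_eq (hg : IsUnitJordan g l) {s t : ℝ} (h : g s = g t) :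
    ∃ n : ℤ, t = s + n * l := by
  have hm : ∀ s, g (toIcoMod hg.pos 0 s) = g s := fun s => by
    rw [← self_sub_toIcoDiv_zsmul]; exact hg.periodic.sub_zsmul_eq _
  have h0 : ∀ s, toIcoMod hg.pos 0 s ∈ Ico 0 l := fun s => by
    simpa using toIcoMod_mem_Ico hg.pos 0 s
  have h1 := hg.injOn (h0 s) (h0 t) (by rw [hm, hm, h])
  rw [← self_sub_toIcoDiv_zsmul, ← self_sub_toIcoDiv_zsmul] at h1
  refine ⟨toIcoDiv hg.pos 0 t - toIcoDiv hg.pos 0 s, ?_⟩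
  simp only [zsmul_eq_mul] at h1
  push_cast
  linarith

theorem add_ne (hg : IsUnitJordan g l) (s : ℝ) {h : ℝ} (h0 : 0 < h) (hl : h < l) :
    g (s + h) ≠ g s := by
  intro he
  obtain ⟨n, hn⟩ := hg.exists_add_zsmul_eq he.symm
  have hn' : h = n * l := by linarith
  have hl0 := hg.pos
  rcases le_or_gt n 0 with h | h
  · have : (n : ℝ) ≤ 0 := by exact_mod_cast h
    nlinarith
  · have : (1 : ℝ) ≤ n := by exact_mod_cast h
    nlinarith

theorem continuous_avgDeriv (hg : IsUnitJordan g l) :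
    Continuous fun p : ℝ × ℝ => avgDeriv g p.1 p.2 := by
  unfold avgDeriv
  refine intervalIntegral.continuous_parametric_intervalIntegral_of_continuous' ?_ 0 1
  have := hg.continuous_deriv
  fun_prop

theorem mul_avgDeriv (hg : IsUnitJordan g l) (s h : ℝ) :
    (h : ℂ) * avgDeriv g s h = g (s + h) - g s := by
  have h1 := intervalIntegral.smul_integral_comp_add_mul (a := 0) (b := 1) (deriv g) h s
  have h2 := intervalIntegral.integral_deriv_eq_sub' (a := s) (b := s + h) g rfl
    (fun x _ => (hg.hasDerivAt x).differentiableAt) hg.continuous_deriv.continuousOn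
  rw [avgDeriv, ← h2, ← Complex.real_smul, h1]
  simp

theorem continuous_chord (hg : IsUnitJordan g l) :
    Continuous fun p : ℝ × ℝ => chord g l p.1 p.2 := by
  unfold chord
  exact hg.continuous_avgDeriv.sub
    (hg.continuous_avgDeriv.comp (g := fun p : ℝ × ℝ => avgDeriv g p.1 p.2)
      (f := fun p : ℝ × ℝ => (p.1, p.2 - l)) (by fun_prop))

theorem mul_chord (hg : IsUnitJordan g l) (s h : ℝ) :
    (h : ℂ) * (l - h) * chord g l s h = l * (g (s + h) - g s) := by
  have h1 := hg.mul_avgDeriv s h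
  have h2 := hg.mul_avgDeriv s (h - l)
  have h3 : g (s + (h - l)) = g (s + h) := by
    rw [← hg.periodic (s + (h - l))]; congr 1; ring
  rw [h3] at h2
  push_cast at h2
  rw [chord]
  linear_combination ((l : ℂ) - h) * h1 + h * h2

theorem chord_zero (hg : IsUnitJordan g l) (s : ℝ) : chord g l s 0 = deriv g s := by
  have h2 := hg.mul_avgDeriv s (0 - l)
  have h3 : g (s + (0 - l)) = g s := by
    rw [← hg.periodic (s + (0 - l))]; congr 1; ring
  have hl : ((0 - l : ℝ) : ℂ) ≠ 0 := by
    have := hg.pos.ne'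
    simpa using this
  rw [h3, sub_self, mul_eq_zero, or_iff_right hl] at h2
  rw [chord, h2]
  simp [avgDeriv]

theorem chord_period (hg : IsUnitJordan g l) (s : ℝ) : chord g l s l = -deriv g s := by
  have h2 := hg.mul_avgDeriv s l
  have hl : (l : ℂ) ≠ 0 := by exact_mod_cast hg.pos.ne'
  rw [hg.periodic, sub_self, mul_eq_zero, or_iff_right hl] at h2
  rw [chord, h2]
  simp [avgDeriv]

theorem chord_ne_zero (hg : IsUnitJordan g l) (s : ℝ) {h : ℝ} (hh : h ∈ Icc 0 l) :
    chord g l s h ≠ 0 := by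
  have hd : deriv g s ≠ 0 := norm_pos_iff.1 (by rw [hg.unit]; exact one_pos)
  rcases eq_or_lt_of_le hh.1 with rfl | h0
  · rwa [hg.chord_zero]
  rcases eq_or_lt_of_le hh.2 with rfl | h1
  · rwa [hg.chord_period, neg_ne_zero]
  intro hc
  have := hg.mul_chord s h
  rw [hc, mul_zero, eq_comm, mul_eq_zero, sub_eq_zero] at this
  exact this.elim (by exact_mod_cast hg.pos.ne') (hg.add_ne s h0 h1)

theorem chord_add_sub (hg : IsUnitJordan g l) (s : ℝ) {h : ℝ} (hh : h ∈ Icc 0 l) :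
    chord g l (s + h) (l - h) = -chord g l s h := by
  rcases eq_or_lt_of_le hh.1 with rfl | h0
  · simp [hg.chord_zero, hg.chord_period]
  rcases eq_or_lt_of_le hh.2 with rfl | h1
  · simp [hg.chord_zero, hg.chord_period, hg.deriv_periodic s]
  have e1 := hg.mul_chord s h
  have e2 := hg.mul_chord (s + h) (l - h)
  have e3 : g (s + h + (l - h)) = g s := by rw [← hg.periodic s]; congr 1; ring
  rw [e3] at e2
  push_cast at e2
  have hne : (h : ℂ) * (l - h) ≠ 0 := by
    refine mul_ne_zero (by exact_mod_cast h0.ne') ?_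
    exact_mod_cast (sub_pos.2 h1).ne'
  refine mul_left_cancel₀ hne ?_
  linear_combination e2 + e1

theorem log_neg_I_mul_chord (hg : IsUnitJordan g l) {s₀ : ℝ} (hmin : ∀ s, (g s₀).im ≤ (g s).im)
    {h : ℝ} (hh : h ∈ Icc 0 l) (h1 : deriv g s₀ = 1) :
    -Complex.I * chord g l s₀ h ∈ Complex.slitPlane := by
  have hne := hg.chord_ne_zero s₀ hh
  have him : 0 ≤ (chord g l s₀ h).im := by
    rcases eq_or_lt_of_le hh.1 with rfl | hh0
    · simp [hg.chord_zero, h1]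
    rcases eq_or_lt_of_le hh.2 with rfl | hh1
    · simp [hg.chord_period, h1]
    have e := congrArg Complex.im (hg.mul_chord s₀ h)
    have e' : h * (l - h) * (chord g l s₀ h).im = l * ((g (s₀ + h)).im - (g s₀).im) := by
      have hc : (h : ℂ) * (l - h) = ((h * (l - h) : ℝ) : ℂ) := by push_cast; ring
      rw [hc, Complex.im_ofReal_mul, Complex.im_ofReal_mul, Complex.sub_im] at e
      exact e
    have : 0 ≤ h * (l - h) * (chord g l s₀ h).im := by
      rw [e']; exact mul_nonneg hg.pos.le (sub_nonneg.2 (hmin _))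
    exact nonneg_of_mul_nonneg_right this (mul_pos hh0 (sub_pos.2 hh1))
  rw [Complex.mem_slitPlane_iff]
  by_cases h0 : (chord g l s₀ h).re = 0
  · left
    have : (chord g l s₀ h).im ≠ 0 := fun hi => hne (Complex.ext h0 hi)
    simpa using lt_of_le_of_ne him this.symm
  · right; simpa using h0

/-- **Umlaufsatz**: the tangent of a Jordan curve that is positively oriented at a lowest point
turns by `2π`. -/
theorem exists_log_deriv (hg : IsUnitJordan g l) {s₀ : ℝ} (hmin : ∀ s, (g s₀).im ≤ (g s).im)
    (h1 : deriv g s₀ = 1) :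
    ∃ Θ : ℝ → ℂ, Continuous Θ ∧ (∀ s, Complex.exp (Θ s) = deriv g s) ∧
      ∀ s, Θ (s + l) = Θ s + 2 * π * Complex.I := by
  have hl := hg.pos
  have hc : Continuous fun p : ℝ × ℝ => chord g l p.1 (projIcc 0 l hl.le p.2 : ℝ) :=
    hg.continuous_chord.comp (f := fun p : ℝ × ℝ => (p.1, (projIcc 0 l hl.le p.2 : ℝ))) (by fun_prop)
  obtain ⟨Λ, hΛ, hexp⟩ := exists_continuous_log hc (fun p => hg.chord_ne_zero p.1 (projIcc 0 l hl.le p.2).2)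
  have hΛe : ∀ s, ∀ h ∈ Icc 0 l, Complex.exp (Λ (s, h)) = chord g l s h := by
    intro s h hh
    rw [hexp, projIcc_of_mem hl.le hh]
  have hmem0 : (0:ℝ) ∈ Icc 0 l := ⟨le_rfl, hl.le⟩
  have hmeml : l ∈ Icc 0 l := ⟨hl.le, le_rfl⟩
  have e1 : Λ (s₀, l) - Λ (s₀, 0) = π * Complex.I := by
    have := exp_lift_const (s := Icc 0 l) (c := Complex.I) isPreconnected_Icc
      (Λ := fun h => Λ (s₀, h) - Complex.log (-Complex.I * chord g l s₀ h))
      ((hΛ.comp (by fun_prop)).continuousOn.sub (ContinuousOn.clog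
        (continuous_const.mul (hg.continuous_chord.comp (f := fun h => (s₀, h))
          (by fun_prop))).continuousOn
        (fun h hh => hg.log_neg_I_mul_chord hmin hh h1)))
      (fun h hh => by
        have hne := hg.chord_ne_zero s₀ hh
        rw [Complex.exp_sub, hΛe _ _ hh, Complex.exp_log (by simpa using hne)]
        field_simp
        simp)
      hmem0 hmeml
    simp only [hg.chord_zero, hg.chord_period, h1, mul_one, mul_neg, neg_neg, Complex.log_I,
      Complex.log_neg_I] at this
    linear_combination -this
  have e2 : Λ (s₀ + l, 0) - Λ (s₀, l) = Λ (s₀, l) - Λ (s₀, 0) := by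
    have := exp_lift_const (s := Icc 0 l) (c := -1) isPreconnected_Icc
      (Λ := fun h => Λ (s₀ + h, l - h) - Λ (s₀, h))
      ((hΛ.comp (by fun_prop)).sub (hΛ.comp (by fun_prop))).continuousOn
      (fun h hh => by
        have hne := hg.chord_ne_zero s₀ hh
        rw [Complex.exp_sub, hΛe _ _ hh, hΛe _ _ ⟨sub_nonneg.2 hh.2, sub_le_self _ hh.1⟩,
          hg.chord_add_sub s₀ hh]
        field_simp)
      hmeml hmem0
    simpa using this
  refine ⟨fun s => Λ (s, 0), hΛ.comp (by fun_prop), fun s => by rw [hΛe _ _ hmem0, hg.chord_zero],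
    fun s => ?_⟩
  have := exp_lift_const (s := univ) (c := 1) isPreconnected_univ
    (Λ := fun s => Λ (s + l, 0) - Λ (s, 0))
    ((hΛ.comp (by fun_prop)).sub (hΛ.comp (by fun_prop))).continuousOn
    (fun s _ => by
      rw [Complex.exp_sub, hΛe _ _ hmem0, hΛe _ _ hmem0, hg.chord_zero, hg.chord_zero,
        hg.deriv_periodic]
      exact div_self (norm_pos_iff.1 (by rw [hg.unit]; exact one_pos)))
    (mem_univ s) (mem_univ s₀)
  linear_combination this + e2 + 2 * e1

/-- A Jordan curve winds once around the points just above a lowest point. -/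
theorem exists_log_sub (hg : IsUnitJordan g l) {s₀ : ℝ} (hmin : ∀ s, (g s₀).im ≤ (g s).im)
    (h1 : deriv g s₀ = 1) :
    ∃ ε₁ > (0:ℝ), ∀ ε ∈ Ioc 0 ε₁, ∃ Λ : ℝ → ℂ, Continuous Λ ∧
      (∀ s, Complex.exp (Λ s) = g s - (g s₀ + ε * Complex.I)) ∧
      ∀ s, Λ (s + l) = Λ s + 2 * π * Complex.I := by
  have hl := hg.pos
  have hlc : (l : ℂ) ≠ 0 := by exact_mod_cast hl.ne'
  have hcc : Continuous fun h => chord g l s₀ h :=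
    hg.continuous_chord.comp (f := fun h => (s₀, h)) (by fun_prop)
  have hcinv : ContinuousOn (fun h => (chord g l s₀ h)⁻¹) (Icc 0 l) :=
    hcc.continuousOn.inv₀ fun h hh => hg.chord_ne_zero s₀ hh
  have hmem0 : (0:ℝ) ∈ Icc 0 l := ⟨le_rfl, hl.le⟩
  have hmeml : l ∈ Icc 0 l := ⟨hl.le, le_rfl⟩
  -- the curve is a product of two factors in slit planes
  have hslit : ∃ ε₁ > (0:ℝ), ∀ ε ∈ Ioc 0 ε₁, ∀ h ∈ Icc 0 l,
      ((h * (l - h) / l : ℝ) : ℂ) - ε * Complex.I * (chord g l s₀ h)⁻¹ ∈ Complex.slitPlane := by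
    obtain ⟨C, hC⟩ := isCompact_Icc.exists_bound_of_continuousOn hcinv
    have hS : IsCompact {h | h ∈ Icc 0 l ∧ ((chord g l s₀ h)⁻¹).re = 0} := by
      have : {h | h ∈ Icc 0 l ∧ ((chord g l s₀ h)⁻¹).re = 0} =
          Icc 0 l ∩ (fun h => ((chord g l s₀ h)⁻¹).re) ⁻¹' {0} := rfl
      rw [this]
      exact isCompact_Icc.of_isClosed_subset
        ((Complex.continuous_re.comp_continuousOn hcinv).preimage_isClosed_of_isClosed
          isClosed_Icc isClosed_singleton) inter_subset_left
    have hpos : ∀ h ∈ {h | h ∈ Icc 0 l ∧ ((chord g l s₀ h)⁻¹).re = 0}, 0 < h * (l - h) / l := by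
      rintro h ⟨hh, hre⟩
      rcases eq_or_lt_of_le hh.1 with rfl | hh0
      · simp [hg.chord_zero, h1] at hre
      rcases eq_or_lt_of_le hh.2 with rfl | hh1
      · simp [hg.chord_period, h1] at hre
      exact div_pos (mul_pos hh0 (sub_pos.2 hh1)) hl
    obtain ⟨σ, hσ, hσS⟩ : ∃ σ > (0:ℝ), ∀ h ∈ {h | h ∈ Icc 0 l ∧ ((chord g l s₀ h)⁻¹).re = 0},
        σ ≤ h * (l - h) / l := by
      rcases Set.eq_empty_or_nonempty {h | h ∈ Icc 0 l ∧ ((chord g l s₀ h)⁻¹).re = 0} with he | hne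
      · exact ⟨1, one_pos, fun h hh => by rw [he] at hh; exact hh.elim⟩
      · obtain ⟨x, hx, hxm⟩ := hS.exists_isMinOn hne (f := fun h => h * (l - h) / l)
          (by fun_prop)
        exact ⟨_, hpos x hx, fun h hh => hxm hh⟩
    refine ⟨σ / (|C| + 1), by positivity, fun ε hε h hh => ?_⟩
    rw [Complex.mem_slitPlane_iff]
    by_cases hre : ((chord g l s₀ h)⁻¹).re = 0
    · left
      have k1 := hσS h ⟨hh, hre⟩
      have k2 := (Complex.abs_im_le_norm _).trans (hC h hh)
      have k3 : ε * (|C| + 1) ≤ σ := by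
        have := hε.2
        rwa [le_div_iff₀ (by positivity)] at this
      have k4 : -(C) ≤ ((chord g l s₀ h)⁻¹).im := (abs_le.1 k2).1
      have k5 := le_abs_self C
      have : (((h * (l - h) / l : ℝ) : ℂ) - ε * Complex.I * (chord g l s₀ h)⁻¹).re =
          h * (l - h) / l + ε * ((chord g l s₀ h)⁻¹).im := by
        simp only [Complex.sub_re, Complex.ofReal_re, mul_assoc, Complex.re_ofReal_mul,
          Complex.I_mul_re]
        ring
      rw [this]
      nlinarith [hε.1]
    · right
      have : (((h * (l - h) / l : ℝ) : ℂ) - ε * Complex.I * (chord g l s₀ h)⁻¹).im =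
          -(ε * ((chord g l s₀ h)⁻¹).re) := by
        simp only [Complex.sub_im, Complex.ofReal_im, mul_assoc, Complex.im_ofReal_mul,
          Complex.I_mul_im]
        ring
      rw [this]
      exact neg_ne_zero.2 (mul_ne_zero hε.1.ne' hre)
  obtain ⟨ε₁, hε₁, hsl⟩ := hslit
  refine ⟨ε₁, hε₁, fun ε hε => ?_⟩
  have hεc : (ε : ℂ) ≠ 0 := by exact_mod_cast hε.1.ne'
  have hfac : ∀ h ∈ Icc 0 l, g (s₀ + h) - (g s₀ + ε * Complex.I) =
      Complex.I * (-Complex.I * chord g l s₀ h) *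
        (((h * (l - h) / l : ℝ) : ℂ) - ε * Complex.I * (chord g l s₀ h)⁻¹) := by
    intro h hh
    have hne := hg.chord_ne_zero s₀ hh
    have e := hg.mul_chord s₀ h
    have e2 : g (s₀ + h) - g s₀ = (h : ℂ) * (l - h) / l * chord g l s₀ h := by
      field_simp; linear_combination -e
    push_cast
    have e3 : Complex.I * (-Complex.I * chord g l s₀ h) = chord g l s₀ h := by
      linear_combination -(chord g l s₀ h) * Complex.I_mul_I
    rw [e3, mul_sub, ← sub_sub, e2]
    field_simp
  have hne0 : ∀ s, g s - (g s₀ + ε * Complex.I) ≠ 0 := by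
    intro s
    have hp : Function.Periodic (fun h => g (s₀ + h)) l := fun h => by
      simp only [← add_assoc]; exact hg.periodic _
    obtain ⟨h, hh, he⟩ := hp.exists_mem_Ico₀ hl (s - s₀)
    have he' : g s = g (s₀ + h) := by simpa using he
    have hh' : h ∈ Icc 0 l := Ico_subset_Icc_self hh
    rw [he', hfac h hh']
    exact mul_ne_zero (mul_ne_zero Complex.I_ne_zero
      (Complex.slitPlane_ne_zero (hg.log_neg_I_mul_chord hmin hh' h1)))
      (Complex.slitPlane_ne_zero (hsl ε hε h hh'))
  obtain ⟨Λ, hΛ, hexp⟩ := exists_continuous_log (X := ℝ)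
    (hg.contDiff.continuous.sub continuous_const) hne0
  refine ⟨Λ, hΛ, hexp, fun s => ?_⟩
  have e0 := exp_lift_const (s := univ) (c := 1) isPreconnected_univ
    (Λ := fun s => Λ (s + l) - Λ s)
    ((hΛ.comp (by fun_prop)).sub hΛ).continuousOn
    (fun s _ => by
      simp only [Complex.exp_sub, hexp, hg.periodic s, Pi.sub_apply]
      exact div_self (hne0 s))
    (mem_univ s) (mem_univ s₀)
  have e1 := exp_lift_const (s := Icc 0 l) (c := Complex.I) isPreconnected_Icc
      (Λ := fun h => Λ (s₀ + h) - Complex.log (-Complex.I * chord g l s₀ h) -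
        Complex.log (((h * (l - h) / l : ℝ) : ℂ) - ε * Complex.I * (chord g l s₀ h)⁻¹))
      (((hΛ.comp (by fun_prop)).continuousOn.sub (ContinuousOn.clog
        (continuous_const.mul hcc).continuousOn
        (fun h hh => hg.log_neg_I_mul_chord hmin hh h1))).sub (ContinuousOn.clog
          (ContinuousOn.sub (by fun_prop) (continuousOn_const.mul hcinv)) (fun h hh => hsl ε hε h hh)))
      (fun h hh => by
        have hne := hg.chord_ne_zero s₀ hh
        have hne2 := Complex.slitPlane_ne_zero (hsl ε hε h hh)
        rw [Complex.exp_sub, Complex.exp_sub, Complex.exp_log (by simpa using hne),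
          Complex.exp_log hne2, hexp, Pi.sub_apply, hfac h hh]
        have : -Complex.I * chord g l s₀ h ≠ 0 := by simpa using hne
        rw [mul_div_right_comm, mul_div_cancel_right₀ _ hne2, mul_div_cancel_right₀ _ this])
      hmem0 hmeml
  simp only [hg.chord_zero, hg.chord_period, h1, mul_one, mul_neg, neg_neg, Complex.log_I,
      Complex.log_neg_I, add_zero, sub_self, mul_zero, zero_mul, zero_div, Complex.ofReal_zero,
      inv_one, zero_sub, inv_neg] at e1
  rw [← mul_neg, Complex.log_ofReal_mul hε.1 (by simp), Complex.log_ofReal_mul hε.1 (by simp),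
    Complex.log_I, Complex.log_neg_I] at e1
  linear_combination e0 - e1

end IsUnitJordan

namespace IsUnitJordan

variable {g : ℝ → ℂ} {l : ℝ}

theorem deriv_mul_conj (hg : IsUnitJordan g l) (s : ℝ) :
    deriv g s * (starRingEnd ℂ) (deriv g s) = 1 := by
  rw [Complex.mul_conj, Complex.normSq_eq_norm_sq, hg.unit]; simp

/-- A Jordan curve does not meet its own normal segments of small length. -/
theorem exists_collar (hg : IsUnitJordan g l) :
    ∃ ε₀ > (0:ℝ), ∀ s s' ε : ℝ, ε ≠ 0 → |ε| ≤ ε₀ →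
      g s' ≠ g s + ε * Complex.I * deriv g s := by
  have hl := hg.pos
  have hcd : Continuous fun p : ℝ × ℝ => chord g l p.1 p.2 * (starRingEnd ℂ) (deriv g p.1) :=
    hg.continuous_chord.mul (Complex.continuous_conj.comp (hg.continuous_deriv.comp continuous_fst))
  let S : Set (ℝ × ℝ) := (Icc 0 l ×ˢ Icc 0 l) ∩
    {p | (chord g l p.1 p.2 * (starRingEnd ℂ) (deriv g p.1)).re = 0}
  have hS : IsCompact S := (isCompact_Icc.prod isCompact_Icc).inter_right
    (isClosed_eq (Complex.continuous_re.comp hcd) continuous_const)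
  have hpos : ∀ p ∈ S, 0 < ‖((p.2 * (l - p.2) / l : ℝ) : ℂ) * chord g l p.1 p.2‖ := by
    rintro ⟨s, h⟩ ⟨⟨-, hh⟩, hre⟩
    simp only [mem_ofPred_eq] at hre hh ⊢
    rcases eq_or_lt_of_le hh.1 with rfl | hh0
    · simp [hg.chord_zero, hg.deriv_mul_conj] at hre
    rcases eq_or_lt_of_le hh.2 with rfl | hh1
    · simp [hg.chord_period, hg.deriv_mul_conj] at hre
    have h3 : 0 < h * (l - h) / l := div_pos (mul_pos hh0 (sub_pos.2 hh1)) hl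
    exact norm_pos_iff.2 (mul_ne_zero (by exact_mod_cast h3.ne') (hg.chord_ne_zero s hh))
  obtain ⟨σ, hσ, hσS⟩ : ∃ σ > (0:ℝ), ∀ p ∈ S,
      σ ≤ ‖((p.2 * (l - p.2) / l : ℝ) : ℂ) * chord g l p.1 p.2‖ := by
    rcases S.eq_empty_or_nonempty with he | hne
    · exact ⟨1, one_pos, fun h hh => by rw [he] at hh; exact hh.elim⟩
    · obtain ⟨x, hx, hxm⟩ := hS.exists_isMinOn hne
        (f := fun p => ‖((p.2 * (l - p.2) / l : ℝ) : ℂ) * chord g l p.1 p.2‖)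
        (Continuous.continuousOn (((by fun_prop : Continuous fun p : ℝ × ℝ =>
          ((p.2 * (l - p.2) / l : ℝ) : ℂ)).mul hg.continuous_chord).norm))
      exact ⟨_, hpos x hx, fun h hh => hxm hh⟩
  refine ⟨σ / 2, half_pos hσ, fun s s' ε hε0 hε he => ?_⟩
  -- reduce to the fundamental domain
  obtain ⟨t, ht, hts⟩ : ∃ t ∈ Ico 0 l, g s = g t ∧ deriv g s = deriv g t := by
    have hp : Function.Periodic (fun h => (g h, deriv g h)) l := fun h => by
      simp only [hg.periodic h, hg.deriv_periodic h]
    obtain ⟨t, ht, e⟩ := hp.exists_mem_Ico₀ hl s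
    exact ⟨t, ht, by simpa using e⟩
  rw [hts.1, hts.2] at he
  have hp : Function.Periodic (fun h => g (t + h)) l := fun h => by
    simp only [← add_assoc]; exact hg.periodic _
  obtain ⟨h, hh, he'⟩ := hp.exists_mem_Ico₀ hl (s' - t)
  have he2 : g s' = g (t + h) := by simpa using he'
  rw [he2] at he
  have hlc : (l : ℂ) ≠ 0 := by exact_mod_cast hl.ne'
  have e3 : ((h * (l - h) / l : ℝ) : ℂ) * chord g l t h = ε * Complex.I * deriv g t := by
    have := hg.mul_chord t h
    rw [he] at this
    push_cast
    field_simp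
    linear_combination this
  have e4 : ((h * (l - h) / l : ℝ) : ℂ) * (chord g l t h * (starRingEnd ℂ) (deriv g t)) =
      ε * Complex.I := by
    linear_combination (starRingEnd ℂ) (deriv g t) * e3 + ε * Complex.I * hg.deriv_mul_conj t
  have e5 := congrArg Complex.re e4
  rw [Complex.re_ofReal_mul, Complex.re_ofReal_mul, Complex.I_re, mul_zero, mul_eq_zero] at e5
  rcases e5 with e5 | e5
  · rw [e5, Complex.ofReal_zero, zero_mul, eq_comm, mul_eq_zero] at e4
    exact e4.elim (by exact_mod_cast hε0) Complex.I_ne_zero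
  · have := hσS (t, h) ⟨⟨Ico_subset_Icc_self ht, Ico_subset_Icc_self hh⟩, e5⟩
    simp only at this
    rw [e3] at this
    simp only [norm_mul, Complex.norm_real, Complex.norm_I, mul_one, hg.unit,
      Real.norm_eq_abs] at this
    linarith

theorem exists_forall_norm_sub_le (hg : IsUnitJordan g l) (p : ℂ) :
    ∃ s, ∀ s', ‖p - g s‖ ≤ ‖p - g s'‖ := by
  obtain ⟨s, -, hs⟩ := (isCompact_Icc (a := 0) (b := l)).exists_isMinOn ⟨0, le_rfl, hg.pos.le⟩
    (f := fun s => ‖p - g s‖) (continuous_const.sub hg.contDiff.continuous).norm.continuousOn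
  refine ⟨s, fun s' => ?_⟩
  obtain ⟨t, ht, e⟩ := hg.periodic.exists_mem_Ico₀ hg.pos s'
  rw [e]
  exact hs (Ico_subset_Icc_self ht)

/-- Every point lies on the normal line at a nearest point of the curve. -/
theorem exists_normal (hg : IsUnitJordan g l) (p : ℂ) :
    ∃ s ε : ℝ, p = g s + ε * Complex.I * deriv g s ∧ ∀ s', |ε| ≤ ‖p - g s'‖ := by
  obtain ⟨s, hs⟩ := hg.exists_forall_norm_sub_le p
  have hd : HasDerivAt (fun t => ‖p - g t‖ ^ 2) (2 * inner ℝ (p - g s) (-deriv g s)) s :=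
    ((hg.hasDerivAt s).const_sub p).norm_sq
  have hmin : IsLocalMin (fun t => ‖p - g t‖ ^ 2) s := Eventually.of_forall fun t => by
    exact pow_le_pow_left₀ (norm_nonneg _) (hs t) 2
  have h0 := hmin.hasDerivAt_eq_zero hd
  have h1 : ((p - g s) * (starRingEnd ℂ) (deriv g s)).re = 0 := by
    rw [Complex.inner] at h0
    simp at h0 ⊢
    linarith
  have h2 : (p - g s) * (starRingEnd ℂ) (deriv g s) =
      (((p - g s) * (starRingEnd ℂ) (deriv g s)).im : ℂ) * Complex.I := by
    apply Complex.ext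
    · rw [h1]; simp
    · simp
  have h3 : p = g s + ((((p - g s) * (starRingEnd ℂ) (deriv g s)).im : ℝ) : ℂ) * Complex.I *
      deriv g s := by
    linear_combination -(deriv g s) * (-h2) - (p - g s) * hg.deriv_mul_conj s
  refine ⟨s, _, h3, fun s' => le_trans (le_of_eq ?_) (hs s')⟩
  have := congrArg norm h2
  simp only [norm_mul, Complex.norm_real, Complex.norm_I, mul_one, RCLike.norm_conj, hg.unit,
    Real.norm_eq_abs] at this
  rw [this]

end IsUnitJordan

namespace IsUnitJordan

variable {g : ℝ → ℂ} {l : ℝ}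

/-- The one-sided collar swept by the normal segments `g s + ε σ i g' s` with `0 < ε ≤ ε₀`. -/
def collar (g : ℝ → ℂ) (σ ε₀ : ℝ) : Set ℂ :=
  (fun p : ℝ × ℝ => g p.1 + ((σ * p.2 : ℝ) : ℂ) * Complex.I * deriv g p.1) '' (univ ×ˢ Ioc 0 ε₀)

theorem isPreconnected_collar (hg : IsUnitJordan g l) (σ ε₀ : ℝ) :
    IsPreconnected (collar g σ ε₀) := by
  refine (isPreconnected_univ.prod isPreconnected_Ioc).image _ (Continuous.continuousOn ?_)
  have h1 := hg.continuous_deriv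
  have h2 := hg.contDiff.continuous
  fun_prop

theorem subset_of_disjoint_frontier {N U : Set ℂ} (hN : IsPreconnected N) (hU : IsOpen U)
    (h : (N ∩ U).Nonempty) (hd : ∀ p ∈ N, p ∉ frontier U) : N ⊆ U := by
  refine hN.subset_of_closure_inter_subset hU h ?_
  rintro p ⟨hp, hpN⟩
  by_contra hpU
  exact hd p hpN (by rw [hU.frontier_eq]; exact ⟨hp, hpU⟩)

variable {s₀ : ℝ} {U : Set ℂ}

theorem disjoint_halfPlane_of_frontier_subset
    (hmin : ∀ s, (g s₀).im ≤ (g s).im) (hU : IsOpen U) (hb : Bornology.IsBounded U)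
    (hf : frontier U ⊆ range g) {p : ℂ} (hp : p.im < (g s₀).im) : p ∉ U := by
  intro hpU
  have hsub : {z : ℂ | z.im < (g s₀).im} ⊆ U := by
    refine subset_of_disjoint_frontier (convex_halfSpace_im_lt _).isPreconnected hU
      ⟨p, hp, hpU⟩ fun q hq hqf => ?_
    obtain ⟨s, rfl⟩ := hf hqf
    exact absurd (hmin s) (not_le.2 hq)
  obtain ⟨R, hR⟩ := hb.exists_norm_le
  have hmem : ((|R| + 1 : ℝ) : ℂ) + p.im * Complex.I ∈ U := by
    apply hsub
    simpa using hp
  have h1 := (Complex.abs_re_le_norm _).trans (hR _ hmem)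
  have h2 : (((|R| + 1 : ℝ) : ℂ) + p.im * Complex.I).re = |R| + 1 := by simp
  rw [h2] at h1
  have := le_abs_self (|R| + 1)
  have := le_abs_self R
  linarith

variable {ε₀ : ℝ}

theorem disjoint_collar_of_frontier_subset (hg : IsUnitJordan g l)
    (hmin : ∀ s, (g s₀).im ≤ (g s).im) (h1 : deriv g s₀ = 1) (hε₀ : 0 < ε₀)
    (hcol : ∀ s s' ε : ℝ, ε ≠ 0 → |ε| ≤ ε₀ → g s' ≠ g s + ε * Complex.I * deriv g s)
    (hU : IsOpen U) (hb : Bornology.IsBounded U) (hf : frontier U ⊆ range g) :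
    ∀ p ∈ collar g (-1) ε₀, p ∉ U := by
  intro p hp hpU
  have hsub : collar g (-1) ε₀ ⊆ U := by
    refine subset_of_disjoint_frontier (hg.isPreconnected_collar _ _) hU ⟨p, hp, hpU⟩ ?_
    rintro _ ⟨⟨s, ε⟩, ⟨-, hε⟩, rfl⟩ hq
    obtain ⟨s', hs'⟩ := hf hq
    refine hcol s s' (-1 * ε) (by simpa using hε.1.ne') ?_ hs'
    simpa [abs_of_pos hε.1] using hε.2
  refine disjoint_halfPlane_of_frontier_subset hmin hU hb hf
    (p := g s₀ + ((-1 * ε₀ : ℝ) : ℂ) * Complex.I * deriv g s₀) ?_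
    (hsub ⟨(s₀, ε₀), ⟨mem_univ _, hε₀, le_rfl⟩, rfl⟩)
  simpa [h1] using hε₀

theorem disjoint_range_of_frontier_subset (hg : IsUnitJordan g l)
    (hmin : ∀ s, (g s₀).im ≤ (g s).im) (h1 : deriv g s₀ = 1)
    (hU : IsOpen U) (hb : Bornology.IsBounded U) (hf : frontier U ⊆ range g) (s : ℝ) :
    g s ∉ U := by
  intro hs
  obtain ⟨ε₀, hε₀, hcol⟩ := hg.exists_collar
  have hc : Continuous fun ε : ℝ => g s + ((-1 * ε : ℝ) : ℂ) * Complex.I * deriv g s := by fun_prop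
  have h2 : ∀ᶠ ε in 𝓝 (0:ℝ), g s + ((-1 * ε : ℝ) : ℂ) * Complex.I * deriv g s ∈ U :=
    hc.continuousAt.eventually_mem (hU.mem_nhds (by simpa using hs))
  obtain ⟨ε, hε, hεU⟩ := (Filter.Eventually.and (Ioc_mem_nhdsGT hε₀)
    (nhdsWithin_le_nhds (s := Ioi 0) h2)).exists
  exact hg.disjoint_collar_of_frontier_subset hmin h1 hε₀ hcol hU hb hf _
    ⟨(s, ε), ⟨mem_univ _, hε⟩, rfl⟩ hεU

theorem collar_subset_of_frontier_subset (hg : IsUnitJordan g l)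
    (hmin : ∀ s, (g s₀).im ≤ (g s).im) (h1 : deriv g s₀ = 1) (hε₀ : 0 < ε₀)
    (hcol : ∀ s s' ε : ℝ, ε ≠ 0 → |ε| ≤ ε₀ → g s' ≠ g s + ε * Complex.I * deriv g s)
    (hU : IsOpen U) (hb : Bornology.IsBounded U) (hf : frontier U ⊆ range g) (hne : U.Nonempty) :
    collar g 1 ε₀ ⊆ U := by
  have hfn : (frontier U).Nonempty := nonempty_frontier_iff.2 ⟨hne, fun h => by
    rw [h] at hb; exact NormedSpace.unbounded_univ ℝ ℂ hb⟩
  obtain ⟨q, hq⟩ := hfn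
  obtain ⟨s, rfl⟩ := hf hq
  obtain ⟨p, hpU, hp⟩ := Metric.mem_closure_iff.1 (frontier_subset_closure hq) ε₀ hε₀
  obtain ⟨s', ε, hpe, hε⟩ := hg.exists_normal p
  have hεlt : |ε| ≤ ε₀ := by
    refine (hε s).trans ?_
    rw [dist_comm, dist_eq_norm] at hp
    exact hp.le
  rcases lt_trichotomy ε 0 with h0 | rfl | h0
  · refine absurd hpU (hg.disjoint_collar_of_frontier_subset hmin h1 hε₀ hcol hU hb hf p
      ⟨(s', -ε), ⟨mem_univ _, neg_pos.2 h0, ?_⟩, ?_⟩)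
    · rwa [abs_of_neg h0] at hεlt
    · simpa using hpe.symm
  · refine absurd hpU ?_
    rw [hpe]
    simpa using hg.disjoint_range_of_frontier_subset hmin h1 hU hb hf s'
  · refine subset_of_disjoint_frontier (hg.isPreconnected_collar _ _) hU
      ⟨p, ⟨(s', ε), ⟨mem_univ _, h0, ?_⟩, ?_⟩, hpU⟩ ?_
    · rwa [abs_of_pos h0] at hεlt
    · simpa using hpe.symm
    · rintro _ ⟨⟨s, ε⟩, ⟨-, hε⟩, rfl⟩ hq
      obtain ⟨s', hs'⟩ := hf hq
      refine hcol s s' (1 * ε) (by simpa using hε.1.ne') ?_ hs'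
      simpa [abs_of_pos hε.1] using hε.2

/-- There is at most one bounded domain with boundary contained in a Jordan curve. -/
theorem eq_of_frontier_subset (hg : IsUnitJordan g l)
    (hmin : ∀ s, (g s₀).im ≤ (g s).im) (h1 : deriv g s₀ = 1) {U V : Set ℂ}
    (hU : IsOpen U) (hUb : Bornology.IsBounded U) (hUf : frontier U ⊆ range g)
    (hUc : IsConnected U)
    (hV : IsOpen V) (hVb : Bornology.IsBounded V) (hVf : frontier V ⊆ range g)
    (hVc : IsConnected V) : U = V := by
  obtain ⟨ε₀, hε₀, hcol⟩ := hg.exists_collar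
  have hne : (collar g 1 ε₀).Nonempty := ⟨_, ⟨(0, ε₀), ⟨mem_univ _, hε₀, le_rfl⟩, rfl⟩⟩
  obtain ⟨p, hp⟩ := hne
  have hpU := hg.collar_subset_of_frontier_subset hmin h1 hε₀ hcol hU hUb hUf hUc.nonempty hp
  have hpV := hg.collar_subset_of_frontier_subset hmin h1 hε₀ hcol hV hVb hVf hVc.nonempty hp
  refine Subset.antisymm ?_ ?_
  · refine subset_of_disjoint_frontier hUc.isPreconnected hV ⟨p, hpU, hpV⟩ fun q hq hqf => ?_
    obtain ⟨s, rfl⟩ := hVf hqf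
    exact hg.disjoint_range_of_frontier_subset hmin h1 hU hUb hUf s hq
  · refine subset_of_disjoint_frontier hVc.isPreconnected hU ⟨p, hpV, hpU⟩ fun q hq hqf => ?_
    obtain ⟨s, rfl⟩ := hUf hqf
    exact hg.disjoint_range_of_frontier_subset hmin h1 hV hVb hVf s hq

end IsUnitJordan

theorem HasWinding.sub_of_norm_lt {F : ℝ → ℂ} (hF : Continuous F)
    (hFp : ∀ t, F (t + 2 * π) = F t) {p p' : ℂ} {n : ℤ}
    (h : ∀ t, ‖p' - p‖ < ‖F t - p‖) (hw : HasWinding (fun t => F t - p) n) :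
    HasWinding (fun t => F t - p') n := by
  have hne : ∀ t, F t - p ≠ 0 := fun t => norm_pos_iff.1 ((norm_nonneg _).trans_lt (h t))
  have h2 : HasWinding (fun t => 1 + (p - p') / (F t - p)) 0 := by
    refine hasWinding_zero_of_re_pos ?_ (fun t => by simp only [hFp]) fun t => ?_
    · exact continuous_const.add (continuous_const.div (hF.sub continuous_const) hne)
    · have h3 : ‖(p - p') / (F t - p)‖ < 1 := by
        rw [norm_div, div_lt_one (norm_pos_iff.2 (hne t)), norm_sub_rev]; exact h t
      have h4 := (abs_lt.1 ((Complex.abs_re_le_norm _).trans_lt h3)).1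
      rw [Complex.add_re, Complex.one_re]
      linarith
  have h3 := hw.mul h2
  rw [add_zero] at h3
  convert h3 using 2 with t
  rw [mul_add, mul_div_cancel₀ _ (hne t)]
  ring

/-- A sense-preserving local diffeomorphism of the disk whose boundary values run once along a
Jordan curve is a bijection onto the domain bounded by the curve. -/
theorem IsUnitJordan.bijOn_of_boundary {g : ℝ → ℂ} {l s₀ : ℝ} (hg : IsUnitJordan g l)
    (hmin : ∀ s, (g s₀).im ≤ (g s).im) (h1 : deriv g s₀ = 1) {D : Set ℂ}
    (hD : IsOpen D) (hDb : Bornology.IsBounded D) (hDf : frontier D ⊆ range g)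
    (hDc : IsConnected D) {f : ℝ → ℝ} (hf : Continuous f) (hfp : ∀ t, f (t + 2 * π) = f t + l)
    {W : ℂ → ℂ} (hc : ContinuousOn W (Metric.closedBall 0 1))
    (hb : ∀ t : ℝ, W (Complex.exp (t * Complex.I)) = g (f t))
    (hd : ∀ z ∈ Metric.ball (0:ℂ) 1, ∃ A B : ℂ, ‖B‖ < ‖A‖ ∧ ∃ L : ℂ →L[ℝ] ℂ,
      HasStrictFDerivAt W L z ∧ ∀ v, L v = A * v + B * (starRingEnd ℂ) v) :
    BijOn W (Metric.ball 0 1) D := by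
  have hsph : ∀ z ∈ Metric.sphere (0:ℂ) 1, ∃ t : ℝ, W z = g (f t) := by
    intro z hz
    refine ⟨Complex.arg z, ?_⟩
    rw [← hb]
    have := Complex.norm_mul_exp_arg_mul_I z
    rw [mem_sphere_zero_iff_norm.1 hz] at this
    rw [Complex.ofReal_one, one_mul] at this
    rw [this]
  set Ω := W '' Metric.ball (0:ℂ) 1 with hΩ
  have hΩo : IsOpen Ω := by
    rw [isOpen_iff_mem_nhds]
    rintro _ ⟨z, hz, rfl⟩
    obtain ⟨A, B, hAB, L, hL, hLv⟩ := hd z hz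
    have hinj : Function.Injective (L : ℂ →ₗ[ℝ] ℂ) := by
      rw [injective_iff_map_eq_zero]
      intro v hv
      have h2 := mul_norm_le_norm_add_conj A B v
      have hv' : L v = 0 := hv
      rw [← hLv, hv', norm_zero] at h2
      have : ‖v‖ ≤ 0 := by
        by_contra h
        exact absurd (mul_pos (sub_pos.2 hAB) (not_le.1 h)) (not_lt.2 h2)
      exact norm_le_zero_iff.1 this
    have := hL.map_nhds_eq_of_surj
      (LinearMap.range_eq_top.2 (LinearMap.injective_iff_surjective.1 hinj))
    rw [← this]
    exact image_mem_map (Metric.isOpen_ball.mem_nhds hz)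
  have hK : IsCompact (W '' Metric.closedBall 0 1) := (isCompact_closedBall 0 1).image_of_continuousOn hc
  have hsub : Ω ⊆ W '' Metric.closedBall 0 1 := image_mono Metric.ball_subset_closedBall
  have hΩb : Bornology.IsBounded Ω := hK.isBounded.subset hsub
  have hΩf : frontier Ω ⊆ range g := by
    intro p hp
    rw [hΩo.frontier_eq] at hp
    obtain ⟨z, hz, rfl⟩ := closure_minimal hsub hK.isClosed hp.1
    have hzs : z ∈ Metric.sphere (0:ℂ) 1 := by
      by_contra h
      refine hp.2 ⟨z, ?_, rfl⟩
      rw [← Metric.closedBall_sdiff_sphere]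
      exact ⟨hz, h⟩
    obtain ⟨t, ht⟩ := hsph z hzs
    exact ⟨f t, ht.symm⟩
  have hΩc : IsConnected Ω := ((convex_ball (0:ℂ) 1).isConnected ⟨0, by simp⟩).image _
    (hc.mono Metric.ball_subset_closedBall)
  have hΩD : Ω = D := hg.eq_of_frontier_subset hmin h1 hΩo hΩb hΩf hΩc hD hDb hDf hDc
  -- winding numbers of the boundary curve count preimages
  have hFp : ∀ t, g (f (t + 2 * π)) = g (f t) := fun t => by rw [hfp]; exact hg.periodic _
  have hFc : Continuous fun t => g (f t) := hg.contDiff.continuous.comp hf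
  have hcount : ∀ p ∈ Ω, HasWinding (fun t => g (f t) - p)
      {z | z ∈ Metric.ball (0:ℂ) 1 ∧ W z - p = 0}.ncard := by
    intro p hp
    have := (hasWinding_ncard_zeros (W := fun z => W z - p) (hc.sub continuousOn_const)
      (fun z hz h => ?_) (fun z hz _ => ?_)).2
    · simpa only [hb] using this
    · obtain ⟨t, ht⟩ := hsph z hz
      rw [sub_eq_zero] at h
      exact hg.disjoint_range_of_frontier_subset hmin h1 hΩo hΩb hΩf (f t) (by rwa [← ht, h])
    · obtain ⟨A, B, hAB, L, hL, hLv⟩ := hd z hz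
      exact ⟨A, B, hAB, L, hL.hasFDerivAt.sub_const p, hLv⟩
  have hrad : ∀ p ∈ Ω, ∃ d > 0, ∀ s, d ≤ ‖g s - p‖ := by
    intro p hp
    obtain ⟨s, hs⟩ := hg.exists_forall_norm_sub_le p
    refine ⟨‖p - g s‖, norm_pos_iff.2 fun h => ?_, fun s' => by rw [norm_sub_rev (g s')]; exact hs s'⟩
    rw [sub_eq_zero] at h
    exact hg.disjoint_range_of_frontier_subset hmin h1 hΩo hΩb hΩf s (by rwa [← h])
  let V : Set ℂ := {p | p ∈ Ω ∧ HasWinding (fun t => g (f t) - p) 1}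
  have hVo : IsOpen V := by
    rw [Metric.isOpen_iff]
    rintro p ⟨hp, hw⟩
    obtain ⟨d, hd0, hds⟩ := hrad p hp
    obtain ⟨e, he, heΩ⟩ := Metric.isOpen_iff.1 hΩo p hp
    refine ⟨min d e, lt_min hd0 he, fun p' hp' => ?_⟩
    rw [mem_ball_iff_norm, lt_min_iff] at hp'
    exact ⟨heΩ (mem_ball_iff_norm.2 hp'.2),
      hw.sub_of_norm_lt hFc hFp fun t => hp'.1.trans_le (hds _)⟩
  have hVne : V.Nonempty := by
    obtain ⟨ε₀, hε₀, hcol⟩ := hg.exists_collar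
    obtain ⟨ε₁, hε₁, hlog⟩ := hg.exists_log_sub hmin h1
    have hmem : g s₀ + (min ε₀ ε₁ : ℝ) * Complex.I ∈ Ω :=
      hg.collar_subset_of_frontier_subset hmin h1 hε₀ hcol hΩo hΩb hΩf hΩc.nonempty
        ⟨(s₀, min ε₀ ε₁), ⟨mem_univ _, lt_min hε₀ hε₁, min_le_left _ _⟩, by simp [h1]⟩
    obtain ⟨Λ, hΛ, hexp, hΛp⟩ := hlog (min ε₀ ε₁) ⟨lt_min hε₀ hε₁, min_le_right _ _⟩
    refine ⟨_, hmem, fun t => Λ (f t), hΛ.comp hf, fun t => hexp _, fun t => ?_⟩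
    simp only [hfp, hΛp]; simp
  have hVall : Ω ⊆ V := by
    refine hΩc.isPreconnected.subset_of_closure_inter_subset hVo ?_ ?_
    · obtain ⟨p, hp⟩ := hVne
      exact ⟨p, hp.1, hp⟩
    · rintro p ⟨hpc, hp⟩
      obtain ⟨d, hd0, hds⟩ := hrad p hp
      obtain ⟨q, hq, hqd⟩ := Metric.mem_closure_iff.1 hpc (d / 2) (half_pos hd0)
      refine ⟨hp, hq.2.sub_of_norm_lt hFc hFp fun t => ?_⟩
      rw [dist_eq_norm] at hqd
      have h3 := hds (f t)
      have h4 : ‖g (f t) - p‖ ≤ ‖g (f t) - q‖ + ‖p - q‖ := by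
        have := norm_sub_le (g (f t) - q) (p - q)
        simpa using this
      linarith
  rw [← hΩD]
  refine InjOn.bijOn_image fun z hz z' hz' he => ?_
  have hw := (hcount _ ⟨z, hz, rfl⟩).unique (hVall ⟨z, hz, rfl⟩).2
  have hn : {x | x ∈ Metric.ball (0:ℂ) 1 ∧ W x - W z = 0}.ncard = 1 := by exact_mod_cast hw
  obtain ⟨a, ha⟩ := Set.ncard_eq_one.1 hn
  have k1 : z ∈ ({a} : Set ℂ) := ha ▸ ⟨hz, sub_self _⟩
  have k2 : z' ∈ ({a} : Set ℂ) := ha ▸ ⟨hz', sub_eq_zero.2 he.symm⟩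
  rw [mem_singleton_iff.1 k1, mem_singleton_iff.1 k2]

/-- The holomorphic half of the Poisson extension. -/
noncomputable def herglotzExt (F : ℝ → ℂ) (z : ℂ) : ℂ :=
  (2:ℂ)⁻¹ * Real.circleAverage
    (fun ζ => herglotzRieszKernel 0 z ζ • F (Complex.arg ζ)) 0 1

/-- The derivative of the holomorphic half of the Poisson extension. -/
noncomputable def herglotzDeriv (F : ℝ → ℂ) (z : ℂ) : ℂ :=
  (2 * π : ℂ)⁻¹ * ∫ t in (0:ℝ)..(2 * π),
    Complex.exp (t * Complex.I) / (Complex.exp (t * Complex.I) - z) ^ 2 * F t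

theorem Function.Periodic.comp_arg_exp {F : ℝ → ℂ} (hF : Function.Periodic F (2 * π)) (t : ℝ) :
    F (Complex.arg (Complex.exp (t * Complex.I))) = F t := by
  rw [Complex.arg_exp_mul_I, ← self_sub_toIocDiv_zsmul]
  exact hF.sub_zsmul_eq _

theorem exp_ne_of_mem_ball {z : ℂ} (hz : z ∈ Metric.ball (0:ℂ) 1) (t : ℝ) :
    Complex.exp (t * Complex.I) - z ≠ 0 := by
  intro h
  rw [sub_eq_zero] at h
  rw [← h, mem_ball_zero_iff, Complex.norm_exp_ofReal_mul_I] at hz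
  exact lt_irrefl _ hz

theorem circleIntegrable_comp_arg {F : ℝ → ℂ} (hc : Continuous F)
    (hF : Function.Periodic F (2 * π)) :
    CircleIntegrable (fun ζ => F (Complex.arg ζ)) 0 1 := by
  have : (fun t => F (Complex.arg (circleMap 0 1 t))) = F := by
    ext t; simp [circleMap, hF.comp_arg_exp t]
  rw [CircleIntegrable, this]
  exact hc.intervalIntegrable _ _

theorem hasDerivAt_herglotzExt {F : ℝ → ℂ} (hc : Continuous F)
    (hF : Function.Periodic F (2 * π)) {z : ℂ} (hz : z ∈ Metric.ball (0:ℂ) 1) :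
    HasDerivAt (herglotzExt F) (herglotzDeriv F z) z := by
  have h := (hasDerivAt_circleAverage_herglotzRieszKernel_smul
    (circleIntegrable_comp_arg hc hF) hz).const_mul (2:ℂ)⁻¹
  refine h.congr_deriv ?_
  symm
  rw [herglotzDeriv, Real.circleAverage_def]
  simp only [circleMap, zero_add, Complex.ofReal_one, one_mul, hF.comp_arg_exp, smul_eq_mul]
  rw [Complex.real_smul, ← mul_assoc, mul_comm (2:ℂ)⁻¹, mul_assoc, ← intervalIntegral.integral_const_mul,
    ← intervalIntegral.integral_const_mul, ← intervalIntegral.integral_const_mul]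
  push_cast
  refine intervalIntegral.integral_congr fun t _ => ?_
  ring

theorem normSq_exp_sub (r t τ : ℝ) :
    Complex.normSq (Complex.exp (t * Complex.I) - r * Complex.exp (τ * Complex.I)) =
      1 - 2 * r * Real.cos (t - τ) + r ^ 2 := by
  rw [Complex.exp_mul_I, Complex.exp_mul_I, ← Complex.ofReal_cos, ← Complex.ofReal_sin,
    ← Complex.ofReal_cos, ← Complex.ofReal_sin, Complex.normSq_apply]
  simp only [Complex.sub_re, Complex.add_re, Complex.ofReal_re, Complex.mul_re, Complex.I_re,
    mul_zero, Complex.ofReal_im, Complex.I_im, mul_one, sub_self, add_zero, Complex.add_im,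
    Complex.mul_im, zero_add, zero_mul, sub_zero, Complex.sub_im, Real.cos_sub]
  have h1 := Real.sin_sq_add_cos_sq t
  have h2 := Real.sin_sq_add_cos_sq τ
  linear_combination h1 + r ^ 2 * h2

theorem poissonKer_eq (r t τ : ℝ) :
    poissonKer r (t - τ) = (1 - r ^ 2) / (2 * π *
      Complex.normSq (Complex.exp (t * Complex.I) - r * Complex.exp (τ * Complex.I))) := by
  rw [poissonKer, normSq_exp_sub]

theorem poissonKer_norm_arg (z : ℂ) (t : ℝ) :
    poissonKer ‖z‖ (t - Complex.arg z) = (1 - ‖z‖ ^ 2) / (2 * π *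
      Complex.normSq (Complex.exp (t * Complex.I) - z)) := by
  rw [poissonKer_eq, Complex.norm_mul_exp_arg_mul_I]

theorem poissonExt_eq_herglotz {F : ℝ → ℂ} (hc : Continuous F)
    (hF : Function.Periodic F (2 * π)) {z : ℂ} (hz : z ∈ Metric.ball (0:ℂ) 1) :
    poissonExt F z = herglotzExt F z +
      (starRingEnd ℂ) (herglotzExt (fun t => (starRingEnd ℂ) (F t)) z) := by
  have hκ : Continuous fun t : ℝ => (Complex.exp (t * Complex.I) + z) /
      (Complex.exp (t * Complex.I) - z) :=
    Continuous.div (by fun_prop) (by fun_prop) (exp_ne_of_mem_ball hz)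
  rw [herglotzExt, herglotzExt, Real.circleAverage_def, Real.circleAverage_def, poissonExt]
  simp only [circleMap, zero_add, Complex.ofReal_one, one_mul, hF.comp_arg_exp,
    smul_eq_mul, herglotzRieszKernel_def, sub_zero, Complex.real_smul, map_mul,
    Complex.conj_ofReal]
  rw [← intervalIntegral.intervalIntegral_conj, ← intervalIntegral.integral_const_mul,
    ← intervalIntegral.integral_const_mul, ← intervalIntegral.integral_const_mul,
    ← intervalIntegral.integral_const_mul, ← intervalIntegral.integral_add]
  · refine intervalIntegral.integral_congr fun t _ => ?_
    simp only [map_mul, map_inv₀, map_ofNat, Complex.conj_conj]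
    rw [poissonKer_norm_arg]
    have hne := exp_ne_of_mem_ball hz t
    set E := Complex.exp (t * Complex.I) with hE
    have h1 : ((1 - ‖z‖ ^ 2 : ℝ) : ℂ) = E * (starRingEnd ℂ) E - z * (starRingEnd ℂ) z := by
      rw [Complex.mul_conj, Complex.mul_conj, Complex.normSq_eq_norm_sq, Complex.normSq_eq_norm_sq,
        hE, Complex.norm_exp_ofReal_mul_I]
      push_cast; ring
    have hne' : (starRingEnd ℂ) (E - z) ≠ 0 := (map_ne_zero _).2 hne
    rw [Complex.ofReal_div, Complex.ofReal_mul, h1, ← Complex.mul_conj, map_div₀]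
    rw [map_sub] at hne' ⊢
    rw [map_add]
    have hpi : (π : ℂ) ≠ 0 := by exact_mod_cast Real.pi_ne_zero
    push_cast
    field_simp
    ring
  · exact Continuous.intervalIntegrable (by fun_prop) _ _
  · refine Continuous.intervalIntegrable ?_ _ _
    have := Complex.continuous_conj
    exact continuous_const.mul (continuous_const.mul (this.comp (hκ.mul (this.comp hc))))

/-- The kernel `r ∂P/∂r` of the radial derivative of the Poisson extension. -/
noncomputable def radialKer (r u : ℝ) : ℝ :=
  r * ((1 + r ^ 2) * Real.cos u - 2 * r) / (π * (1 - 2 * r * Real.cos u + r ^ 2) ^ 2)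

theorem polar_mem_ball {r : ℝ} (hr : 0 ≤ r) (hr1 : r < 1) (τ : ℝ) :
    (r : ℂ) * Complex.exp (τ * Complex.I) ∈ Metric.ball (0:ℂ) 1 := by
  rw [mem_ball_zero_iff, norm_mul, Complex.norm_exp_ofReal_mul_I, mul_one, Complex.norm_real,
    Real.norm_of_nonneg hr]
  exact hr1

theorem Function.Periodic.intervalIntegral_shift {E : Type*} [NormedAddCommGroup E]
    [NormedSpace ℝ E] {G : ℝ → E} (hG : Function.Periodic G (2 * π))
    (τ : ℝ) : ∫ t in (0:ℝ)..(2 * π), G t = ∫ u in (-π)..π, G (τ + u) := by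
  rw [intervalIntegral.integral_comp_add_left]
  have := hG.intervalIntegral_add_eq 0 (τ + -π)
  rw [zero_add] at this
  rw [this]
  congr 1
  ring

theorem exp_periodic_real (t : ℝ) :
    Complex.exp ((t + 2 * π : ℝ) * Complex.I) = Complex.exp (t * Complex.I) := by
  rw [← Complex.exp_periodic (t * Complex.I)]; congr 1; push_cast; ring

theorem poissonKer_denom_pos {r : ℝ} (hr : 0 ≤ r) (hr1 : r < 1) (u : ℝ) :
    0 < 1 - 2 * r * Real.cos u + r ^ 2 := by
  nlinarith [Real.cos_le_one u, sq_nonneg (1 - r), mul_nonneg hr (sub_nonneg.2 (Real.cos_le_one u))]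

theorem poissonKer_nonneg {r : ℝ} (hr : 0 ≤ r) (hr1 : r < 1) (u : ℝ) : 0 ≤ poissonKer r u := by
  have := poissonKer_denom_pos hr hr1 u
  have h2 : 0 ≤ 1 - r ^ 2 := by nlinarith
  unfold poissonKer
  positivity

theorem continuous_poissonKer {r : ℝ} (hr : 0 ≤ r) (hr1 : r < 1) : Continuous (poissonKer r) := by
  unfold poissonKer
  refine Continuous.div (by fun_prop) (by fun_prop) fun u => ?_
  have := poissonKer_denom_pos hr hr1 u
  positivity

theorem poissonExt_polar {F : ℝ → ℂ} (hF : Function.Periodic F (2 * π)) {r : ℝ} (hr : 0 ≤ r)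
    (τ : ℝ) : poissonExt F (r * Complex.exp (τ * Complex.I)) =
      ∫ u in (-π)..π, (poissonKer r u : ℂ) * F (τ + u) := by
  have hnorm : ‖(r : ℂ) * Complex.exp (τ * Complex.I)‖ = r := by
    rw [norm_mul, Complex.norm_exp_ofReal_mul_I, mul_one, Complex.norm_real,
      Real.norm_of_nonneg hr]
  have : ∀ t, poissonKer ‖(r : ℂ) * Complex.exp (τ * Complex.I)‖
      (t - Complex.arg (r * Complex.exp (τ * Complex.I))) = poissonKer r (t - τ) := by
    intro t
    rw [poissonKer_norm_arg, poissonKer_eq, hnorm]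
  simp only [poissonExt, this]
  rw [Function.Periodic.intervalIntegral_shift _ τ]
  · simp
  · intro t
    simp only [hF t, poissonKer]
    rw [show t + 2 * π - τ = t - τ + 2 * π by ring, Real.cos_add_two_pi]

theorem poissonExt_of_differentiable {φ : ℂ → ℂ} (hφ : Differentiable ℂ φ) {z : ℂ}
    (hz : z ∈ Metric.ball (0:ℂ) 1) :
    poissonExt (fun t => φ (Complex.exp (t * Complex.I))) z = φ z := by
  have h := hφ.diffContOnCl.circleAverage_poissonKernel_smul hz
  rw [← h, Real.circleAverage_def, poissonExt, Complex.real_smul,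
    ← intervalIntegral.integral_const_mul]
  refine intervalIntegral.integral_congr fun t _ => ?_
  simp only [circleMap, zero_add, Complex.ofReal_one, one_mul, Pi.smul_apply', poissonKernel_def,
    sub_zero, Complex.norm_exp_ofReal_mul_I, Complex.real_smul]
  rw [poissonKer_norm_arg, Complex.normSq_eq_norm_sq]
  have := norm_pos_iff.2 (exp_ne_of_mem_ball hz t)
  push_cast
  field_simp

theorem integral_poissonKer {r : ℝ} (hr : 0 ≤ r) (hr1 : r < 1) :
    ∫ u in (-π)..π, poissonKer r u = 1 := by
  have h := poissonExt_of_differentiable (φ := fun _ => 1) (by fun_prop) (polar_mem_ball hr hr1 0)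
  rw [poissonExt_polar (fun t => rfl) hr] at h
  simp only [mul_one] at h
  rw [intervalIntegral.integral_ofReal] at h
  exact_mod_cast h

theorem integral_poissonKer_mul_one_sub_cos {r : ℝ} (hr : 0 ≤ r) (hr1 : r < 1) :
    ∫ u in (-π)..π, poissonKer r u * (1 - Real.cos u) = 1 - r := by
  have h := poissonExt_of_differentiable (φ := fun z => z) (by fun_prop) (polar_mem_ball hr hr1 0)
  rw [poissonExt_polar (fun t => exp_periodic_real t) hr] at h
  have hre := congrArg Complex.re h
  have hP := continuous_poissonKer hr hr1
  have hint : IntervalIntegrable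
      (fun u : ℝ => (poissonKer r u : ℂ) * Complex.exp ((0 + u : ℝ) * Complex.I)) volume (-π) π :=
    Continuous.intervalIntegrable (by fun_prop) _ _
  have h2 := Complex.reCLM.intervalIntegral_comp_comm hint
  simp only [Complex.reCLM_apply] at h2
  rw [← h2] at hre
  simp only [Complex.re_ofReal_mul, Complex.exp_ofReal_mul_I_re, zero_add, Real.cos_zero,
    mul_one] at hre
  have h3 : ∀ u, poissonKer r u * (1 - Real.cos u) = poissonKer r u - poissonKer r u * Real.cos u :=
    fun u => by ring
  simp only [h3]
  rw [intervalIntegral.integral_sub (hP.intervalIntegrable _ _)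
    (Continuous.intervalIntegrable (by fun_prop) _ _), integral_poissonKer hr hr1, hre]

theorem integral_exp_div_sq (z : ℂ) :
    ∫ t in (0:ℝ)..(2 * π), Complex.exp (t * Complex.I) / (Complex.exp (t * Complex.I) - z) ^ 2
      = 0 := by
  have h := circleIntegral.integral_sub_zpow_of_ne (n := -2) (by norm_num) 0 z 1
  rw [circleIntegral] at h
  have h2 : ∀ t : ℝ, deriv (circleMap 0 1) t • (circleMap 0 1 t - z) ^ (-2 : ℤ) =
      Complex.I * (Complex.exp (t * Complex.I) / (Complex.exp (t * Complex.I) - z) ^ 2) := by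
    intro t
    rw [deriv_circleMap]
    simp only [circleMap, zero_add, Complex.ofReal_one, one_mul, smul_eq_mul, zpow_neg]
    rw [zpow_ofNat]
    ring
  simp only [h2] at h
  rw [intervalIntegral.integral_const_mul, mul_eq_zero, or_iff_right Complex.I_ne_zero] at h
  exact h

theorem radialKer_eq {r : ℝ} (hr : 0 ≤ r) (hr1 : r < 1) (τ u : ℝ) {z E : ℂ}
    (hz : z = r * Complex.exp (τ * Complex.I)) (hE : E = Complex.exp ((τ + u : ℝ) * Complex.I)) :
    (2 * π : ℂ)⁻¹ * (z * (E / (E - z) ^ 2) + (starRingEnd ℂ) (z * (E / (E - z) ^ 2))) =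
      radialKer r u := by
  have hne := exp_ne_of_mem_ball (polar_mem_ball hr hr1 0) u
  have hΔ := (poissonKer_denom_pos hr hr1 u).ne'
  have hΔ' : (1 - 2 * r * Complex.cos u + r ^ 2 : ℂ) ≠ 0 := by
    rw [← Complex.ofReal_cos]; exact_mod_cast hΔ
  simp only [Complex.ofReal_zero, zero_mul, Complex.exp_zero, mul_one] at hne
  have h1 : z * (E / (E - z) ^ 2) = r * (Complex.exp (u * Complex.I) /
      (Complex.exp (u * Complex.I) - r) ^ 2) := by
    have e1 : E = Complex.exp (τ * Complex.I) * Complex.exp (u * Complex.I) := by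
      rw [hE, ← Complex.exp_add]; congr 1; push_cast; ring
    have e0 := Complex.exp_ne_zero (τ * Complex.I)
    have e2 : E - z = Complex.exp (τ * Complex.I) * (Complex.exp (u * Complex.I) - r) := by
      rw [e1, hz]; ring
    rw [e2, e1, hz]
    field_simp
  have hconj : (starRingEnd ℂ) (Complex.exp (u * Complex.I)) =
      Complex.cos u - Complex.sin u * Complex.I := by
    rw [Complex.exp_mul_I, map_add, map_mul, Complex.conj_I, ← Complex.ofReal_cos,
      ← Complex.ofReal_sin, Complex.conj_ofReal, Complex.conj_ofReal]
    ring
  have hne2 := (map_ne_zero (starRingEnd ℂ)).2 hne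
  rw [h1]
  rw [map_mul, map_div₀, map_pow]
  rw [map_sub, Complex.conj_ofReal, hconj] at hne2 ⊢
  rw [Complex.exp_mul_I] at hne ⊢
  rw [radialKer]
  push_cast
  have hsc := Complex.sin_sq_add_cos_sq (u : ℂ)
  set C := Complex.cos u
  set S := Complex.sin u
  have hprod : (C + S * Complex.I - r) * (C - S * Complex.I - r) = 1 - 2 * r * C + r ^ 2 := by
    linear_combination hsc - S ^ 2 * Complex.I_sq
  have hpi : (π : ℂ) ≠ 0 := by exact_mod_cast Real.pi_ne_zero
  rw [← hprod]
  field_simp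
  have e1 : (C + S * Complex.I) * (C - S * Complex.I) = 1 := by
    linear_combination hsc - S ^ 2 * Complex.I_sq
  have e2 : (C + S * Complex.I) * (C - S * Complex.I - r) ^ 2 =
      (C - S * Complex.I) - 2 * r + r ^ 2 * (C + S * Complex.I) := by
    linear_combination ((C - S * Complex.I) - 2 * r) * e1
  have e3 : (C - S * Complex.I) * (C + S * Complex.I - r) ^ 2 =
      (C + S * Complex.I) - 2 * r + r ^ 2 * (C - S * Complex.I) := by
    linear_combination ((C + S * Complex.I) - 2 * r) * e1
  linear_combination r * (e2 + e3)

/-- The radial derivative of the Poisson extension as a regularized singular integral. -/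
theorem radial_deriv_eq {F : ℝ → ℂ} (hc : Continuous F) (hF : Function.Periodic F (2 * π))
    {r : ℝ} (hr : 0 ≤ r) (hr1 : r < 1) (τ : ℝ) {z : ℂ} (hz : z = r * Complex.exp (τ * Complex.I)) :
    z * herglotzDeriv F z +
      (starRingEnd ℂ) (z * herglotzDeriv (fun t => (starRingEnd ℂ) (F t)) z) =
      ∫ u in (-π)..π, (radialKer r u : ℂ) * (F (τ + u) - F τ) := by
  have hzb : z ∈ Metric.ball (0:ℂ) 1 := hz ▸ polar_mem_ball hr hr1 τ
  let q : ℝ → ℂ := fun t => Complex.exp (t * Complex.I) / (Complex.exp (t * Complex.I) - z) ^ 2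
  have hq : Continuous q := Continuous.div (by fun_prop) (by fun_prop)
    fun t => pow_ne_zero 2 (exp_ne_of_mem_ball hzb t)
  have hqp : Function.Periodic q (2 * π) := fun t => by
    simp only [q, exp_periodic_real]
  have hA : ∀ G : ℝ → ℂ, Continuous G → ∀ a : ℂ,
      herglotzDeriv G z = (2 * π : ℂ)⁻¹ * ∫ t in (0:ℝ)..(2 * π), q t * (G t - a) := by
    intro G hG a
    simp only [mul_sub]
    rw [intervalIntegral.integral_sub (Continuous.intervalIntegrable (by fun_prop) _ _)
      (Continuous.intervalIntegrable (by fun_prop) _ _), intervalIntegral.integral_mul_const,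
      integral_exp_div_sq z, zero_mul, sub_zero, herglotzDeriv]
  have hconj := Complex.continuous_conj
  rw [hA F hc (F τ), hA (fun t => (starRingEnd ℂ) (F t)) (hconj.comp hc) ((starRingEnd ℂ) (F τ)), map_mul, map_mul,
    ← intervalIntegral.intervalIntegral_conj, ← intervalIntegral.integral_const_mul,
    ← intervalIntegral.integral_const_mul, ← intervalIntegral.integral_const_mul,
    ← intervalIntegral.integral_const_mul, ← intervalIntegral.integral_add,
    Function.Periodic.intervalIntegral_shift _ τ]
  · refine intervalIntegral.integral_congr fun u _ => ?_
    simp only [map_mul, map_sub, Complex.conj_conj, map_inv₀, map_ofNat, Complex.conj_ofReal]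
    rw [← radialKer_eq hr hr1 τ u hz rfl]
    simp only [q, map_mul]
    ring
  · intro t
    simp only [hF t, hqp t]
  · exact Continuous.intervalIntegrable (by fun_prop) _ _
  · exact Continuous.intervalIntegrable (by fun_prop) _ _

theorem hasDerivAt_poissonExt_polar {F : ℝ → ℂ} (hc : Continuous F)
    (hF : Function.Periodic F (2 * π))
    {r : ℝ} (hr : 0 ≤ r) (hr1 : r < 1) (τ : ℝ) {z : ℂ} (hz : z = r * Complex.exp (τ * Complex.I)) :
    HasDerivAt (fun t : ℝ => poissonExt F (r * Complex.exp (t * Complex.I)))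
      (Complex.I * (z * herglotzDeriv F z -
        (starRingEnd ℂ) (z * herglotzDeriv (fun t => (starRingEnd ℂ) (F t)) z))) τ := by
  have hF' : Function.Periodic (fun t => (starRingEnd ℂ) (F t)) (2 * π) := fun t => by
    simp only [hF t]
  have hcc : Continuous fun t => (starRingEnd ℂ) (F t) := Complex.continuous_conj.comp hc
  have hzb : z ∈ Metric.ball (0:ℂ) 1 := hz ▸ polar_mem_ball hr hr1 τ
  have hpol : HasDerivAt (fun t : ℝ => (r : ℂ) * Complex.exp (t * Complex.I))
      (z * Complex.I) τ := by
    have := (((Complex.ofRealCLM.hasDerivAt (x := τ)).mul_const Complex.I).cexp).const_mul (r : ℂ)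
    simp only [Complex.ofRealCLM_apply, Complex.ofReal_one, one_mul] at this
    rw [hz, mul_assoc]
    exact this
  have hd : ∀ G : ℝ → ℂ, Continuous G → Function.Periodic G (2 * π) →
      HasDerivAt (fun t : ℝ => herglotzExt G (r * Complex.exp (t * Complex.I)))
        (herglotzDeriv G z * (z * Complex.I)) τ := by
    intro G hG hGp
    have := hasDerivAt_herglotzExt hG hGp hzb
    rw [hz] at this
    rw [hz] at hpol ⊢
    exact HasDerivAt.comp (h₂ := herglotzExt G) τ this hpol
  have h1 := (hd F hc hF).add (Complex.conjCLE.hasFDerivAt.comp_hasDerivAt τ (hd _ hcc hF'))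
  refine (h1.congr_of_eventuallyEq (Eventually.of_forall fun t => ?_)).congr_deriv ?_
  · exact poissonExt_eq_herglotz hc hF (polar_mem_ball hr hr1 t)
  · simp only [ContinuousLinearEquiv.coe_coe, Complex.conjCLE_apply, map_mul, Complex.conj_I]
    ring

theorem sq_le_mul_one_sub_cos {u : ℝ} (hu : |u| ≤ π) : u ^ 2 ≤ π ^ 2 / 2 * (1 - Real.cos u) := by
  have h := Real.cos_le_one_sub_mul_cos_sq hu
  have hpi := Real.pi_pos
  have h2 : 2 / π ^ 2 * u ^ 2 ≤ 1 - Real.cos u := by linarith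
  calc u ^ 2 = π ^ 2 / 2 * (2 / π ^ 2 * u ^ 2) := by field_simp
    _ ≤ _ := by gcongr

theorem integral_poissonKer_mul_affine {r : ℝ} (hr : 0 ≤ r) (hr1 : r < 1) (a b : ℝ) :
    ∫ u in (-π)..π, poissonKer r u * (a + b * (1 - Real.cos u)) = a + b * (1 - r) := by
  have hP := continuous_poissonKer hr hr1
  have h : ∀ u, poissonKer r u * (a + b * (1 - Real.cos u)) =
      a * poissonKer r u + b * (poissonKer r u * (1 - Real.cos u)) := fun u => by ring
  simp only [h]
  rw [intervalIntegral.integral_add (Continuous.intervalIntegrable (by fun_prop) _ _)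
    (Continuous.intervalIntegrable (by fun_prop) _ _), intervalIntegral.integral_const_mul,
    intervalIntegral.integral_const_mul, integral_poissonKer hr hr1,
    integral_poissonKer_mul_one_sub_cos hr hr1, mul_one]

/-- A bound for Poisson averages of functions dominated by `a + b (1 - cos u)`. -/
theorem norm_integral_poissonKer_le {r : ℝ} (hr : 0 ≤ r) (hr1 : r < 1) {a b : ℝ} {G : ℝ → ℂ}
    (h : ∀ u, |u| ≤ π → ‖G u‖ ≤ a + b * (1 - Real.cos u)) :
    ‖∫ u in (-π)..π, (poissonKer r u : ℂ) * G u‖ ≤ a + b * (1 - r) := by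
  have hP := continuous_poissonKer hr hr1
  rw [← integral_poissonKer_mul_affine hr hr1]
  refine intervalIntegral.norm_integral_le_of_norm_le (by linarith [Real.pi_pos])
    (Eventually.of_forall fun u hu => ?_) (Continuous.intervalIntegrable (by fun_prop) _ _)
  rw [norm_mul, Complex.norm_real, Real.norm_of_nonneg (poissonKer_nonneg hr hr1 u)]
  exact mul_le_mul_of_nonneg_left (h u (abs_le.2 ⟨hu.1.le, hu.2⟩)) (poissonKer_nonneg hr hr1 u)

namespace IsUnitJordan

variable {g : ℝ → ℂ} {l : ℝ}

theorem exists_norm_deriv_sub_le (hg : IsUnitJordan g l) {η : ℝ} (hη : 0 < η) :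
    ∃ C ≥ (0:ℝ), ∀ s t, ‖deriv g t - deriv g s‖ ≤ η + C * (t - s) ^ 2 := by
  have huc : UniformContinuous (deriv g) := by
    have : Fact (0 < l) := ⟨hg.pos⟩
    have h1 : Continuous (hg.deriv_periodic.lift : AddCircle l → ℂ) :=
      hg.continuous_deriv.quotient_liftOn' _
    have h2 : UniformContinuous (fun x : ℝ => (x : AddCircle l)) :=
      uniformContinuous_of_continuousAt_zero (QuotientAddGroup.mk' (AddSubgroup.zmultiples l))
        (AddCircle.continuous_mk' l).continuousAt
    exact (CompactSpace.uniformContinuous_of_continuous h1).comp h2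
  obtain ⟨δ, hδ, h⟩ := Metric.uniformContinuous_iff.1 huc η hη
  refine ⟨2 / δ ^ 2, by positivity, fun s t => ?_⟩
  by_cases hst : |t - s| < δ
  · have := h (a := t) (b := s) (by rwa [Real.dist_eq])
    rw [dist_eq_norm] at this
    have h2 : 0 ≤ 2 / δ ^ 2 * (t - s) ^ 2 := by positivity
    linarith
  · have h1 : ‖deriv g t - deriv g s‖ ≤ 2 := by
      refine (norm_sub_le _ _).trans ?_
      rw [hg.unit, hg.unit]; norm_num
    have h2 : δ ^ 2 ≤ (t - s) ^ 2 := by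
      rw [← sq_abs (t - s)]
      exact pow_le_pow_left₀ hδ.le (not_lt.1 hst) 2
    have h3 : 2 ≤ 2 / δ ^ 2 * (t - s) ^ 2 := by
      rw [div_mul_eq_mul_div, le_div_iff₀ (by positivity)]
      linarith
    linarith

theorem norm_sub_sub_le (hg : IsUnitJordan g l) {a b M : ℝ} {e : ℂ}
    (h : ∀ s ∈ uIcc a b, ‖deriv g s - e‖ ≤ M) :
    ‖g b - g a - ((b - a : ℝ) : ℂ) * e‖ ≤ M * |b - a| := by
  have hd : ∀ s ∈ uIcc a b, HasDerivWithinAt (fun s : ℝ => g s - s * e) (deriv g s - e) (uIcc a b) s := by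
    intro s _
    have := ((hg.hasDerivAt s).sub ((Complex.ofRealCLM.hasDerivAt (x := s)).mul_const e))
    simp only [Complex.ofRealCLM_apply, Complex.ofReal_one, one_mul] at this
    exact this.hasDerivWithinAt
  have := (convex_uIcc a b).norm_image_sub_le_of_norm_hasDerivWithin_le hd h
    left_mem_uIcc right_mem_uIcc
  rw [Real.norm_eq_abs] at this
  refine le_trans (le_of_eq ?_) this
  congr 1
  push_cast
  ring

theorem norm_sub_le (hg : IsUnitJordan g l) (a b : ℝ) : ‖g b - g a‖ ≤ |b - a| := by
  have := hg.norm_sub_sub_le (a := a) (b := b) (e := 0) (M := 1) (fun s _ => by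
    rw [sub_zero, hg.unit])
  simpa using this

variable {f : ℝ → ℝ} {L : NNReal}

/-- The angular derivative of the Poisson extension is almost a nonnegative multiple of the
boundary tangent. -/
theorem exists_angular_deriv_bound (hg : IsUnitJordan g l) (hf : Monotone f)
    (hfl : LipschitzWith L f) (hfp : ∀ t, f (t + 2 * π) = f t + l) {η : ℝ} (hη : 0 < η) :
    ∃ ρ < (1:ℝ), ∀ r, 0 ≤ r → ρ ≤ r → r < 1 → ∀ (τ : ℝ) (Y : ℂ),
      HasDerivAt (fun t : ℝ => poissonExt (fun t => g (f t)) (r * Complex.exp (t * Complex.I)))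
        Y τ →
      -η ≤ ((starRingEnd ℂ) (deriv g (f τ)) * Y).re ∧
      |((starRingEnd ℂ) (deriv g (f τ)) * Y).im| ≤ η := by
  have hfc := hfl.continuous
  have hgc := hg.contDiff.continuous
  have hF : Function.Periodic (fun t => g (f t)) (2 * π) := fun t => by
    simp only [hfp]; exact hg.periodic _
  have hL : (0:ℝ) ≤ L := L.2
  obtain ⟨C, hC, hbd⟩ := hg.exists_norm_deriv_sub_le (η := η / (4 * (L + 1))) (by positivity)
  set η₁ := η / (4 * ((L:ℝ) + 1)) with hη₁
  have hη₁0 : 0 < η₁ := by positivity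
  have hLη : L * η₁ ≤ η / 4 := by
    rw [hη₁, mul_div_assoc', div_le_div_iff₀ (by positivity) (by positivity)]
    nlinarith
  set b : ℝ := L * C * L ^ 2 * π ^ 2 with hb
  have hb0 : 0 ≤ b := by positivity
  refine ⟨1 - η / (4 * (b + 1)), by linarith [show 0 < η / (4 * (b + 1)) by positivity], ?_⟩
  intro r hr hρ hr1 τ Y hY
  have hbr : b * (1 - r) ≤ η / 4 := by
    have h1 : 1 - r ≤ η / (4 * (b + 1)) := by linarith
    calc b * (1 - r) ≤ (b + 1) * (η / (4 * (b + 1))) := by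
          apply mul_le_mul <;> linarith
      _ = η / 4 := by field_simp
  set e := deriv g (f τ) with he
  set ψ : ℝ → ℂ := fun t => poissonExt (fun t => g (f t)) (r * Complex.exp (t * Complex.I)) with hψ
  have hP := continuous_poissonKer hr hr1
  have key : ∀ δ : ℝ, 0 < δ → ∃ x : ℝ, 0 ≤ x ∧
      ‖(starRingEnd ℂ) e * ((δ:ℝ)⁻¹ • (ψ (τ + δ) - ψ τ)) - x‖ ≤
        L * (η₁ + 2 * C * L ^ 2 * δ ^ 2) + b * (1 - r) := by
    intro δ hδ
    refine ⟨∫ u in (-π)..π, poissonKer r u * (δ⁻¹ * (f (τ + δ + u) - f (τ + u))), ?_, ?_⟩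
    · refine intervalIntegral.integral_nonneg (by linarith [Real.pi_pos]) fun u _ => ?_
      have := hf (show τ + u ≤ τ + δ + u by linarith)
      exact mul_nonneg (poissonKer_nonneg hr hr1 u) (mul_nonneg (by positivity) (by linarith))
    · have hcalc : (starRingEnd ℂ) e * ((δ:ℝ)⁻¹ • (ψ (τ + δ) - ψ τ)) -
          ((∫ u in (-π)..π, poissonKer r u * (δ⁻¹ * (f (τ + δ + u) - f (τ + u))) : ℝ) : ℂ) =
          ∫ u in (-π)..π, (poissonKer r u : ℂ) * ((δ:ℂ)⁻¹ * ((starRingEnd ℂ) e *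
            (g (f (τ + δ + u)) - g (f (τ + u)) -
              ((f (τ + δ + u) - f (τ + u) : ℝ) : ℂ) * e))) := by
        rw [hψ]
        simp only
        rw [poissonExt_polar hF hr, poissonExt_polar hF hr,
          ← intervalIntegral.integral_sub (Continuous.intervalIntegrable (by fun_prop) _ _)
            (Continuous.intervalIntegrable (by fun_prop) _ _),
          ← intervalIntegral.integral_ofReal, ← intervalIntegral.integral_smul,
          ← intervalIntegral.integral_const_mul,
          ← intervalIntegral.integral_sub (Continuous.intervalIntegrable (by fun_prop) _ _)
            (Continuous.intervalIntegrable (by fun_prop) _ _)]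
        refine intervalIntegral.integral_congr fun u _ => ?_
        have h1 := hg.deriv_mul_conj (f τ)
        rw [← he] at h1
        simp only [Complex.real_smul]
        push_cast
        linear_combination ((poissonKer r u : ℂ) * (δ:ℂ)⁻¹ *
          ((f (τ + δ + u) : ℂ) - f (τ + u))) * h1
      rw [hcalc]
      refine norm_integral_poissonKer_le hr hr1 fun u hu => ?_
      have hd0 : 0 ≤ f (τ + δ + u) - f (τ + u) :=
        sub_nonneg.2 (hf (by linarith))
      have hlip : ∀ x y, |f x - f y| ≤ L * |x - y| := fun x y => by
        simpa [Real.dist_eq] using hfl.dist_le_mul x y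
      have hd1 : f (τ + δ + u) - f (τ + u) ≤ L * δ := by
        have := hlip (τ + δ + u) (τ + u)
        rw [abs_of_nonneg hd0, show τ + δ + u - (τ + u) = δ by ring, abs_of_pos hδ] at this
        exact this
      have hM := hg.norm_sub_sub_le (a := f (τ + u)) (b := f (τ + δ + u)) (e := e)
        (M := η₁ + C * (L * (|u| + δ)) ^ 2) (fun s hs => by
          refine (hbd _ _).trans ?_
          have hs1 : |s - f τ| ≤ L * (|u| + δ) := by
            rw [uIcc_of_le (by linarith)] at hs
            have h1 := hlip (τ + u) τ
            have h2 := hlip (τ + δ + u) τ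
            rw [show τ + u - τ = u by ring] at h1
            have h3 : |τ + δ + u - τ| ≤ |u| + δ := by
              rw [show τ + δ + u - τ = u + δ by ring]
              exact (abs_add_le _ _).trans (by rw [abs_of_pos hδ])
            have h4 : L * |τ + δ + u - τ| ≤ L * (|u| + δ) := by gcongr
            have h5 : L * |u| ≤ L * (|u| + δ) := by gcongr; linarith
            rw [abs_le] at h1 h2 ⊢
            constructor <;> linarith [hs.1, hs.2]
          have : (s - f τ) ^ 2 ≤ (L * (|u| + δ)) ^ 2 := by
            rw [← sq_abs (s - f τ)]
            exact pow_le_pow_left₀ (abs_nonneg _) hs1 2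
          gcongr)
      have hne : ‖(starRingEnd ℂ) e‖ = 1 := by rw [Complex.norm_conj, he, hg.unit]
      rw [norm_mul, norm_mul, hne, one_mul, norm_inv, Complex.norm_real, Real.norm_of_nonneg hδ.le]
      rw [abs_of_nonneg hd0] at hM
      have hu2 : (|u| + δ) ^ 2 ≤ 2 * δ ^ 2 + π ^ 2 * (1 - Real.cos u) := by
        have := sq_le_mul_one_sub_cos hu
        have h2 := sq_abs u
        nlinarith [sq_nonneg (|u| - δ)]
      have hc0 : 0 ≤ η₁ + C * (L * (|u| + δ)) ^ 2 := by positivity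
      calc _ ≤ δ⁻¹ * ((η₁ + C * (L * (|u| + δ)) ^ 2) * (L * δ)) := by
            gcongr
            exact hM.trans (by gcongr)
        _ = L * η₁ + L * C * L ^ 2 * (|u| + δ) ^ 2 := by field_simp
        _ ≤ L * η₁ + L * C * L ^ 2 * (2 * δ ^ 2 + π ^ 2 * (1 - Real.cos u)) := by gcongr
        _ = _ := by rw [hb]; ring
  have hsmall : ∀ᶠ δ : ℝ in 𝓝[>] 0, L * (η₁ + 2 * C * L ^ 2 * δ ^ 2) + b * (1 - r) < η := by
    have hcont : Tendsto (fun δ : ℝ => L * (η₁ + 2 * C * L ^ 2 * δ ^ 2) + b * (1 - r)) (𝓝[>] 0)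
        (𝓝 (L * (η₁ + 2 * C * L ^ 2 * 0 ^ 2) + b * (1 - r))) :=
      (Continuous.tendsto (by fun_prop) 0).mono_left nhdsWithin_le_nhds
    exact hcont.eventually (gt_mem_nhds (by nlinarith))
  have hlim : Tendsto (fun δ : ℝ => (starRingEnd ℂ) e * ((δ:ℝ)⁻¹ • (ψ (τ + δ) - ψ τ))) (𝓝[>] 0)
      (𝓝 ((starRingEnd ℂ) e * Y)) := (hY.tendsto_slope_zero_right).const_mul _
  have hev : ∀ᶠ δ : ℝ in 𝓝[>] 0,
      -η ≤ ((starRingEnd ℂ) e * ((δ:ℝ)⁻¹ • (ψ (τ + δ) - ψ τ))).re ∧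
      |((starRingEnd ℂ) e * ((δ:ℝ)⁻¹ • (ψ (τ + δ) - ψ τ))).im| ≤ η := by
    filter_upwards [hsmall, self_mem_nhdsWithin] with δ h1 h2
    obtain ⟨x, hx, hn⟩ := key δ h2
    have hn' := hn.trans h1.le
    have hre := (Complex.abs_re_le_norm _).trans hn'
    have him := (Complex.abs_im_le_norm _).trans hn'
    rw [Complex.sub_re, Complex.ofReal_re, abs_le] at hre
    rw [Complex.sub_im, Complex.ofReal_im, sub_zero] at him
    exact ⟨by linarith, him⟩
  exact ⟨ge_of_tendsto ((Complex.continuous_re.tendsto _).comp hlim) (hev.mono fun _ h => h.1),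
    le_of_tendsto (((Complex.continuous_im.tendsto _).comp hlim).abs) (hev.mono fun _ h => h.2)⟩

end IsUnitJordan

theorem Function.Periodic.continuousAt_comp_arg {F : ℝ → ℂ} (hF : Function.Periodic F (2 * π))
    (hc : Continuous F) {z : ℂ} (hz : z ≠ 0) : ContinuousAt (fun z : ℂ => F z.arg) z := by
  have h1 : Continuous (hF.lift : AddCircle (2 * π) → ℂ) := hc.quotient_liftOn' _
  exact ContinuousAt.comp (f := fun z : ℂ => ((Complex.arg z : ℝ) : Real.Angle)) (g := hF.lift)
    h1.continuousAt (Complex.continuousAt_arg_coe_angle hz)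

theorem norm_poissonExt_sub_le {F : ℝ → ℂ} (hF : Function.Periodic F (2 * π)) {K : NNReal}
    (hK : LipschitzWith K F) {η : ℝ} (hη : 0 < η) {r : ℝ} (hr : 0 ≤ r) (hr1 : r < 1) (τ : ℝ) :
    ‖poissonExt F (r * Complex.exp (τ * Complex.I)) - F τ‖ ≤
      η + K ^ 2 / (4 * η) * (π ^ 2 / 2) * (1 - r) := by
  have hc := hK.continuous
  have hP := continuous_poissonKer hr hr1
  have h1 : F τ = ∫ u in (-π)..π, (poissonKer r u : ℂ) * F τ := by
    rw [intervalIntegral.integral_mul_const, intervalIntegral.integral_ofReal,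
      integral_poissonKer hr hr1]
    simp
  rw [poissonExt_polar hF hr, h1,
    ← intervalIntegral.integral_sub (Continuous.intervalIntegrable (by fun_prop) _ _)
      (Continuous.intervalIntegrable (by fun_prop) _ _)]
  simp only [← mul_sub]
  refine norm_integral_poissonKer_le hr hr1 fun u hu => ?_
  have h2 : ‖F (τ + u) - F τ‖ ≤ K * |u| := by
    simpa [dist_eq_norm] using hK.dist_le_mul (τ + u) τ
  have h3 : K * |u| ≤ η + K ^ 2 / (4 * η) * u ^ 2 := by
    have h4 : η + K ^ 2 / (4 * η) * u ^ 2 - K * |u| = (η - K * |u| / 2) ^ 2 / η := by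
      rw [← sq_abs u]; field_simp; ring
    have : 0 ≤ (η - K * |u| / 2) ^ 2 / η := by positivity
    linarith
  have h4 := mul_le_mul_of_nonneg_left (sq_le_mul_one_sub_cos hu)
    (show 0 ≤ (K:ℝ) ^ 2 / (4 * η) by positivity)
  linarith

/-- The Poisson extension together with its boundary values. -/
noncomputable def poissonExtClosed (F : ℝ → ℂ) (z : ℂ) : ℂ :=
  open Classical in if ‖z‖ < 1 then poissonExt F z else F z.arg

theorem poissonExtClosed_of_mem {F : ℝ → ℂ} {z : ℂ} (hz : z ∈ Metric.ball (0:ℂ) 1) :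
    poissonExtClosed F z = poissonExt F z :=
  if_pos (by simpa using hz)

theorem poissonExtClosed_exp {F : ℝ → ℂ} (hF : Function.Periodic F (2 * π)) (t : ℝ) :
    poissonExtClosed F (Complex.exp (t * Complex.I)) = F t := by
  rw [poissonExtClosed, if_neg (by simp [Complex.norm_exp_ofReal_mul_I]), hF.comp_arg_exp]

theorem continuousOn_poissonExt {F : ℝ → ℂ} (hc : Continuous F)
    (hF : Function.Periodic F (2 * π)) : ContinuousOn (poissonExt F) (Metric.ball 0 1) := by
  have hF' : Function.Periodic (fun t => (starRingEnd ℂ) (F t)) (2 * π) := fun t => by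
    simp only [hF t]
  have hc' : Continuous (fun t => (starRingEnd ℂ) (F t)) := Complex.continuous_conj.comp hc
  refine ContinuousOn.congr (f := fun z => herglotzExt F z +
    (starRingEnd ℂ) (herglotzExt (fun t => (starRingEnd ℂ) (F t)) z)) ?_
    fun z hz => poissonExt_eq_herglotz hc hF hz
  intro z hz
  exact ((hasDerivAt_herglotzExt hc hF hz).continuousAt.add
    (Complex.continuous_conj.continuousAt.comp
      (hasDerivAt_herglotzExt hc' hF' hz).continuousAt)).continuousWithinAt

theorem continuousOn_poissonExtClosed {F : ℝ → ℂ} (hF : Function.Periodic F (2 * π)) {K : NNReal}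
    (hK : LipschitzWith K F) : ContinuousOn (poissonExtClosed F) (Metric.closedBall 0 1) := by
  have hc := hK.continuous
  intro z hz
  by_cases hz1 : z ∈ Metric.ball (0:ℂ) 1
  · have h1 := (continuousOn_poissonExt hc hF).continuousAt (Metric.isOpen_ball.mem_nhds hz1)
    refine (h1.congr ?_).continuousWithinAt
    filter_upwards [Metric.isOpen_ball.mem_nhds hz1] with y hy
    exact (poissonExtClosed_of_mem hy).symm
  · have hz2 : ‖z‖ = 1 := by
      rw [mem_closedBall_zero_iff] at hz
      rw [mem_ball_zero_iff] at hz1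
      exact le_antisymm hz (not_lt.1 hz1)
    have hz0 : z ≠ 0 := by rintro rfl; simp at hz2
    have hG := (hF.continuousAt_comp_arg hc hz0).continuousWithinAt (s := Metric.closedBall 0 1)
    have hbound : ∀ η > 0, ∀ y ∈ Metric.closedBall (0:ℂ) 1,
        ‖poissonExtClosed F y - F y.arg‖ ≤ η + K ^ 2 / (4 * η) * (π ^ 2 / 2) * (1 - ‖y‖) := by
      intro η hη y hy
      have hy1 := mem_closedBall_zero_iff.1 hy
      by_cases h : ‖y‖ < 1
      · have := norm_poissonExt_sub_le hF hK hη (norm_nonneg y) h y.arg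
        rw [Complex.norm_mul_exp_arg_mul_I] at this
        rw [poissonExtClosed_of_mem (mem_ball_zero_iff.2 h)]
        exact this
      · rw [poissonExtClosed, if_neg h, sub_self, norm_zero]
        have : 0 ≤ 1 - ‖y‖ := by linarith
        positivity
    have hdiff : Tendsto (fun y => poissonExtClosed F y - F y.arg) (𝓝[Metric.closedBall 0 1] z)
        (𝓝 0) := by
      rw [Metric.tendsto_nhds]
      intro ε hε
      have hlim : Tendsto (fun y : ℂ => ε / 2 + K ^ 2 / (4 * (ε / 2)) * (π ^ 2 / 2) * (1 - ‖y‖))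
          (𝓝[Metric.closedBall 0 1] z)
          (𝓝 (ε / 2 + K ^ 2 / (4 * (ε / 2)) * (π ^ 2 / 2) * (1 - ‖z‖))) :=
        (Continuous.tendsto (by fun_prop) z).mono_left nhdsWithin_le_nhds
      filter_upwards [hlim.eventually (eventually_lt_nhds (b := ε) (by rw [hz2]; simp; linarith)),
        self_mem_nhdsWithin] with y h1 h2
      rw [dist_zero_right]
      exact (hbound _ (by positivity) y h2).trans_lt h1
    have hval : poissonExtClosed F z = F z.arg := if_neg (by rw [hz2]; simp)
    have := hdiff.add hG.tendsto
    simp only [sub_add_cancel, zero_add] at this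
    rw [ContinuousWithinAt, hval]
    exact this

theorem abs_radialKer_le {r u : ℝ} (hr : 1 / 2 ≤ r) (hr1 : r ≤ 1) (hu : |u| ≤ π) (hu0 : u ≠ 0) :
    |radialKer r u| ≤ π / u ^ 2 := by
  have hpi := Real.pi_pos
  have hu2 : 0 < u ^ 2 := by positivity
  have hs := sq_le_mul_one_sub_cos hu
  set s := 1 - Real.cos u with hsdef
  have hs0 : 0 < s := by
    by_contra h
    have : π ^ 2 / 2 * s ≤ 0 := mul_nonpos_of_nonneg_of_nonpos (by positivity) (not_lt.1 h)
    linarith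
  have hc : Real.cos u = 1 - s := by rw [hsdef]; ring
  have hΔ : 1 - 2 * r * Real.cos u + r ^ 2 = (1 - r) ^ 2 + 2 * r * s := by rw [hc]; ring
  have hN : (1 + r ^ 2) * Real.cos u - 2 * r = (1 - r) ^ 2 - (1 + r ^ 2) * s := by rw [hc]; ring
  rw [radialKer, hΔ, hN]
  set Δ := (1 - r) ^ 2 + 2 * r * s with hΔdef
  have hΔ1 : 2 * r * s ≤ Δ := by rw [hΔdef]; nlinarith [sq_nonneg (1 - r)]
  have hΔ0 : 0 < Δ := lt_of_lt_of_le (by positivity) hΔ1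
  have hrs : 1 + r ^ 2 ≤ 5 / 2 * r := by nlinarith
  have hN1 : |(1 - r) ^ 2 - (1 + r ^ 2) * s| ≤ 5 / 4 * Δ := by
    have h1 : (1 + r ^ 2) * s ≤ 5 / 2 * r * s := by gcongr
    have h2 : 0 ≤ (1 + r ^ 2) * s := by positivity
    have h3 := sq_nonneg (1 - r)
    rw [abs_le]
    constructor <;> nlinarith
  rw [abs_div, abs_mul, abs_of_pos (show 0 < r by linarith),
    abs_of_pos (show 0 < π * Δ ^ 2 by positivity), div_le_div_iff₀ (by positivity) hu2]
  calc r * |(1 - r) ^ 2 - (1 + r ^ 2) * s| * u ^ 2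
      ≤ r * (5 / 4 * Δ) * (π ^ 2 / 2 * s) := by gcongr
    _ = 5 / 16 * (π ^ 2 * Δ) * (2 * r * s) := by ring
    _ ≤ 5 / 16 * (π ^ 2 * Δ) * Δ := by gcongr
    _ ≤ π * (π * Δ ^ 2) := by nlinarith [show 0 < π ^ 2 * Δ ^ 2 by positivity]

theorem radialKer_one (u : ℝ) : radialKer 1 u = -(1 / (2 * π)) * (2 * Real.sin (u / 2) ^ 2)⁻¹ := by
  have h : Real.cos u = 1 - 2 * Real.sin (u / 2) ^ 2 := by
    rw [show u = 2 * (u / 2) by ring, Real.cos_two_mul, Real.cos_sq']; ring_nf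
  rw [radialKer, h]
  generalize Real.sin (u / 2) = x
  rw [show 1 - 2 * 1 * (1 - 2 * x ^ 2) + 1 ^ 2 = 4 * x ^ 2 by ring]
  by_cases h0 : x = 0
  · simp [h0]
  · field_simp
    ring

theorem measurable_radialKer (r : ℝ) : Measurable (radialKer r) := by
  unfold radialKer
  fun_prop

theorem continuousAt_radialKer {r u : ℝ} (hr : 0 < r) (hu : |u| ≤ π) (hu0 : u ≠ 0) :
    ContinuousAt (fun r => radialKer r u) r := by
  have hs := sq_le_mul_one_sub_cos hu
  have hu2 : 0 < u ^ 2 := by positivity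
  have hs0 : 0 < 1 - Real.cos u := by
    by_contra h
    have : π ^ 2 / 2 * (1 - Real.cos u) ≤ 0 :=
      mul_nonpos_of_nonneg_of_nonpos (by positivity) (not_lt.1 h)
    linarith
  have hΔ : 0 < 1 - 2 * r * Real.cos u + r ^ 2 := by
    nlinarith [sq_nonneg (1 - r), mul_pos hr hs0]
  unfold radialKer
  exact ContinuousAt.div (by fun_prop) (by fun_prop) (by positivity)

theorem Kker_eq (g : ℝ → ℂ) (s t : ℝ) :
    Kker g s t = ((starRingEnd ℂ) (deriv g s) * (g t - g s)).im := by
  simp [Kker, Complex.mul_re, Complex.mul_im]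
  ring

namespace IsUnitJordan

variable {g : ℝ → ℂ} {l : ℝ} {f : ℝ → ℝ} {L : NNReal} {ω : ℝ → ℝ}

theorem abs_Kker_le (hg : IsUnitJordan g l) {a b M : ℝ}
    (h : ∀ s ∈ uIcc a b, ‖deriv g s - deriv g a‖ ≤ M) : |Kker g a b| ≤ M * |b - a| := by
  have h1 := hg.norm_sub_sub_le h
  have h2 : Kker g a b =
      ((starRingEnd ℂ) (deriv g a) * (g b - g a - ((b - a : ℝ) : ℂ) * deriv g a)).im := by
    have h3 : (starRingEnd ℂ) (deriv g a) * (g b - g a - ((b - a : ℝ) : ℂ) * deriv g a) =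
        (starRingEnd ℂ) (deriv g a) * (g b - g a) - ((b - a : ℝ) : ℂ) := by
      linear_combination (-((b - a : ℝ) : ℂ)) * hg.deriv_mul_conj a
    rw [Kker_eq, h3, Complex.sub_im, Complex.ofReal_im, sub_zero]
  rw [h2]
  refine (Complex.abs_im_le_norm _).trans ?_
  rw [norm_mul, Complex.norm_conj, hg.unit, one_mul]
  exact h1

theorem Kker_add_period (hg : IsUnitJordan g l) (s t : ℝ) : Kker g (s + l) (t + l) = Kker g s t := by
  simp only [Kker, hg.periodic s, hg.periodic t, hg.deriv_periodic s]

theorem continuous_Kker (hg : IsUnitJordan g l) : Continuous fun p : ℝ × ℝ => Kker g p.1 p.2 := by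
  have h1 := hg.continuous_deriv
  have h2 := hg.contDiff.continuous
  unfold Kker
  fun_prop

end IsUnitJordan

theorem exists_Kker_majorant {g : ℝ → ℂ} {l : ℝ} {f : ℝ → ℝ} {L : NNReal} {ω : ℝ → ℝ}
    (hg : IsUnitJordan g l) (hL : 0 < L) (hfl : LipschitzWith L f)
    (hω : ∀ δ ≥ (0:ℝ), ∀ x y : ℝ, |x - y| ≤ δ → ‖deriv g x - deriv g y‖ ≤ ω δ)
    (hωD : ∃ k > (0:ℝ), IntegrableOn (fun t => ω t / t) (Ioc 0 k)) :
    ∃ θ : ℝ → ℝ, IntervalIntegrable θ volume (-π) π ∧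
      ∀ τ u, |Kker g (f τ) (f (τ + u))| ≤ θ u * u ^ 2 := by
  obtain ⟨k, hk, hint⟩ := hωD
  have hL' : (0:ℝ) < L := hL
  set φ : ℝ → ℝ := (Ioc 0 k).indicator (fun t => ω t / t) with hφ
  have hφi : Integrable φ := hint.integrable_indicator measurableSet_Ioc
  have hω0 : ∀ t, 0 ≤ t → 0 ≤ ω t := fun t ht =>
    (norm_nonneg _).trans (hω t ht 0 0 (by simpa using ht))
  have hφ0 : ∀ t, 0 ≤ φ t := fun t =>
    indicator_nonneg (fun s hs => div_nonneg (hω0 s hs.1.le) hs.1.le) t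
  refine ⟨fun u => L ^ 2 * (φ (L * u) + φ (-L * u) + 2 / k), ?_, fun τ u => ?_⟩
  · exact (((hφi.comp_mul_left' hL'.ne').intervalIntegrable.add
      (hφi.comp_mul_left' (neg_ne_zero.2 hL'.ne')).intervalIntegrable).add
        intervalIntegrable_const).const_mul _
  · beta_reduce
    have hlip : |f (τ + u) - f τ| ≤ L * |u| := by
      simpa [Real.dist_eq] using hfl.dist_le_mul (τ + u) τ
    have hLu : 0 ≤ L * |u| := by positivity
    have hmem : ∀ s ∈ uIcc (f τ) (f (τ + u)), |s - f τ| ≤ L * |u| := fun s hs =>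
      (abs_sub_left_of_mem_uIcc hs).trans hlip
    by_cases hu : u = 0
    · subst hu
      simp [Kker]
    have hu' : 0 < |u| := abs_pos.2 hu
    by_cases hLk : L * |u| ≤ k
    · have h1 := hg.abs_Kker_le (M := ω (L * |u|)) fun s hs => hω _ hLu s _ (hmem s hs)
      have h2 : φ (L * |u|) = ω (L * |u|) / (L * |u|) :=
        indicator_of_mem (show L * |u| ∈ Ioc 0 k from ⟨by positivity, hLk⟩) _
      have h3 : φ (L * |u|) ≤ φ (L * u) + φ (-L * u) := by
        rcases abs_cases u with ⟨h, _⟩ | ⟨h, _⟩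
        · rw [h]; linarith [hφ0 (-L * u)]
        · rw [h, mul_neg, ← neg_mul]; linarith [hφ0 (L * u)]
      calc _ ≤ ω (L * |u|) * (L * |u|) := h1.trans (mul_le_mul_of_nonneg_left hlip (hω0 _ hLu))
        _ = L ^ 2 * φ (L * |u|) * |u| ^ 2 := by rw [h2]; field_simp
        _ ≤ _ := by
          rw [sq_abs]
          have : 0 < 2 / k := by positivity
          gcongr
          linarith
    · have h1 := hg.abs_Kker_le (M := 2) (a := f τ) (b := f (τ + u)) fun s _ => by
        refine (norm_sub_le _ _).trans ?_
        rw [hg.unit, hg.unit]; norm_num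
      have h2 : 2 * (L * |u|) ≤ L ^ 2 * (2 / k) * |u| ^ 2 := by
        rw [show (L:ℝ) ^ 2 * (2 / k) * |u| ^ 2 = 2 * (L * |u|) * ((L * |u|) / k) by ring]
        have : 1 ≤ L * |u| / k := by rw [le_div_iff₀ hk]; linarith
        nlinarith
      calc _ ≤ 2 * (L * |u|) := h1.trans (by gcongr)
        _ ≤ L ^ 2 * (2 / k) * |u| ^ 2 := h2
        _ ≤ _ := by
          rw [sq_abs]
          gcongr
          linarith [hφ0 (L * u), hφ0 (-L * u)]

/-- The radial counterpart of `Topf / (2 π)` at radius `r`. -/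
noncomputable def radialTop (g : ℝ → ℂ) (f : ℝ → ℝ) (p : ℝ × ℝ) : ℝ :=
  ∫ u in (-π)..π, -radialKer p.1 u * Kker g (f p.2) (f (p.2 + u))

namespace IsUnitJordan

variable {g : ℝ → ℂ} {l : ℝ} {f : ℝ → ℝ} {L : NNReal} {ω : ℝ → ℝ}

theorem radialTop_periodic (hg : IsUnitJordan g l) (hfp : ∀ t, f (t + 2 * π) = f t + l) (r : ℝ) :
    Function.Periodic (fun τ => radialTop g f (r, τ)) (2 * π) := by
  intro τ
  have h : ∀ u, f (τ + 2 * π + u) = f (τ + u) + l := fun u => by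
    rw [← hfp]; congr 1; ring
  simp only [radialTop, hfp, h, hg.Kker_add_period]

theorem radialTop_one (hg : IsUnitJordan g l) (hfp : ∀ t, f (t + 2 * π) = f t + l) (τ : ℝ) :
    radialTop g f (1, τ) = 1 / (2 * π) * Topf g f τ := by
  have hper : Function.Periodic
      (fun t => Kker g (f τ) (f t) / (2 * Real.sin ((t - τ) / 2) ^ 2)) (2 * π) := by
    intro t
    have h1 : Kker g (f τ) (f t + l) = Kker g (f τ) (f t) := by
      simp only [Kker, hg.periodic (f t)]
    have h2 : Real.sin ((t + 2 * π - τ) / 2) = -Real.sin ((t - τ) / 2) := by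
      rw [← Real.sin_add_pi]; congr 1; ring
    simp only [hfp, h1, h2, neg_sq]
  rw [Topf, hper.intervalIntegral_shift τ, radialTop, ← intervalIntegral.integral_const_mul]
  refine intervalIntegral.integral_congr fun u _ => ?_
  simp only [radialKer_one, add_sub_cancel_left]
  ring

theorem continuousOn_radialTop (hg : IsUnitJordan g l) (hL : 0 < L) (hfl : LipschitzWith L f)
    (hω : ∀ δ ≥ (0:ℝ), ∀ x y : ℝ, |x - y| ≤ δ → ‖deriv g x - deriv g y‖ ≤ ω δ)
    (hωD : ∃ k > (0:ℝ), IntegrableOn (fun t => ω t / t) (Ioc 0 k)) :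
    ContinuousOn (radialTop g f) (Icc (1 / 2) 1 ×ˢ univ) := by
  obtain ⟨θ, hθ, hbd⟩ := exists_Kker_majorant hg hL hfl hω hωD
  have hfc := hfl.continuous
  have hK := hg.continuous_Kker
  have hle : -π ≤ π := by linarith [Real.pi_pos]
  have hae : ∀ᵐ u : ℝ, u ≠ 0 := by
    simp [ae_iff]
  intro p hp
  refine intervalIntegral.continuousWithinAt_of_dominated_interval (bound := fun u => π * θ u)
    (Eventually.of_forall fun q => ?_) ?_ (hθ.const_mul _) ?_
  · have h1 : Continuous fun u => Kker g (f q.2) (f (q.2 + u)) :=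
      hK.comp (continuous_const.prodMk (by fun_prop))
    exact ((measurable_radialKer _).neg.mul h1.measurable).aestronglyMeasurable
  · filter_upwards [self_mem_nhdsWithin] with q hq
    filter_upwards [hae] with u hu hmem
    rw [uIoc_of_le hle] at hmem
    have h1 := abs_radialKer_le hq.1.1 hq.1.2 (abs_le.2 ⟨hmem.1.le, hmem.2⟩) hu
    rw [Real.norm_eq_abs, abs_mul, abs_neg]
    calc _ ≤ π / u ^ 2 * (θ u * u ^ 2) := mul_le_mul h1 (hbd _ _) (abs_nonneg _) (by positivity)
      _ = π * θ u := by field_simp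
  · filter_upwards [hae] with u hu hmem
    rw [uIoc_of_le hle] at hmem
    have h1 : ContinuousAt (fun q : ℝ × ℝ => radialKer q.1 u) p :=
      (continuousAt_radialKer (by linarith [hp.1.1]) (abs_le.2 ⟨hmem.1.le, hmem.2⟩) hu).comp
        (f := Prod.fst) continuousAt_fst
    have h2 : Continuous fun q : ℝ × ℝ => Kker g (f q.2) (f (q.2 + u)) :=
      hK.comp (Continuous.prodMk (by fun_prop) (by fun_prop))
    exact (h1.neg.mul h2.continuousAt).continuousWithinAt

theorem exists_le_radialTop (hg : IsUnitJordan g l) (hL : 0 < L) (hfl : LipschitzWith L f)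
    (hfp : ∀ t, f (t + 2 * π) = f t + l)
    (hω : ∀ δ ≥ (0:ℝ), ∀ x y : ℝ, |x - y| ≤ δ → ‖deriv g x - deriv g y‖ ≤ ω δ)
    (hωD : ∃ k > (0:ℝ), IntegrableOn (fun t => ω t / t) (Ioc 0 k))
    (hT : ∀ τ : ℝ, 0 < Topf g f τ) :
    ∃ c > 0, ∃ ρ < (1:ℝ), ∀ r, ρ ≤ r → r < 1 → ∀ τ, c ≤ radialTop g f (r, τ) := by
  have hpi := Real.pi_pos
  have hcont := hg.continuousOn_radialTop hL hfl hω hωD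
  have hc1 : ContinuousOn (fun τ => radialTop g f (1, τ)) (Icc 0 (2 * π)) :=
    hcont.comp (f := fun τ : ℝ => ((1:ℝ), τ)) (by fun_prop)
      fun τ _ => ⟨⟨by norm_num, le_rfl⟩, mem_univ _⟩
  obtain ⟨τ₀, -, hmin⟩ := isCompact_Icc.exists_isMinOn (nonempty_Icc.2 (by positivity)) hc1
  set m := radialTop g f (1, τ₀) with hm
  have hm0 : 0 < m := by
    rw [hm, hg.radialTop_one hfp]
    have := hT τ₀
    positivity
  have huc := (isCompact_Icc.prod isCompact_Icc).uniformContinuousOn_of_continuous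
    (hcont.mono (prod_mono_right (subset_univ (Icc 0 (2 * π)))))
  obtain ⟨δ, hδ, h⟩ := Metric.uniformContinuousOn_iff.1 huc (m / 2) (by positivity)
  refine ⟨m / 2, by positivity, max (1 / 2) (1 - δ / 2), max_lt (by norm_num) (by linarith), ?_⟩
  intro r hr hr1 τ
  obtain ⟨y, hy, hty⟩ := (hg.radialTop_periodic hfp r).exists_mem_Ico₀ (by positivity) τ
  rw [hty]
  have hy' := Ico_subset_Icc_self hy
  have h1 : (1:ℝ) / 2 ≤ r := (le_max_left _ _).trans hr
  have h2 : 1 - δ / 2 ≤ r := (le_max_right _ _).trans hr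
  have h3 := h (r, y) ⟨⟨h1, hr1.le⟩, hy'⟩ (1, y) ⟨⟨by norm_num, le_rfl⟩, hy'⟩ (by
    rw [Prod.dist_eq, dist_self, Real.dist_eq, abs_of_neg (by linarith)]
    exact max_lt (by linarith) hδ)
  have h4 : m ≤ radialTop g f (1, y) := hmin hy'
  rw [Real.dist_eq, abs_lt] at h3
  linarith [h3.1]

theorem im_radial_integral (hg : IsUnitJordan g l) (hfc : Continuous f) {r : ℝ} (hr : 0 ≤ r)
    (hr1 : r < 1) (τ : ℝ) :
    ((starRingEnd ℂ) (deriv g (f τ)) *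
      ∫ u in (-π)..π, (radialKer r u : ℂ) * (g (f (τ + u)) - g (f τ))).im =
      -radialTop g f (r, τ) := by
  have hgc := hg.contDiff.continuous
  have hR : Continuous (radialKer r) := by
    unfold radialKer
    refine Continuous.div (by fun_prop) (by fun_prop) fun u => ?_
    have := poissonKer_denom_pos hr hr1 u
    have := Real.pi_pos
    positivity
  rw [← intervalIntegral.integral_const_mul, radialTop, ← intervalIntegral.integral_neg]
  have h := (Complex.imCLM.intervalIntegral_comp_comm (μ := volume) (a := -π) (b := π)
    (f := fun u => (starRingEnd ℂ) (deriv g (f τ)) *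
      ((radialKer r u : ℂ) * (g (f (τ + u)) - g (f τ))))
    (Continuous.intervalIntegrable (by fun_prop) _ _))
  simp only [Complex.imCLM_apply] at h
  rw [← h]
  refine intervalIntegral.integral_congr fun u _ => ?_
  simp only [Kker_eq]
  rw [mul_left_comm, Complex.im_ofReal_mul]
  ring

end IsUnitJordan

/-- If `p + q` and `I (p - q)` are the normal and tangential data of a boundary map that is almost
sense preserving, then `p` avoids the upper half plane and almost dominates `q`. -/
theorem im_neg_and_sq_norm_le {p q : ℂ} {c η : ℝ} (hc : 0 < c) (hη : η ≤ c / 2)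
    (hX : (p + q).im ≤ -c) (hx : -η ≤ (Complex.I * (p - q)).re)
    (hy : |(Complex.I * (p - q)).im| ≤ η) :
    p.im < 0 ∧ ‖q‖ ^ 2 ≤ (1 + 48 * η / c) * ‖p‖ ^ 2 := by
  simp only [Complex.mul_re, Complex.mul_im, Complex.I_re, Complex.I_im, Complex.sub_re,
    Complex.sub_im, Complex.add_im, zero_mul, one_mul, zero_sub, zero_add, neg_sub, zero_add] at *
  rw [← Complex.normSq_eq_norm_sq, ← Complex.normSq_eq_norm_sq, Complex.normSq_apply,
    Complex.normSq_apply]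
  obtain ⟨p1, p2⟩ := p
  obtain ⟨q1, q2⟩ := q
  simp only at *
  have hη0 : 0 ≤ η := (abs_nonneg _).trans hy
  set a := p1 + q1 with ha
  set T := -(p2 + q2) with hTd
  set x := q2 - p2 with hxd
  set y := p1 - q1 with hyd
  have hT : c ≤ T := by rw [hTd]; linarith
  have hp1 : p1 = (a + y) / 2 := by rw [ha, hyd]; ring
  have hp2 : p2 = -(T + x) / 2 := by rw [hTd, hxd]; ring
  have hq1 : q1 = (a - y) / 2 := by rw [ha, hyd]; ring
  have hq2 : q2 = -(T - x) / 2 := by rw [hTd, hxd]; ring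
  clear_value a T x y
  subst hp1 hp2 hq1 hq2
  have hTx : T / 2 ≤ T + x := by linarith
  refine ⟨by linarith, ?_⟩
  have hy' := abs_le.1 hy
  have hTx2 : T ^ 2 ≤ 4 * (T + x) ^ 2 := by
    have : (T / 2) ^ 2 ≤ (T + x) ^ 2 := pow_le_pow_left₀ (by linarith) hTx 2
    linarith
  have hcT2 : c ^ 2 ≤ T ^ 2 := pow_le_pow_left₀ hc.le hT 2
  have hy2 : y ^ 2 ≤ η ^ 2 := by rw [← sq_abs y]; exact pow_le_pow_left₀ (abs_nonneg _) hy 2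
  have hηc : η ^ 2 ≤ c ^ 2 / 4 := by nlinarith
  have ha2 : a ^ 2 ≤ 2 * (a + y) ^ 2 + 2 * y ^ 2 := by nlinarith [sq_nonneg (a + 2 * y)]
  have hca : c * |a| ≤ a ^ 2 + c ^ 2 := by
    have := sq_abs a
    nlinarith [sq_nonneg (|a| - c), sq_nonneg (|a|), sq_nonneg c]
  have hcT : c * T ≤ 4 * (T + x) ^ 2 := by nlinarith
  have hmain : c * (|a| + T) ≤ 12 * ((a + y) ^ 2 + (T + x) ^ 2) := by
    nlinarith [sq_nonneg (a + y)]
  have h1 : -(a * y) ≤ |a| * η := by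
    calc -(a * y) ≤ |a * y| := neg_le_abs _
      _ = |a| * |y| := abs_mul _ _
      _ ≤ |a| * η := by gcongr
  have h2 : -(T * x) ≤ T * η := by nlinarith
  have h3 : |a| + T ≤ 12 * ((a + y) ^ 2 + (T + x) ^ 2) / c := by
    rw [le_div_iff₀ hc]; linarith
  have h4 : η * (|a| + T) ≤ η * (12 * ((a + y) ^ 2 + (T + x) ^ 2) / c) := by gcongr
  have h5 : (1 + 48 * η / c) * ((a + y) / 2 * ((a + y) / 2) + -(T + x) / 2 * (-(T + x) / 2)) =
      ((a + y) ^ 2 + (T + x) ^ 2) / 4 + η * (12 * ((a + y) ^ 2 + (T + x) ^ 2) / c) := by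
    field_simp
    ring
  rw [h5]
  nlinarith

/-- The holomorphic derivative of the conjugate half of the Poisson extension. -/
noncomputable def conjHerglotzDeriv (F : ℝ → ℂ) (z : ℂ) : ℂ :=
  herglotzDeriv (fun t => (starRingEnd ℂ) (F t)) z

theorem differentiableOn_herglotzDeriv {F : ℝ → ℂ} (hc : Continuous F)
    (hF : Function.Periodic F (2 * π)) :
    DifferentiableOn ℂ (herglotzDeriv F) (Metric.ball 0 1) := by
  have h1 : DifferentiableOn ℂ (herglotzExt F) (Metric.ball 0 1) := fun z hz =>
    (hasDerivAt_herglotzExt hc hF hz).differentiableAt.differentiableWithinAt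
  exact (h1.deriv Metric.isOpen_ball).congr fun z hz => (hasDerivAt_herglotzExt hc hF hz).deriv.symm

theorem Function.Periodic.star_comp {F : ℝ → ℂ} {T : ℝ} (hF : Function.Periodic F T) :
    Function.Periodic (fun t => (starRingEnd ℂ) (F t)) T := fun t => by simp only [hF t]

theorem differentiableOn_conjHerglotzDeriv {F : ℝ → ℂ} (hc : Continuous F)
    (hF : Function.Periodic F (2 * π)) :
    DifferentiableOn ℂ (conjHerglotzDeriv F) (Metric.ball 0 1) :=
  differentiableOn_herglotzDeriv (Complex.continuous_conj.comp hc) hF.star_comp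

theorem exists_polar {z : ℂ} : ∃ τ : ℝ, z = ‖z‖ * Complex.exp (τ * Complex.I) :=
  ⟨z.arg, (Complex.norm_mul_exp_arg_mul_I z).symm⟩

namespace IsUnitJordan

variable {g : ℝ → ℂ} {l : ℝ} {f : ℝ → ℝ} {L : NNReal} {ω : ℝ → ℝ}

theorem periodic_comp (hg : IsUnitJordan g l) (hfp : ∀ t, f (t + 2 * π) = f t + l) :
    Function.Periodic (fun t => g (f t)) (2 * π) := fun t => by
  simp only [hfp]; exact hg.periodic _

theorem lipschitz_pos (hg : IsUnitJordan g l) (hfl : LipschitzWith L f)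
    (hfp : ∀ t, f (t + 2 * π) = f t + l) : 0 < L := by
  rw [pos_iff_ne_zero]
  rintro rfl
  have h1 := hfl.dist_le_mul (0 + 2 * π) 0
  rw [hfp, Real.dist_eq, add_sub_cancel_left, abs_of_pos hg.pos] at h1
  simp only [NNReal.coe_zero, zero_mul] at h1
  linarith [hg.pos]

/-- Near the unit circle the holomorphic part of the derivative of the Poisson extension is
transversal to the boundary tangent and almost dominates the antiholomorphic part. -/
theorem exists_boundary_estimate (hg : IsUnitJordan g l) (hf : Monotone f)
    (hfl : LipschitzWith L f) (hfp : ∀ t, f (t + 2 * π) = f t + l)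
    (hω : ∀ δ ≥ (0:ℝ), ∀ x y : ℝ, |x - y| ≤ δ → ‖deriv g x - deriv g y‖ ≤ ω δ)
    (hωD : ∃ k > (0:ℝ), IntegrableOn (fun t => ω t / t) (Ioc 0 k))
    (hT : ∀ τ : ℝ, 0 < Topf g f τ) {ε : ℝ} (hε : 0 < ε) :
    ∃ ρ < (1:ℝ), 0 < ρ ∧ ∀ r, ρ ≤ r → r < 1 → ∀ (τ : ℝ) (z : ℂ),
      z = r * Complex.exp (τ * Complex.I) →
      ((starRingEnd ℂ) (deriv g (f τ)) * (z * herglotzDeriv (fun t => g (f t)) z)).im < 0 ∧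
      ‖conjHerglotzDeriv (fun t => g (f t)) z‖ ^ 2 ≤
        (1 + ε) * ‖herglotzDeriv (fun t => g (f t)) z‖ ^ 2 := by
  have hF := hg.periodic_comp hfp
  have hFc : Continuous fun t => g (f t) := hg.contDiff.continuous.comp hfl.continuous
  obtain ⟨c, hc, ρ₁, hρ₁, h1⟩ :=
    hg.exists_le_radialTop (hg.lipschitz_pos hfl hfp) hfl hfp hω hωD hT
  obtain ⟨ρ₂, hρ₂, h2⟩ := hg.exists_angular_deriv_bound hf hfl hfp
    (η := min (c / 2) (c * ε / 48)) (lt_min (by positivity) (by positivity))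
  refine ⟨max (1 / 2) (max ρ₁ ρ₂), max_lt (by norm_num) (max_lt hρ₁ hρ₂),
    lt_max_of_lt_left (by norm_num), fun r hr hr1 τ z hz => ?_⟩
  have hr2 : (1:ℝ) / 2 ≤ r := (le_max_left _ _).trans hr
  have hr3 : ρ₁ ≤ r := ((le_max_left _ _).trans (le_max_right _ _)).trans hr
  have hr4 : ρ₂ ≤ r := ((le_max_right _ _).trans (le_max_right _ _)).trans hr
  have hr0 : 0 ≤ r := by linarith
  obtain ⟨hx, hy⟩ := h2 r hr0 hr4 hr1 τ _ (hasDerivAt_poissonExt_polar hFc hF hr0 hr1 τ hz)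
  have hX := hg.im_radial_integral hfl.continuous hr0 hr1 τ
  rw [← radial_deriv_eq hFc hF hr0 hr1 τ hz] at hX
  have h3 := h1 r hr3 hr1 τ
  rw [← conjHerglotzDeriv] at hX hx hy
  set e := (starRingEnd ℂ) (deriv g (f τ)) with he
  have hen : ‖e‖ = 1 := by rw [he, Complex.norm_conj, hg.unit]
  set A := z * herglotzDeriv (fun t => g (f t)) z with hA
  set B := z * conjHerglotzDeriv (fun t => g (f t)) z with hB
  rw [mul_left_comm, mul_sub] at hx hy
  rw [mul_add] at hX
  obtain ⟨k1, k2⟩ := im_neg_and_sq_norm_le hc (min_le_left _ _) (by rw [hX]; linarith) hx hy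
  refine ⟨k1, ?_⟩
  have hz0 : 0 < ‖z‖ := by
    rw [hz, norm_mul, Complex.norm_exp_ofReal_mul_I, mul_one, Complex.norm_real,
      Real.norm_of_nonneg hr0]
    linarith
  have k3 : 48 * min (c / 2) (c * ε / 48) / c ≤ ε := by
    rw [div_le_iff₀ hc]
    have := min_le_right (c / 2) (c * ε / 48)
    linarith
  rw [norm_mul, norm_mul, hen, Complex.norm_conj, hA, hB, norm_mul, norm_mul, one_mul, one_mul,
    mul_pow, mul_pow, mul_left_comm] at k2
  have k4 := le_of_mul_le_mul_left k2 (by positivity)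
  exact k4.trans (by gcongr)

theorem herglotzDeriv_ne_zero (hg : IsUnitJordan g l) {s₀ : ℝ}
    (hmin : ∀ s, (g s₀).im ≤ (g s).im) (h1 : deriv g s₀ = 1) (hf : Monotone f)
    (hfl : LipschitzWith L f) (hfp : ∀ t, f (t + 2 * π) = f t + l)
    (hω : ∀ δ ≥ (0:ℝ), ∀ x y : ℝ, |x - y| ≤ δ → ‖deriv g x - deriv g y‖ ≤ ω δ)
    (hωD : ∃ k > (0:ℝ), IntegrableOn (fun t => ω t / t) (Ioc 0 k))
    (hT : ∀ τ : ℝ, 0 < Topf g f τ) {z : ℂ} (hz : z ∈ Metric.ball (0:ℂ) 1) :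
    herglotzDeriv (fun t => g (f t)) z ≠ 0 := by
  have hF := hg.periodic_comp hfp
  have hFc : Continuous fun t => g (f t) := hg.contDiff.continuous.comp hfl.continuous
  have hd := differentiableOn_herglotzDeriv hFc hF
  obtain ⟨ρ, hρ, hρ0, hest⟩ := hg.exists_boundary_estimate hf hfl hfp hω hωD hT one_pos
  rw [mem_ball_zero_iff] at hz
  set r := max ρ ‖z‖ with hr
  have hr0 : 0 < r := lt_max_of_lt_left hρ0
  have hr1 : r < 1 := max_lt hρ hz
  have hsub : Metric.closedBall (0:ℂ) r ⊆ Metric.ball 0 1 := Metric.closedBall_subset_ball hr1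
  refine ne_zero_of_hasWinding_zero hr0 (hd.mono hsub) ?_
    (mem_closedBall_zero_iff.2 (le_max_right _ _))
  obtain ⟨Θ, hΘ, hΘe, hΘp⟩ := hg.exists_log_deriv hmin h1
  have hwe : HasWinding (fun t => deriv g (f t)) 1 :=
    ⟨fun t => Θ (f t), hΘ.comp hfl.continuous, fun t => hΘe _, fun t => by
      simp only [hfp, hΘp]; push_cast; ring⟩
  have hcirc : Continuous fun t : ℝ => herglotzDeriv (fun t => g (f t))
      (r * Complex.exp (t * Complex.I)) :=
    hd.continuousOn.comp_continuous (by fun_prop) fun t => polar_mem_ball hr0.le hr1 t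
  have hgd : Continuous fun t => deriv g (f t) := hg.continuous_deriv.comp hfl.continuous
  have hw0 : HasWinding (fun t : ℝ => Complex.I * ((starRingEnd ℂ) (deriv g (f t)) *
      (r * Complex.exp (t * Complex.I) * herglotzDeriv (fun t => g (f t))
        (r * Complex.exp (t * Complex.I))))) 0 := by
    refine hasWinding_zero_of_re_pos (by fun_prop) (fun t => ?_) fun t => ?_
    · rw [exp_periodic_real, hfp, hg.deriv_periodic]
    · have := (hest r (le_max_left _ _) hr1 t _ rfl).1
      rw [Complex.I_mul_re]
      linarith
  have hw := ((hw0.mul hwe).mul hasWinding_exp.inv).mul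
    (hasWinding_const (a := (Complex.I * r)⁻¹)
      (inv_ne_zero (mul_ne_zero Complex.I_ne_zero (by exact_mod_cast hr0.ne'))))
  simp only [zero_add, add_neg_cancel] at hw
  convert hw using 2 with t
  have h2 := hg.deriv_mul_conj (f t)
  have h3 := Complex.exp_ne_zero (t * Complex.I)
  have h4 : (r:ℂ) ≠ 0 := by exact_mod_cast hr0.ne'
  have h5 := Complex.I_ne_zero
  generalize herglotzDeriv (fun t => g (f t)) (r * Complex.exp (t * Complex.I)) = H
  field_simp
  linear_combination (-H) * h2

theorem norm_conjHerglotzDeriv_div_le_one (hg : IsUnitJordan g l) {s₀ : ℝ}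
    (hmin : ∀ s, (g s₀).im ≤ (g s).im) (h1 : deriv g s₀ = 1) (hf : Monotone f)
    (hfl : LipschitzWith L f) (hfp : ∀ t, f (t + 2 * π) = f t + l)
    (hω : ∀ δ ≥ (0:ℝ), ∀ x y : ℝ, |x - y| ≤ δ → ‖deriv g x - deriv g y‖ ≤ ω δ)
    (hωD : ∃ k > (0:ℝ), IntegrableOn (fun t => ω t / t) (Ioc 0 k))
    (hT : ∀ τ : ℝ, 0 < Topf g f τ) {z : ℂ} (hz : z ∈ Metric.ball (0:ℂ) 1) :
    ‖conjHerglotzDeriv (fun t => g (f t)) z / herglotzDeriv (fun t => g (f t)) z‖ ≤ 1 := by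
  have hF := hg.periodic_comp hfp
  have hFc : Continuous fun t => g (f t) := hg.contDiff.continuous.comp hfl.continuous
  have hne : ∀ z ∈ Metric.ball (0:ℂ) 1, herglotzDeriv (fun t => g (f t)) z ≠ 0 := fun z hz =>
    hg.herglotzDeriv_ne_zero hmin h1 hf hfl hfp hω hωD hT hz
  have hd : DifferentiableOn ℂ (fun z => conjHerglotzDeriv (fun t => g (f t)) z /
      herglotzDeriv (fun t => g (f t)) z) (Metric.ball 0 1) :=
    (differentiableOn_conjHerglotzDeriv hFc hF).div (differentiableOn_herglotzDeriv hFc hF) hne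
  rw [← sq_le_one_iff₀ (norm_nonneg _)]
  refine le_of_forall_pos_le_add fun ε hε => ?_
  obtain ⟨ρ, hρ, hρ0, hest⟩ := hg.exists_boundary_estimate hf hfl hfp hω hωD hT hε
  have hz1 := mem_ball_zero_iff.1 hz
  set r := max ρ ‖z‖ with hr
  have hr0 : 0 < r := lt_max_of_lt_left hρ0
  have hr1 : r < 1 := max_lt hρ hz1
  have hsub : Metric.closedBall (0:ℂ) r ⊆ Metric.ball 0 1 := Metric.closedBall_subset_ball hr1
  rw [← Real.le_sqrt (norm_nonneg _) (by positivity)]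
  refine Complex.norm_le_of_forall_mem_frontier_norm_le (U := Metric.ball (0:ℂ) r)
    Metric.isBounded_ball (hd.diffContOnCl_ball hsub) (fun y hy => ?_) ?_
  · rw [frontier_ball _ hr0.ne', mem_sphere_zero_iff_norm] at hy
    obtain ⟨τ, hτ⟩ := exists_polar (z := y)
    have hyb : y ∈ Metric.ball (0:ℂ) 1 := mem_ball_zero_iff.2 (by rw [hy]; exact hr1)
    have h2 := (hest ‖y‖ (by rw [hy]; exact le_max_left _ _) (by rw [hy]; exact hr1) τ y hτ).2
    rw [Real.le_sqrt (norm_nonneg _) (by positivity), norm_div, div_pow,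
      div_le_iff₀ (pow_pos (norm_pos_iff.2 (hne y hyb)) 2)]
    exact h2
  · rw [closure_ball _ hr0.ne']
    exact mem_closedBall_zero_iff.2 (le_max_right _ _)

end IsUnitJordan

theorem surjective_of_add_period {f : ℝ → ℝ} {l : ℝ} (hl : 0 < l) (hf : Monotone f)
    (hc : Continuous f) (hfp : ∀ t, f (t + 2 * π) = f t + l) : Function.Surjective f := by
  have h : ∀ n : ℕ, ∀ t, f (t + n * (2 * π)) = f t + n * l := by
    intro n
    induction n with
    | zero => simp
    | succ k ih =>
      intro t
      rw [show t + ((k + 1 : ℕ) : ℝ) * (2 * π) = t + k * (2 * π) + 2 * π by push_cast; ring, hfp, ih]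
      push_cast; ring
  refine hc.surjective ?_ ?_
  · refine tendsto_atTop_atTop_of_monotone hf fun b => ?_
    obtain ⟨n, hn⟩ := exists_nat_gt ((b - f 0) / l)
    refine ⟨0 + n * (2 * π), ?_⟩
    rw [div_lt_iff₀ hl] at hn
    rw [h]; linarith
  · refine tendsto_atBot_atBot_of_monotone hf fun b => ?_
    obtain ⟨n, hn⟩ := exists_nat_gt ((f 0 - b) / l)
    refine ⟨0 - n * (2 * π), ?_⟩
    rw [div_lt_iff₀ hl] at hn
    have := h n (0 - n * (2 * π))
    rw [sub_add_cancel] at this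
    linarith

/-- The real differential of the Poisson extension in terms of its two holomorphic halves. -/
theorem hasStrictFDerivAt_poissonExt {F : ℝ → ℂ} (hc : Continuous F)
    (hF : Function.Periodic F (2 * π)) {z : ℂ} (hz : z ∈ Metric.ball (0:ℂ) 1) :
    ∃ M : ℂ →L[ℝ] ℂ, HasStrictFDerivAt (poissonExt F) M z ∧ ∀ v, M v =
      herglotzDeriv F z * v + (starRingEnd ℂ) (conjHerglotzDeriv F z) * (starRingEnd ℂ) v := by
  have hc' : Continuous fun t => (starRingEnd ℂ) (F t) := Complex.continuous_conj.comp hc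
  have hstrict : ∀ {G : ℝ → ℂ}, Continuous G → Function.Periodic G (2 * π) →
      HasStrictDerivAt (herglotzExt G) (herglotzDeriv G z) z := by
    intro G hG hGp
    have hd : DifferentiableOn ℂ (herglotzExt G) (Metric.ball 0 1) := fun z hz =>
      (hasDerivAt_herglotzExt hG hGp hz).differentiableAt.differentiableWithinAt
    have := (hd.analyticAt (Metric.isOpen_ball.mem_nhds hz)).hasStrictDerivAt
    rwa [(hasDerivAt_herglotzExt hG hGp hz).deriv] at this
  have h1 := (hstrict hc hF).hasStrictFDerivAt.restrictScalars ℝ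
  have h2 := (hstrict hc' hF.star_comp).hasStrictFDerivAt.restrictScalars ℝ
  have h3 := h1.add ((Complex.conjCLE.toContinuousLinearMap.hasStrictFDerivAt).comp z h2)
  refine ⟨_, h3.congr_of_eventuallyEq ?_, fun v => ?_⟩
  · filter_upwards [Metric.isOpen_ball.mem_nhds hz] with y hy
    rw [poissonExt_eq_herglotz hc hF hy]
    rfl
  · simp [conjHerglotzDeriv, mul_comm]

theorem contDiffOn_poissonExt {F : ℝ → ℂ} (hc : Continuous F)
    (hF : Function.Periodic F (2 * π)) :
    ContDiffOn ℝ (⊤ : ℕ∞) (poissonExt F) (Metric.ball (0:ℂ) 1) := by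
  have hc' : Continuous fun t => (starRingEnd ℂ) (F t) := Complex.continuous_conj.comp hc
  have hsm : ∀ {G : ℝ → ℂ}, Continuous G → Function.Periodic G (2 * π) →
      ContDiffOn ℝ (⊤ : ℕ∞) (herglotzExt G) (Metric.ball 0 1) := by
    intro G hG hGp
    have hd : DifferentiableOn ℂ (herglotzExt G) (Metric.ball 0 1) := fun z hz =>
      (hasDerivAt_herglotzExt hG hGp hz).differentiableAt.differentiableWithinAt
    exact (hd.contDiffOn Metric.isOpen_ball).restrict_scalars ℝ
  exact ((hsm hc hF).add (Complex.conjCLE.contDiff.comp_contDiffOn (hsm hc' hF.star_comp))).congr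
    fun z hz => poissonExt_eq_herglotz hc hF hz

theorem Jac_poissonExt_ne_zero {F : ℝ → ℂ} (hc : Continuous F)
    (hF : Function.Periodic F (2 * π)) {z : ℂ} (hz : z ∈ Metric.ball (0:ℂ) 1)
    (h : ‖conjHerglotzDeriv F z‖ < ‖herglotzDeriv F z‖) : Jac (poissonExt F) z ≠ 0 := by
  obtain ⟨M, hM, hMv⟩ := hasStrictFDerivAt_poissonExt hc hF hz
  rw [Jac, hM.hasFDerivAt.fderiv]
  have hinj : Function.Injective (M : ℂ →ₗ[ℝ] ℂ) := by
    rw [injective_iff_map_eq_zero]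
    intro v hv
    have hv' : M v = 0 := hv
    rw [hMv] at hv'
    have h1 : ‖herglotzDeriv F z * v‖ =
        ‖(starRingEnd ℂ) (conjHerglotzDeriv F z) * (starRingEnd ℂ) v‖ := by
      rw [eq_neg_of_add_eq_zero_left hv', norm_neg]
    rw [norm_mul, norm_mul, Complex.norm_conj, Complex.norm_conj] at h1
    by_contra hne
    have := mul_lt_mul_of_pos_right h (norm_pos_iff.2 hne)
    linarith
  intro hdet
  exact (LinearMap.bot_lt_ker_of_det_eq_zero hdet).ne' (LinearMap.ker_eq_bot.2 hinj)

namespace IsUnitJordan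

variable {g : ℝ → ℂ} {l : ℝ} {f : ℝ → ℝ} {L : NNReal} {ω : ℝ → ℝ}

theorem lipschitzWith_comp (hg : IsUnitJordan g l) (hfl : LipschitzWith L f) :
    LipschitzWith L fun t => g (f t) := by
  have h1 : LipschitzWith 1 g := LipschitzWith.of_dist_le_mul fun x y => by
    rw [dist_eq_norm, NNReal.coe_one, one_mul, Real.dist_eq]
    exact hg.norm_sub_le y x
  simpa [Function.comp_def] using h1.comp hfl

/-- A positive `Topf` forces a lowest point to be traversed from left to right. -/
theorem exists_lowest_point (hg : IsUnitJordan g l) (hfs : Function.Surjective f)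
    (hT : ∀ τ : ℝ, 0 < Topf g f τ) :
    ∃ s₀, (∀ s, (g s₀).im ≤ (g s).im) ∧ deriv g s₀ = 1 := by
  obtain ⟨s₀, -, hs₀⟩ := isCompact_Icc.exists_isMinOn (nonempty_Icc.2 hg.pos.le)
    (f := fun s => (g s).im) (Complex.continuous_im.comp hg.contDiff.continuous).continuousOn
  have hmin : ∀ s, (g s₀).im ≤ (g s).im := by
    intro s
    obtain ⟨y, hy, hsy⟩ := hg.periodic.exists_mem_Ico₀ hg.pos s
    rw [hsy]
    exact hs₀ (Ico_subset_Icc_self hy)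
  refine ⟨s₀, hmin, ?_⟩
  have hder : HasDerivAt (fun s => (g s).im) (deriv g s₀).im s₀ :=
    Complex.imCLM.hasFDerivAt.comp_hasDerivAt s₀ (hg.hasDerivAt s₀)
  have him : (deriv g s₀).im = 0 :=
    IsLocalMin.hasDerivAt_eq_zero (Eventually.of_forall hmin) hder
  have hre : (deriv g s₀).re ^ 2 = 1 := by
    have h := hg.unit s₀
    have h2 := Complex.sq_norm (deriv g s₀)
    rw [h, Complex.normSq_apply, him] at h2
    nlinarith
  rcases sq_eq_one_iff.1 hre with h | h
  · exact Complex.ext (by simpa using h) (by simpa using him)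
  · exfalso
    obtain ⟨τ, hτ⟩ := hfs s₀
    refine (hT τ).not_ge ?_
    rw [Topf]
    rw [intervalIntegral.integral_of_le (by positivity)]
    refine integral_nonpos fun t => ?_
    refine div_nonpos_of_nonpos_of_nonneg ?_ (by positivity)
    rw [Kker_eq, hτ, Complex.mul_im, Complex.conj_re, Complex.conj_im, h, him, Complex.sub_im]
    linarith [hmin (f t)]

theorem norm_conjHerglotzDeriv_lt (hg : IsUnitJordan g l) {s₀ : ℝ}
    (hmin : ∀ s, (g s₀).im ≤ (g s).im) (h1 : deriv g s₀ = 1) (hf : Monotone f)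
    (hfl : LipschitzWith L f) (hfp : ∀ t, f (t + 2 * π) = f t + l)
    (hω : ∀ δ ≥ (0:ℝ), ∀ x y : ℝ, |x - y| ≤ δ → ‖deriv g x - deriv g y‖ ≤ ω δ)
    (hωD : ∃ k > (0:ℝ), IntegrableOn (fun t => ω t / t) (Ioc 0 k))
    (hT : ∀ τ : ℝ, 0 < Topf g f τ) {z : ℂ} (hz : z ∈ Metric.ball (0:ℂ) 1) :
    ‖conjHerglotzDeriv (fun t => g (f t)) z‖ < ‖herglotzDeriv (fun t => g (f t)) z‖ := by
  have hF := hg.periodic_comp hfp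
  have hFl := hg.lipschitzWith_comp hfl
  have hFc := hFl.continuous
  have hFc' : Continuous fun t => (starRingEnd ℂ) (g (f t)) := Complex.continuous_conj.comp hFc
  have hfs := surjective_of_add_period hg.pos hf hfl.continuous hfp
  have hne : ∀ z ∈ Metric.ball (0:ℂ) 1, herglotzDeriv (fun t => g (f t)) z ≠ 0 := fun z hz =>
    hg.herglotzDeriv_ne_zero hmin h1 hf hfl hfp hω hωD hT hz
  have hle : ∀ z ∈ Metric.ball (0:ℂ) 1, ‖conjHerglotzDeriv (fun t => g (f t)) z /
      herglotzDeriv (fun t => g (f t)) z‖ ≤ 1 := fun z hz =>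
    hg.norm_conjHerglotzDeriv_div_le_one hmin h1 hf hfl hfp hω hωD hT hz
  have hd : DifferentiableOn ℂ (fun z => conjHerglotzDeriv (fun t => g (f t)) z /
      herglotzDeriv (fun t => g (f t)) z) (Metric.ball 0 1) :=
    (differentiableOn_conjHerglotzDeriv hFc hF).div (differentiableOn_herglotzDeriv hFc hF) hne
  by_contra hlt
  set q := conjHerglotzDeriv (fun t => g (f t)) z / herglotzDeriv (fun t => g (f t)) z with hq
  have hq1 : ‖q‖ = 1 := by
    refine le_antisymm (hle z hz) ?_
    rw [hq, norm_div, le_div_iff₀ (norm_pos_iff.2 (hne z hz)), one_mul]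
    exact not_lt.1 hlt
  have hconst := Complex.eqOn_of_isPreconnected_of_isMaxOn_norm
    (convex_ball (0:ℂ) 1).isPreconnected Metric.isOpen_ball hd hz
    (fun y hy => by simpa [← hq, hq1] using hle y hy)
  have hk : ∀ y ∈ Metric.ball (0:ℂ) 1, conjHerglotzDeriv (fun t => g (f t)) y =
      q * herglotzDeriv (fun t => g (f t)) y := fun y hy => by
    have := hconst hy
    simp only [Function.const_apply] at this
    rw [← hq] at this
    rw [← this, div_mul_cancel₀ _ (hne y hy)]
  have h0 : (0:ℂ) ∈ Metric.ball (0:ℂ) 1 := by simp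
  set h : ℂ → ℂ := herglotzExt fun t => g (f t) with hh
  set k : ℂ → ℂ := herglotzExt fun t => (starRingEnd ℂ) (g (f t)) with hkk
  have hder : ∀ y ∈ Metric.ball (0:ℂ) 1, HasDerivAt (fun y => k y - q * h y) 0 y := fun y hy => by
    have := (hasDerivAt_herglotzExt hFc' hF.star_comp hy).sub
      ((hasDerivAt_herglotzExt hFc hF hy).const_mul q)
    rwa [← conjHerglotzDeriv, hk y hy, sub_self] at this
  have hkc : ∀ y ∈ Metric.ball (0:ℂ) 1, k y - q * h y = k 0 - q * h 0 := fun y hy =>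
    Metric.isOpen_ball.is_const_of_deriv_eq_zero (convex_ball (0:ℂ) 1).isPreconnected
      (fun x hx => (hder x hx).differentiableAt.differentiableWithinAt)
      (fun x hx => (hder x hx).deriv) hy h0
  obtain ⟨ν, hν⟩ := IsAlgClosed.exists_eq_mul_self q
  have hνn : ‖ν‖ = 1 := by
    rw [hν, norm_mul, ← sq] at hq1
    exact (pow_eq_one_iff_of_nonneg (norm_nonneg _) two_ne_zero).1 hq1
  have hνc : ν * (starRingEnd ℂ) ν = 1 := by
    rw [Complex.mul_conj, Complex.normSq_eq_norm_sq, hνn]; simp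
  set m := (ν * (starRingEnd ℂ) (k 0 - q * h 0)).im with hm
  have hball : EqOn (fun y => (ν * poissonExtClosed (fun t => g (f t)) y).im) (fun _ => m)
      (Metric.ball 0 1) := fun y hy => by
    have h2 : ν * poissonExtClosed (fun t => g (f t)) y =
        (ν * h y + (starRingEnd ℂ) (ν * h y)) + ν * (starRingEnd ℂ) (k 0 - q * h 0) := by
      rw [poissonExtClosed_of_mem hy, poissonExt_eq_herglotz hFc hF hy, ← hkc y hy, hν]
      simp only [map_sub, map_mul, ← hh, ← hkk]
      linear_combination ((starRingEnd ℂ) (h y) * (starRingEnd ℂ) ν) * hνc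
    simp only [h2, Complex.add_conj, Complex.add_im, Complex.ofReal_im, zero_add, hm]
  have hclosed := hball.of_subset_closure
    (Complex.continuous_im.comp_continuousOn
      (continuousOn_const.mul (continuousOn_poissonExtClosed hF hFl)))
    continuousOn_const Metric.ball_subset_closedBall (closure_ball (0:ℂ) one_ne_zero).ge
  have hgm : ∀ s, (ν * g s).im = m := by
    intro s
    obtain ⟨t, rfl⟩ := hfs s
    have := hclosed (x := Complex.exp (t * Complex.I))
      (mem_closedBall_zero_iff.2 (Complex.norm_exp_ofReal_mul_I t).le)
    simpa only [poissonExtClosed_exp hF] using this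
  have hdm : ∀ s, (ν * deriv g s).im = 0 := by
    intro s
    have h2 : HasDerivAt (fun s => (ν * g s).im) (ν * deriv g s).im s :=
      Complex.imCLM.hasFDerivAt.comp_hasDerivAt s ((hg.hasDerivAt s).const_mul ν)
    simp only [hgm] at h2
    exact h2.unique (hasDerivAt_const s m)
  have hK : ∀ s t, Kker g s t = 0 := by
    intro s t
    have h2 : (starRingEnd ℂ) (deriv g s) * (g t - g s) =
        (starRingEnd ℂ) (ν * deriv g s) * (ν * g t - ν * g s) := by
      rw [map_mul]
      linear_combination (-(starRingEnd ℂ) (deriv g s) * (g t - g s)) * hνc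
    rw [Kker_eq, h2, Complex.mul_im, Complex.conj_im, hdm, Complex.sub_im, hgm, hgm]
    simp
  have := hT 0
  simp [Topf, hK] at this

/-- The Radó–Kneser–Choquet type theorem for curves with positive boundary Jacobian factor. -/
theorem bijOn_poissonExt (hg : IsUnitJordan g l) {s₀ : ℝ}
    (hmin : ∀ s, (g s₀).im ≤ (g s).im) (h1 : deriv g s₀ = 1) {D : Set ℂ} (hD : IsOpen D)
    (hDb : Bornology.IsBounded D) (hDf : frontier D ⊆ range g) (hDc : IsConnected D)
    (hfl : LipschitzWith L f) (hfp : ∀ t, f (t + 2 * π) = f t + l)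
    (hlt : ∀ z ∈ Metric.ball (0:ℂ) 1,
      ‖conjHerglotzDeriv (fun t => g (f t)) z‖ < ‖herglotzDeriv (fun t => g (f t)) z‖) :
    BijOn (poissonExt fun t => g (f t)) (Metric.ball 0 1) D := by
  have hF := hg.periodic_comp hfp
  have hFl := hg.lipschitzWith_comp hfl
  refine BijOn.congr (hg.bijOn_of_boundary hmin h1 hD hDb hDf hDc hfl.continuous hfp
    (continuousOn_poissonExtClosed hF hFl) (poissonExtClosed_exp hF) fun z hz => ?_)
    fun z hz => poissonExtClosed_of_mem hz
  obtain ⟨M, hM, hMv⟩ := hasStrictFDerivAt_poissonExt hFl.continuous hF hz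
  refine ⟨herglotzDeriv (fun t => g (f t)) z,
    (starRingEnd ℂ) (conjHerglotzDeriv (fun t => g (f t)) z), ?_, M,
    hM.congr_of_eventuallyEq ?_, hMv⟩
  · rw [Complex.norm_conj]
    exact hlt z hz
  · filter_upwards [Metric.isOpen_ball.mem_nhds hz] with y hy
    exact (poissonExtClosed_of_mem hy).symm

end IsUnitJordan

/-- Main theorem: if `F = g∘f` is an orientation-preserving Lipschitz weak
homeomorphism of the circle onto a Dini-smooth Jordan curve bounding `D` and the
continuous factor `T[f]` of the boundary Jacobian is strictly positive, then the
Poisson extension `w = P[F]` is a diffeomorphism of the unit disk onto `D`. -/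
theorem main_theorem (l : ℝ) (hl : 0 < l) (L : NNReal)
    (D : Set ℂ) (hDo : IsOpen D) (hDb : Bornology.IsBounded D) (hDc : IsConnected D)
    (g : ℝ → ℂ) (hg : ContDiff ℝ 1 g)
    (hper : ∀ s, g (s + l) = g s)
    (hunit : ∀ s, ‖deriv g s‖ = 1)
    (hfront : g '' Icc 0 l = frontier D)
    (hginj : InjOn g (Ico 0 l))
    (ω : ℝ → ℝ)
    (hω : ∀ δ ≥ (0:ℝ), ∀ x y : ℝ, |x - y| ≤ δ → ‖deriv g x - deriv g y‖ ≤ ω δ)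
    (hωD : ∃ k > (0:ℝ), IntegrableOn (fun t => ω t / t) (Ioc 0 k))
    (f : ℝ → ℝ) (hf : Monotone f) (hfl : LipschitzWith L f) (hf0 : f 0 = 0)
    (hfqp : ∀ t, f (t + 2 * π) = f t + l)
    (hT : ∀ τ : ℝ, 0 < Topf g f τ) :
    Set.BijOn (poissonExt (fun t => g (f t))) (Metric.ball (0:ℂ) 1) D ∧
    ContDiffOn ℝ (⊤ : ℕ∞) (poissonExt (fun t => g (f t))) (Metric.ball (0:ℂ) 1) ∧
    ∀ z ∈ Metric.ball (0:ℂ) 1, Jac (poissonExt (fun t => g (f t))) z ≠ 0 := by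
  have hgj : IsUnitJordan g l := ⟨hl, hg, hper, hunit, hginj⟩
  have hfs := surjective_of_add_period hl hf hfl.continuous hfqp
  have hF := hgj.periodic_comp hfqp
  have hFc := (hgj.lipschitzWith_comp hfl).continuous
  obtain ⟨s₀, hmin, h1⟩ := hgj.exists_lowest_point hfs hT
  have hlt : ∀ z ∈ Metric.ball (0:ℂ) 1,
      ‖conjHerglotzDeriv (fun t => g (f t)) z‖ < ‖herglotzDeriv (fun t => g (f t)) z‖ :=
    fun z hz => hgj.norm_conjHerglotzDeriv_lt hmin h1 hf hfl hfqp hω hωD hT hz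
  exact ⟨hgj.bijOn_poissonExt hmin h1 hDo hDb (hfront ▸ image_subset_range g _) hDc hfl hfqp hlt,
    contDiffOn_poissonExt hFc hF, fun z hz => Jac_poissonExt_ne_zero hFc hF hz (hlt z hz)⟩
end
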